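/- There exists a function γ : ℕ × ℕ → ℕ with the following property: for every positive integer d, every degree-d algebraic extension K of ℚ, and every k×n m-sparse polynomial system G over K, the number of isolated roots of G in K^n is at most 2^{dn}·(1 − 1/2^{d})^n·γ(n,m). In particular, this bound is independent of the degrees of the polynomials g_i. -/

import Mathlib

/-!
The proof is `2`-adic. A number field `K` of degree `d` embeds into `Ω = ℂ_[2]`, with valuation ring
`O`, and its nonzero elements lie in at most `2 ^ d - 1` cosets `τ(ℚ) e (1 + 2 O)`, where `τ` is a
compatible system of rational powers of a uniformizer (`exists_cosets`); the count comes from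
`|O_K / 2 O_K| ≤ 2 ^ d`. It suffices to bound the isolated zeros in each product of such cosets in
terms of `n` and `m` only.

At the point `x_j = τ(w_j) e_j (1 + 2 z_j)` a monomial `c x ^ α` is `c e ^ α τ(α · w)` times
`∏ (1 + 2 z_j) ^ α_j`. Since `2 ^ i / i!` is a `2`-adic integer, the latter product is the value at
`u = 2` of a power series in `u` whose coefficients are polynomials in `z` and in half the exponents
(`binomSeries`). After division of each equation by its dominant term, all exponents and
coefficients become parameters in the closed unit disc, varying monomially with `w`, in finitely
many fixed power series (`exists_coset_bound`). So it is enough to bound the number of zeros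
`(w, z)`, if finite, of an ideal of such series uniformly in the parameters. This is `uniformBound`,
proved by double induction on the dimension of the `w`-space and on the number of variables `z`.
A power series over the polynomial ring is a finite sum of terms `P_γ (z ^ β + u Q_γ)` with `P_γ`
homogeneous for the weights of the parameters (`exists_bihomogeneous_decomposition`). Where two
dominant `P_γ` have different weights, `w` is confined to a hyperplane. Otherwise, dividing by a
dominant `P_γ`, taking the quotients as new parameters and substituting suitably in `z` gives a
series that is monic in one variable modulo `u`; Weierstrass division eliminates this variable
(`weierstrass_projection`, `hasBound_of_isArgmax`).

`uniformBound` requires finitely many zeros, whereas the systems at hand may have positive-dimensional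
components besides the isolated roots. A metrically isolated root over `ℂ` is isolated in an algebraic
sense (`AlgIsolated`) that descends to `K` and passes to `Ω`. Over `Ω`, suitable `n` linear
combinations `f_i` of the equations retain the isolated zeros (`exists_square_system`), and the
systems `f_i + s x_i ^ N` with `s ≠ 0` and `N` large have finitely many zeros, some of which are close
to the given isolated ones (`finite_zeros_perturbed`, `exists_perturbation`). Vanishing coordinates are
set to zero in the equations and replaced by `1` (`exists_bound_isolated`); together with the cosets
this gives `(2 ^ d) ^ n` cases, and `2 ^ (d n) ≤ 2 ^ (d n) (1 - 2 ^ (-d)) ^ n * 2 ^ n`.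
-/

open MvPolynomial Filter Topology

/-- The zero set in `F^n` of a `k`-tuple of `n`-variate polynomials. -/
def zeroSet {F : Type*} [CommSemiring F] {k n : ℕ}
    (G : Fin k → MvPolynomial (Fin n) F) : Set (Fin n → F) :=
  {x | ∀ i, MvPolynomial.eval x (G i) = 0}

/-- `ζ` is an isolated root of the system `G`: it is a root, and an isolated point of the
zero set of `G` in the metric topology. -/
def IsIsolatedRoot {F : Type*} [NormedField F] {k n : ℕ}
    (G : Fin k → MvPolynomial (Fin n) F) (ζ : Fin n → F) : Prop :=
  ζ ∈ zeroSet G ∧ 𝓝[zeroSet G \ {ζ}] ζ = ⊥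

/-- A `k × n` `m`-sparse polynomial system: all the `gᵢ` are nonzero and the union of their
supports has exactly `m` elements. -/
def IsSparseSystem {F : Type*} [CommSemiring F] {k n : ℕ}
    (G : Fin k → MvPolynomial (Fin n) F) (m : ℕ) : Prop :=
  (∀ i, G i ≠ 0) ∧ (Finset.univ.biUnion fun i => (G i).support).card = m

set_option linter.unusedSectionVars false
set_option linter.style.haveILetI false

/-! ### Evaluation of power series -/

section Evaluation

theorem norm_sub_le_max' {Ω : Type*} [NontriviallyNormedField Ω] [IsUltrametricDist Ω] (x y : Ω) :
    ‖x - y‖ ≤ max ‖x‖ ‖y‖ := by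
  rw [sub_eq_add_neg, ← norm_neg y]
  exact IsUltrametricDist.norm_add_le_max x (-y)

variable {Ω : Type*} [NontriviallyNormedField Ω] [IsUltrametricDist Ω] [CompleteSpace Ω]

theorem summable_evs {A : Type*} [CommRing A] (ψ : A →+* Ω) (hψ : ∀ a, ‖ψ a‖ ≤ 1)
    {u : Ω} (hu : ‖u‖ < 1) (f : PowerSeries A) :
    Summable fun i => ‖ψ (PowerSeries.coeff i f) * u ^ i‖ := by
  refine Summable.of_nonneg_of_le (fun i => norm_nonneg _) (fun i => ?_)
    (summable_geometric_of_lt_one (norm_nonneg u) hu)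
  rw [norm_mul, norm_pow]
  exact mul_le_of_le_one_left (by positivity) (hψ _)

/-- Evaluation of power series at a point `u` of the open unit disc, the coefficients being
mapped to the closed unit disc by `ψ`. -/
noncomputable def evs {A : Type*} [CommRing A] (ψ : A →+* Ω) (hψ : ∀ a, ‖ψ a‖ ≤ 1)
    (u : Ω) (hu : ‖u‖ < 1) : PowerSeries A →+* Ω where
  toFun f := ∑' i, ψ (PowerSeries.coeff i f) * u ^ i
  map_one' := by
    rw [tsum_eq_single 0]
    · simp
    · intro i hi
      simp [PowerSeries.coeff_one, hi]
  map_zero' := by simp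
  map_add' f g := by
    rw [← Summable.tsum_add (summable_evs ψ hψ hu f).of_norm (summable_evs ψ hψ hu g).of_norm]
    simp [add_mul]
  map_mul' f g := by
    rw [tsum_mul_tsum_eq_tsum_sum_antidiagonal_of_summable_norm (summable_evs ψ hψ hu f)
      (summable_evs ψ hψ hu g)]
    congr 1
    funext i
    rw [PowerSeries.coeff_mul, map_sum, Finset.sum_mul]
    refine Finset.sum_congr rfl fun p hp => ?_
    rw [← Finset.HasAntidiagonal.mem_antidiagonal.1 hp, map_mul, pow_add]
    ring

variable {A : Type*} [CommRing A] (ψ : A →+* Ω) (hψ : ∀ a, ‖ψ a‖ ≤ 1) (u : Ω) (hu : ‖u‖ < 1)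

theorem evs_apply (f : PowerSeries A) :
    evs ψ hψ u hu f = ∑' i, ψ (PowerSeries.coeff i f) * u ^ i := rfl

@[simp] theorem evs_C (a : A) : evs ψ hψ u hu (PowerSeries.C a) = ψ a := by
  rw [evs_apply, tsum_eq_single 0]
  · simp
  · intro i hi
    simp [PowerSeries.coeff_C, hi]

@[simp] theorem evs_X : evs ψ hψ u hu PowerSeries.X = u := by
  rw [evs_apply, tsum_eq_single 1]
  · simp
  · intro i hi
    simp [PowerSeries.coeff_X, hi]

theorem norm_evs_le (f : PowerSeries A) : ‖evs ψ hψ u hu f‖ ≤ 1 := by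
  rw [evs_apply]
  refine IsUltrametricDist.norm_tsum_le_of_forall_le_of_nonneg zero_le_one fun i => ?_
  rw [norm_mul, norm_pow]
  exact mul_le_one₀ (hψ _) (by positivity) (pow_le_one₀ (norm_nonneg _) hu.le)

theorem evs_map {B : Type*} [CommRing B] (θ : B →+* A) (f : PowerSeries B) :
    evs ψ hψ u hu (PowerSeries.map θ f)
      = evs (ψ.comp θ) (fun b => hψ (θ b)) u hu f := by
  simp [evs_apply]

theorem evs_rescale (a : A) (f : PowerSeries A) (h : ‖ψ a * u‖ < 1) :
    evs ψ hψ u hu (PowerSeries.rescale a f) = evs ψ hψ (ψ a * u) h f := by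
  simp only [evs_apply, PowerSeries.coeff_rescale, map_mul, map_pow, mul_pow]
  congr 1
  funext i
  ring

/-- A ring homomorphism to the closed unit disc that maps `X` into the open unit disc is
automatically an evaluation. -/
theorem eq_evs (Φ : PowerSeries A →+* Ω) (hΦ : ∀ f, ‖Φ f‖ ≤ 1) (hX : Φ PowerSeries.X = u)
    (hC : ∀ a, Φ (PowerSeries.C a) = ψ a) (f : PowerSeries A) :
    Φ f = evs ψ hψ u hu f := by
  have key : ∀ N : ℕ, ‖Φ f - evs ψ hψ u hu f‖ ≤ ‖u‖ ^ N := by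
    intro N
    obtain ⟨g, hg⟩ : ∃ g, f = (PowerSeries.trunc N f : PowerSeries A) + PowerSeries.X ^ N * g := by
      have : PowerSeries.X ^ N ∣ f - (PowerSeries.trunc N f : PowerSeries A) := by
        rw [PowerSeries.X_pow_dvd_iff]
        intro m hm
        simp [PowerSeries.coeff_trunc, hm]
      obtain ⟨g, hg⟩ := this
      exact ⟨g, by rw [← hg]; ring⟩
    have hpoly : ∀ p : Polynomial A, Φ (p : PowerSeries A) = evs ψ hψ u hu (p : PowerSeries A) := by
      intro p
      induction p using Polynomial.induction_on' with
      | add p q hp hq => simp [hp, hq]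
      | monomial n a =>
        rw [← Polynomial.C_mul_X_pow_eq_monomial]
        simp [hX, hC]
    rw [hg, map_add, map_add, hpoly, map_mul, map_mul, map_pow, map_pow, hX, evs_X,
      add_sub_add_left_eq_sub, ← mul_sub, norm_mul, norm_pow]
    refine mul_le_of_le_one_right (by positivity) ?_
    refine (norm_sub_le_max' _ _).trans (max_le (hΦ _) (norm_evs_le ..))
  have h0 : Tendsto (fun N : ℕ => ‖u‖ ^ N) atTop (𝓝 0) :=
    tendsto_pow_atTop_nhds_zero_of_lt_one (norm_nonneg _) hu
  have := ge_of_tendsto' h0 key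
  exact sub_eq_zero.1 (norm_le_zero_iff.1 this)

end Evaluation

/-! ### Weierstrass division -/

section Division

/-- Existence of a sequence defined by course-of-values recursion. -/
theorem exists_strong_rec {α : Type*} (G : ∀ n : ℕ, (Fin n → α) → α) :
    ∃ q : ℕ → α, ∀ n, q n = G n fun j => q j := by
  let q : ℕ → α := fun n => Nat.strongRec (motive := fun _ => α)
    (fun n ih => G n fun j => ih j j.2) n
  refine ⟨q, fun n => ?_⟩
  simp only [q]
  rw [Nat.strongRec_eq]

open Polynomial in
/-- Weierstrass division by a series whose constant coefficient is a monic polynomial. -/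
theorem exists_division {A : Type*} [CommRing A] (H : PowerSeries A[X])
    (hH : (PowerSeries.constantCoeff H).Monic) (f : PowerSeries A[X]) :
    ∃ (q : PowerSeries A[X]) (ρ : ℕ → PowerSeries A), f = q * H +
      ∑ i ∈ Finset.range (PowerSeries.constantCoeff H).natDegree,
        PowerSeries.map Polynomial.C (ρ i) * PowerSeries.C (Polynomial.X ^ i) := by
  rcases subsingleton_or_nontrivial A with hA | hA
  · have : Subsingleton (PowerSeries A[X]) := inferInstance
    exact ⟨0, 0, Subsingleton.elim _ _⟩
  set h := PowerSeries.constantCoeff H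
  obtain ⟨q, hq⟩ := exists_strong_rec (α := A[X]) fun n ih =>
    (PowerSeries.coeff n f - ∑ j : Fin n, ih j * PowerSeries.coeff (n - j) H) /ₘ h
  have e : ∀ n, PowerSeries.coeff n (f - PowerSeries.mk q * H) =
      (PowerSeries.coeff n f - ∑ j : Fin n, q j * PowerSeries.coeff (n - j) H) %ₘ h := by
    intro n
    rw [map_sub, PowerSeries.coeff_mul, Finset.Nat.sum_antidiagonal_eq_sum_range_succ_mk,
      Finset.sum_range_succ, modByMonic_eq_sub_mul_div, ← hq n, Finset.sum_range]
    simp [h]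
    ring
  set r := f - PowerSeries.mk q * H with hr
  have hdeg : ∀ n, (PowerSeries.coeff n r).degree < h.degree := fun n => by
    rw [e]
    exact degree_modByMonic_lt _ hH
  refine ⟨PowerSeries.mk q, fun i => PowerSeries.mk fun n => (PowerSeries.coeff n r).coeff i, ?_⟩
  rw [← sub_eq_iff_eq_add', ← hr]
  ext n : 1
  rw [map_sum]
  simp only [PowerSeries.coeff_mul_C, PowerSeries.coeff_map, PowerSeries.coeff_mk]
  by_cases h0 : PowerSeries.coeff n r = 0
  · simp [h0]
  refine as_sum_range_C_mul_X_pow' _ ?_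
  exact natDegree_lt_natDegree h0 (hdeg n)

end Division

/-! ### Weierstrass projection -/

section Lifting

/-- Homomorphisms to an algebraically closed field extend along integral homomorphisms. -/
theorem exists_lift_of_isIntegral {A B Ω : Type*} [CommRing A] [CommRing B] [Field Ω]
    [IsAlgClosed Ω] (j : A →+* B) (hj : j.IsIntegral) (φ : A →+* Ω)
    (hker : RingHom.ker j ≤ RingHom.ker φ) : ∃ Φ : B →+* Ω, Φ.comp j = φ := by
  letI := j.toAlgebra
  haveI : Algebra.IsIntegral A B := ⟨hj⟩
  haveI hp : (RingHom.ker φ).IsPrime := RingHom.ker_isPrime φ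
  obtain ⟨Q, -, hQ, hQP⟩ := Ideal.exists_ideal_over_prime_of_isIntegral (S := B)
    (RingHom.ker φ) ⊥ hker
  haveI : Q.LiesOver (RingHom.ker φ) := ⟨hQP.symm⟩
  letI : Algebra (A ⧸ RingHom.ker φ) Ω := (RingHom.kerLift φ).toAlgebra
  have h1 : Function.Injective (algebraMap (A ⧸ RingHom.ker φ) Ω) := RingHom.kerLift_injective φ
  haveI : Module.IsTorsionFree (A ⧸ RingHom.ker φ) Ω :=
    Module.isTorsionFree_iff_algebraMap_injective.2 h1
  haveI : Module.IsTorsionFree (A ⧸ RingHom.ker φ) (B ⧸ Q) :=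
    Module.isTorsionFree_iff_algebraMap_injective.2 <| by
      rw [injective_iff_map_eq_zero]
      intro x hx
      obtain ⟨a, rfl⟩ := Ideal.Quotient.mk_surjective x
      have : Ideal.Quotient.mk Q (j a) = 0 := hx
      rw [Ideal.Quotient.eq_zero_iff_mem] at this ⊢
      rw [← hQP]
      exact this
  let F : (B ⧸ Q) →ₐ[A ⧸ RingHom.ker φ] Ω := IsAlgClosed.lift
  refine ⟨(F : (B ⧸ Q) →+* Ω).comp (Ideal.Quotient.mk Q), ?_⟩
  ext a
  have := F.commutes (Ideal.Quotient.mk _ a)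
  exact this

theorem norm_le_one_of_monic {Ω : Type*} [NontriviallyNormedField Ω] [IsUltrametricDist Ω]
    (p : Polynomial Ω) (hp : p.Monic) (hc : ∀ i, ‖p.coeff i‖ ≤ 1) (x : Ω) (hx : p.eval x = 0) :
    ‖x‖ ≤ 1 := by
  by_contra! h
  rw [Polynomial.eval_eq_sum_range, Finset.sum_range_succ, hp.coeff_natDegree, one_mul,
    add_comm, ← sub_neg_eq_add, sub_eq_zero] at hx
  have h2 : ‖x ^ p.natDegree‖ < ‖x‖ ^ p.natDegree := by
    rw [hx, norm_neg]
    have hn : p.natDegree ≠ 0 := by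
      intro h0
      rw [h0] at hx
      simp at hx
    refine lt_of_le_of_lt (b := ‖x‖ ^ (p.natDegree - 1)) ?_
      (pow_lt_pow_right₀ h (by omega))
    refine IsUltrametricDist.norm_sum_le_of_forall_le_of_nonneg (by positivity) fun i hi => ?_
    rw [norm_mul, norm_pow]
    refine (mul_le_of_le_one_left (by positivity) (hc i)).trans ?_
    refine pow_le_pow_right₀ h.le ?_
    have := Finset.mem_range.1 hi
    omega
  rw [norm_pow] at h2
  exact lt_irrefl _ h2

variable {Ω : Type*} [NontriviallyNormedField Ω] [IsUltrametricDist Ω] [CompleteSpace Ω]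

theorem isIntegral_of_generators {A B : Type*} [CommRing A] [CommRing B] (j : A →+* B) (s : ℕ)
    (b : ℕ → B) (h : ∀ x, ∃ ρ : ℕ → A, x = ∑ i ∈ Finset.range s, j (ρ i) * b i) :
    j.IsIntegral := by
  classical
  apply RingHom.IsIntegral.of_finite
  letI := j.toAlgebra
  change Module.Finite _ _
  refine ⟨⟨(Finset.range s).image b, ?_⟩⟩
  rw [eq_top_iff]
  rintro x -
  obtain ⟨ρ, rfl⟩ := h x
  refine Submodule.sum_mem _ fun i hi => ?_
  change algebraMap A B (ρ i) * b i ∈ _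
  rw [← Algebra.smul_def]
  refine Submodule.smul_mem _ _ (Submodule.subset_span ?_)
  rw [Finset.mem_coe, Finset.mem_image]
  exact ⟨i, hi, rfl⟩

/-- By Weierstrass division by `H`, the quotient by `J` is generated as a module by finitely many powers
of the polynomial variable. -/
theorem isIntegral_quotient {A : Type*} [CommRing A] (J : Ideal (PowerSeries (Polynomial A)))
    (H : PowerSeries (Polynomial A)) (hHJ : H ∈ J)
    (hH : (PowerSeries.constantCoeff H).Monic) :
    ((Ideal.Quotient.mk J).comp (PowerSeries.map (Polynomial.C : A →+* _))).IsIntegral := by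
  refine isIntegral_of_generators _ (PowerSeries.constantCoeff H).natDegree
    (fun i => Ideal.Quotient.mk J (PowerSeries.C (Polynomial.X ^ i))) fun x => ?_
  obtain ⟨f, rfl⟩ := Ideal.Quotient.mk_surjective x
  obtain ⟨q, ρ, h⟩ := exists_division H hH f
  refine ⟨ρ, ?_⟩
  conv_lhs => rw [h]
  rw [map_add, map_mul, Ideal.Quotient.eq_zero_iff_mem.2 hHJ, mul_zero, zero_add, map_sum]
  simp

theorem norm_eval₂_le {A : Type*} [CommRing A] (ψ : A →+* Ω) (hψ : ∀ a, ‖ψ a‖ ≤ 1)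
    {y : Ω} (hy : ‖y‖ ≤ 1) (p : Polynomial A) : ‖Polynomial.eval₂RingHom ψ y p‖ ≤ 1 := by
  rw [Polynomial.coe_eval₂RingHom, Polynomial.eval₂_eq_sum_range]
  refine IsUltrametricDist.norm_sum_le_of_forall_le_of_nonneg zero_le_one fun i hi => ?_
  rw [norm_mul, norm_pow]
  exact mul_le_one₀ (hψ _) (by positivity) (pow_le_one₀ (norm_nonneg _) hy)

/-- Weierstrass projection: if `J` contains a series whose constant coefficient is monic in the
polynomial variable, then the projection from the zeros of `J` to the zeros of its contraction is onto,
with fibres of bounded size. -/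
theorem weierstrass_projection [IsAlgClosed Ω] {A : Type*} [CommRing A]
    (J : Ideal (PowerSeries (Polynomial A)))
    (H : PowerSeries (Polynomial A)) (hHJ : H ∈ J)
    (hH : (PowerSeries.constantCoeff H).Monic) :
    ∃ s : ℕ, ∀ (ψ : A →+* Ω) (hψ : ∀ a, ‖ψ a‖ ≤ 1) (u : Ω) (hu : ‖u‖ < 1),
      {y : Ω | ∃ hy : ‖y‖ ≤ 1, ∀ f ∈ J,
        evs (Polynomial.eval₂RingHom ψ y) (norm_eval₂_le ψ hψ hy) u hu f = 0}.encard ≤ s ∧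
      ((∀ f ∈ J.comap (PowerSeries.map (Polynomial.C : A →+* _)), evs ψ hψ u hu f = 0) →
        ∃ (y : Ω) (hy : ‖y‖ ≤ 1), ∀ f ∈ J,
          evs (Polynomial.eval₂RingHom ψ y) (norm_eval₂_le ψ hψ hy) u hu f = 0) := by
  classical
  have hinteg := isIntegral_quotient J H hHJ hH
  obtain ⟨p, hpm, hp⟩ := hinteg (Ideal.Quotient.mk J (PowerSeries.C Polynomial.X))
  have hcomp : ∀ (ψ : A →+* Ω) (hψ : ∀ a, ‖ψ a‖ ≤ 1) (u : Ω) (hu : ‖u‖ < 1) (y : Ω)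
      (hy : ‖y‖ ≤ 1), (evs (Polynomial.eval₂RingHom ψ y) (norm_eval₂_le ψ hψ hy) u hu).comp
        (PowerSeries.map (Polynomial.C : A →+* _)) = evs ψ hψ u hu := by
    intro ψ hψ u hu y hy
    ext f
    rw [RingHom.comp_apply, evs_map]
    simp [evs_apply]
  refine ⟨p.natDegree, fun ψ hψ u hu => ⟨?_, ?_⟩⟩
  · set P : Polynomial Ω := p.map (evs ψ hψ u hu)
    have hPm : P.Monic := hpm.map _
    have hsub : {y : Ω | ∃ hy : ‖y‖ ≤ 1, ∀ f ∈ J,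
        evs (Polynomial.eval₂RingHom ψ y) (norm_eval₂_le ψ hψ hy) u hu f = 0} ⊆
        (P.roots.toFinset : Set Ω) := by
      rintro y ⟨hy, h⟩
      rw [Finset.mem_coe, Multiset.mem_toFinset, Polynomial.mem_roots hPm.ne_zero,
        Polynomial.IsRoot.def]
      have hl := Polynomial.hom_eval₂ p
        ((Ideal.Quotient.mk J).comp (PowerSeries.map (Polynomial.C : A →+* _)))
        (Ideal.Quotient.lift J (evs (Polynomial.eval₂RingHom ψ y) (norm_eval₂_le ψ hψ hy) u hu) h)
        (Ideal.Quotient.mk J (PowerSeries.C Polynomial.X))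
      rw [hp, map_zero, ← RingHom.comp_assoc, Ideal.Quotient.lift_mk, evs_C] at hl
      have : ((Ideal.Quotient.lift J (evs (Polynomial.eval₂RingHom ψ y)
          (norm_eval₂_le ψ hψ hy) u hu) h).comp (Ideal.Quotient.mk J)) =
          evs (Polynomial.eval₂RingHom ψ y) (norm_eval₂_le ψ hψ hy) u hu := by
        ext; rfl
      rw [this, hcomp ψ hψ u hu y hy] at hl
      rw [Polynomial.eval_map]
      simpa using hl.symm
    refine (Set.encard_le_encard hsub).trans ?_
    rw [Set.encard_coe_eq_coe_finsetCard]
    have := (Multiset.toFinset_card_le P.roots).trans (P.card_roots')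
    rw [hpm.natDegree_map] at this
    exact_mod_cast this
  · intro h
    obtain ⟨Φ, hΦ⟩ := exists_lift_of_isIntegral _ hinteg (evs ψ hψ u hu) (by
      intro f hf
      apply h
      rw [RingHom.mem_ker, RingHom.comp_apply, Ideal.Quotient.eq_zero_iff_mem] at hf
      exact hf)
    have hΦn : ∀ b, ‖Φ b‖ ≤ 1 := by
      intro b
      obtain ⟨q, hqm, hq⟩ := hinteg b
      refine norm_le_one_of_monic (q.map (evs ψ hψ u hu)) (hqm.map _) (fun i => ?_) _ ?_
      · rw [Polynomial.coeff_map]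
        exact norm_evs_le ..
      · rw [Polynomial.eval_map, ← hΦ, ← Polynomial.hom_eval₂, hq, map_zero]
    have hΦ' : ∀ f, Φ (Ideal.Quotient.mk J (PowerSeries.map (Polynomial.C : A →+* _) f)) =
        evs ψ hψ u hu f := fun f => RingHom.congr_fun hΦ f
    refine ⟨Φ (Ideal.Quotient.mk J (PowerSeries.C Polynomial.X)), hΦn _, fun f hf => ?_⟩
    rw [← eq_evs _ (norm_eval₂_le ψ hψ (hΦn _)) u hu (Φ.comp (Ideal.Quotient.mk J))
      (fun f => hΦn _), RingHom.comp_apply, Ideal.Quotient.eq_zero_iff_mem.2 hf, map_zero]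
    · have := hΦ' PowerSeries.X
      simpa using this
    · intro a
      induction a using Polynomial.induction_on' with
      | add a b ha hb => simp only [map_add, ha, hb]
      | monomial n a =>
        have := hΦ' (PowerSeries.C a)
        rw [PowerSeries.map_C, evs_C] at this
        rw [← Polynomial.C_mul_X_pow_eq_monomial]
        simp only [map_mul, map_pow, RingHom.comp_apply, this]
        simp

end Lifting

/-! ### Bihomogeneous decomposition of a power series -/

section Decomposition

variable {C₀ : Type*} [CommRing C₀] {ι : Type*} {M : Type*} [AddCommMonoid M] {n : ℕ}

/-- Only finitely many bidegrees occur in a polynomial. -/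
theorem finite_bidegrees (a : ι → M) (p : MvPolynomial (Fin n) (MvPolynomial ι C₀)) :
    {γ : (Fin n →₀ ℕ) × M | weightedHomogeneousComponent a γ.2 (coeff γ.1 p) ≠ 0}.Finite := by
  refine ((p.support.finite_toSet.biUnion (t := fun β => (fun χ => (β, χ)) ''
    (Function.support fun χ => weightedHomogeneousComponent a χ (coeff β p)))
      fun β _ => (weightedHomogeneousComponent_finsupp (coeff β p)).image _)).subset ?_
  rintro ⟨β, χ⟩ h
  simp only [Set.mem_iUnion]
  refine ⟨β, ?_, χ, h, rfl⟩
  rw [Finset.mem_coe, mem_support_iff]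
  intro h0
  simp [h0] at h

theorem eq_sum_bidegrees (a : ι → M) (p : MvPolynomial (Fin n) (MvPolynomial ι C₀))
    (T : Finset ((Fin n →₀ ℕ) × M))
    (hT : ∀ γ : (Fin n →₀ ℕ) × M, weightedHomogeneousComponent a γ.2 (coeff γ.1 p) ≠ 0 → γ ∈ T) :
    p = ∑ γ ∈ T, C (weightedHomogeneousComponent a γ.2 (coeff γ.1 p)) * monomial γ.1 1 := by
  classical
  ext1 β
  rw [coeff_sum]
  have : ∀ γ ∈ T, coeff β (C (weightedHomogeneousComponent a γ.2 (coeff γ.1 p)) * monomial γ.1 1)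
      = if γ.1 = β then weightedHomogeneousComponent a γ.2 (coeff β p) else 0 := by
    intro γ _
    rw [coeff_C_mul, coeff_monomial]
    split_ifs with h
    · rw [h, mul_one]
    · rw [mul_zero]
  rw [Finset.sum_congr rfl this, ← Finset.sum_filter]
  conv_lhs => rw [← sum_weightedHomogeneousComponent a (coeff β p)]
  rw [finsum_eq_sum_of_support_subset (s := (T.filter fun γ => γ.1 = β).image Prod.snd)]
  · rw [Finset.sum_image]
    rintro ⟨b, c⟩ hx ⟨b', c'⟩ hy h
    simp only [Finset.coe_filter, Set.mem_ofPred_eq] at hx hy h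
    rw [hx.2, hy.2, h]
  · intro χ hχ
    rw [Finset.coe_image]
    refine ⟨(β, χ), ?_, rfl⟩
    simp only [Finset.coe_filter, Set.mem_ofPred_eq, and_true]
    exact hT _ hχ

/-- In the ring of power series over a Noetherian ring every ideal is closed in the
`X`-adic topology. -/
theorem mem_of_forall_mem_sup_X_pow {A : Type*} [CommRing A] [IsNoetherianRing A]
    (I : Ideal (PowerSeries A)) (f : PowerSeries A)
    (h : ∀ N : ℕ, f ∈ I ⊔ Ideal.span {PowerSeries.X ^ N}) : f ∈ I := by
  have hJ : Ideal.span {(PowerSeries.X : PowerSeries A)} ≤ Ideal.jacobson ⊥ :=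
    IsAdicComplete.le_jacobson_bot (Ideal.span {PowerSeries.X})
  have := Ideal.iInf_pow_smul_eq_bot_of_le_jacobson (M := PowerSeries A ⧸ I) _ hJ
  rw [← Ideal.Quotient.eq_zero_iff_mem, ← Submodule.mem_bot (PowerSeries A), ← this,
    Submodule.mem_iInf]
  intro N
  obtain ⟨g, hg, e, he, rfl⟩ := Submodule.mem_sup.1 (h N)
  obtain ⟨q, rfl⟩ := Ideal.mem_span_singleton'.1 he
  rw [map_add, Ideal.Quotient.eq_zero_iff_mem.2 hg, zero_add, mul_comm, Ideal.span_singleton_pow]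
  exact Submodule.smul_mem_smul (Ideal.mem_span_singleton_self _)
    (Submodule.mem_top (x := Ideal.Quotient.mk I q))

/-- Artin-Rees: elements of an ideal `𝔞` divisible by a high power of `X` lie in `X * 𝔞`. -/
theorem exists_artin_rees {A : Type*} [CommRing A] [IsNoetherianRing A]
    (𝔞 : Ideal (PowerSeries A)) : ∃ k : ℕ, ∀ f ∈ 𝔞, PowerSeries.X ^ k ∣ f →
      f ∈ Ideal.span {PowerSeries.X} * 𝔞 := by
  obtain ⟨k, hk⟩ := Ideal.exists_pow_inf_eq_pow_smul
    (Ideal.span {(PowerSeries.X : PowerSeries A)}) 𝔞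
  refine ⟨k + 1, fun f hf hd => ?_⟩
  have h1 : f ∈ (Ideal.span {(PowerSeries.X : PowerSeries A)}) ^ (k + 1) •
      (⊤ : Submodule (PowerSeries A) (PowerSeries A)) ⊓ 𝔞 := by
    refine ⟨?_, hf⟩
    obtain ⟨g, rfl⟩ := hd
    rw [Ideal.span_singleton_pow]
    exact Submodule.smul_mem_smul (Ideal.mem_span_singleton_self _) Submodule.mem_top
  rw [hk (k + 1) (by omega), Nat.add_sub_cancel_left, pow_one] at h1
  exact Submodule.smul_mono le_rfl inf_le_right h1

theorem finite_components (a : ι → M) (F : PowerSeries (MvPolynomial (Fin n) (MvPolynomial ι C₀)))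
    (N : ℕ) : {γ : (Fin n →₀ ℕ) × M | ¬ PowerSeries.X ^ N ∣ PowerSeries.mk fun i =>
      weightedHomogeneousComponent a γ.2 (coeff γ.1 (PowerSeries.coeff i F))}.Finite := by
  refine ((Set.finite_lt_nat N).biUnion (t := fun i => {γ : (Fin n →₀ ℕ) × M |
    weightedHomogeneousComponent a γ.2 (coeff γ.1 (PowerSeries.coeff i F)) ≠ 0})
      fun i _ => finite_bidegrees a _).subset ?_
  intro γ hγ
  rw [Set.mem_ofPred_eq, PowerSeries.X_pow_dvd_iff] at hγ
  push Not at hγ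
  obtain ⟨i, hi, h⟩ := hγ
  simp only [Set.mem_iUnion]
  refine ⟨i, hi, ?_⟩
  rw [PowerSeries.coeff_mk] at h
  exact h

/-- A power series `F` over a polynomial ring is a finite sum of terms `P γ * (z ^ β + X * Q γ)`
with bihomogeneous coefficients `P γ` of distinct bidegrees. -/
theorem exists_bihomogeneous_decomposition [IsNoetherianRing C₀] [Finite ι] (a : ι → M)
    (F : PowerSeries (MvPolynomial (Fin n) (MvPolynomial ι C₀))) :
    ∃ (Γ : Finset ((Fin n →₀ ℕ) × M)) (P : (Fin n →₀ ℕ) × M → PowerSeries (MvPolynomial ι C₀))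
      (Q : (Fin n →₀ ℕ) × M → PowerSeries (MvPolynomial (Fin n) (MvPolynomial ι C₀))),
      (∀ γ i, IsWeightedHomogeneous a (PowerSeries.coeff i (P γ)) γ.2) ∧
      F = ∑ γ ∈ Γ, PowerSeries.map (C : MvPolynomial ι C₀ →+* _) (P γ) *
        (PowerSeries.C (monomial γ.1 1) + PowerSeries.X * Q γ) := by
  classical
  set P : (Fin n →₀ ℕ) × M → PowerSeries (MvPolynomial ι C₀) := fun γ =>
    PowerSeries.mk fun i => weightedHomogeneousComponent a γ.2 (coeff γ.1 (PowerSeries.coeff i F))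
    with hP
  set 𝔞 : Ideal (PowerSeries (MvPolynomial ι C₀)) := Ideal.span (Set.range P) with h𝔞
  obtain ⟨s, hs, hs'⟩ := (Submodule.fg_span_iff_fg_span_finset_subset (Set.range P)).1
    (IsNoetherian.noetherian 𝔞)
  obtain ⟨Γ₀, hΓ₀⟩ : ∃ Γ₀ : Finset ((Fin n →₀ ℕ) × M), Γ₀.image P = s := by
    obtain ⟨t, ht, h⟩ := Finset.subset_set_image_iff.1
      (show (s : Set _) ⊆ P '' Set.univ by rwa [Set.image_univ])
    exact ⟨t, h⟩
  have h𝔞' : 𝔞 = Ideal.span (P '' Γ₀) := by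
    rw [h𝔞, Ideal.span, hs', ← hΓ₀, Finset.coe_image]
  obtain ⟨k, hAR⟩ := exists_artin_rees 𝔞
  have hfin : ∀ N : ℕ, ({γ | ¬ PowerSeries.X ^ N ∣ P γ} : Set ((Fin n →₀ ℕ) × M)).Finite :=
    finite_components a F
  set Γ : Finset ((Fin n →₀ ℕ) × M) := Γ₀ ∪ (hfin k).toFinset with hΓ
  set mC : PowerSeries (MvPolynomial ι C₀) →+* PowerSeries (MvPolynomial (Fin n) (MvPolynomial ι C₀))
    := PowerSeries.map C with hmC
  set rest := F - ∑ γ ∈ Γ, mC (P γ) * PowerSeries.C (monomial γ.1 1) with hrest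
  have hmem : rest ∈ Ideal.span {PowerSeries.X} * 𝔞.map mC := by
    refine mem_of_forall_mem_sup_X_pow _ _ fun N => ?_
    have h2 : rest = (F - ∑ γ ∈ Γ ∪ (hfin N).toFinset, mC (P γ) * PowerSeries.C (monomial γ.1 1))
        + ∑ γ ∈ (hfin N).toFinset \ Γ, mC (P γ) * PowerSeries.C (monomial γ.1 1) := by
      rw [hrest, ← Finset.union_sdiff_self_eq_union, Finset.sum_union Finset.disjoint_sdiff]
      ring
    rw [h2, add_comm]
    refine Submodule.add_mem_sup (Submodule.sum_mem _ fun γ hγ => ?_) ?_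
    · have h3 : P γ ∈ Ideal.span {PowerSeries.X} * 𝔞 := by
        refine hAR _ (Ideal.subset_span ⟨γ, rfl⟩) ?_
        by_contra h
        refine (Finset.mem_sdiff.1 hγ).2 ?_
        rw [hΓ, Finset.mem_union]
        right
        simpa using h
      refine Ideal.mul_mem_right _ _ ?_
      have h4 := Ideal.mem_map_of_mem mC h3
      rw [Ideal.map_mul, Ideal.map_span, Set.image_singleton] at h4
      simpa [hmC] using h4
    · rw [Ideal.mem_span_singleton, PowerSeries.X_pow_dvd_iff]
      intro i hi
      rw [map_sub, sub_eq_zero, map_sum]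
      simp only [PowerSeries.coeff_mul_C, hmC, PowerSeries.coeff_map, hP, PowerSeries.coeff_mk]
      refine eq_sum_bidegrees a _ _ fun γ hγ => ?_
      rw [Finset.mem_union]
      right
      rw [Set.Finite.mem_toFinset, Set.mem_ofPred_eq, PowerSeries.X_pow_dvd_iff]
      intro h
      exact hγ (by simpa [hP] using h i hi)
  obtain ⟨y, hy, hXy⟩ := Ideal.mem_span_singleton_mul.1 hmem
  rw [h𝔞', Ideal.map_span, ← Set.image_comp] at hy
  obtain ⟨c, hc⟩ := (Submodule.mem_span_image_finset_iff_exists_fun _).1 hy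
  refine ⟨Γ, P, fun γ => if h : γ ∈ Γ₀ then c ⟨γ, h⟩ else 0, fun γ i => ?_, ?_⟩
  · simp only [hP, PowerSeries.coeff_mk]
    exact weightedHomogeneousComponent_isWeightedHomogeneous _ _
  · have h5 : F = ∑ γ ∈ Γ, mC (P γ) * PowerSeries.C (monomial γ.1 1) + PowerSeries.X * y := by
      rw [hXy, hrest]
      ring
    conv_lhs => rw [h5]
    simp only [mul_add, Finset.sum_add_distrib]
    congr 1
    rw [hΓ, ← Finset.sum_subset Finset.subset_union_left]
    · rw [← hc, Finset.mul_sum, ← Finset.sum_coe_sort Γ₀]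
      refine Finset.sum_congr rfl fun γ _ => ?_
      rw [dif_pos γ.2, smul_eq_mul, Function.comp_apply]
      ring
    · intro γ _ h
      simp [h]

end Decomposition

/-! ### Zeros of families of power series -/

section Setup

variable {Ω : Type*} [NontriviallyNormedField Ω] [IsUltrametricDist Ω] [CompleteSpace Ω]

/-- The value at `u` of the power series `f`, its coefficients being evaluated by `ψ`. -/
noncomputable def evf {A : Type*} [CommRing A] (ψ : A →+* Ω) (u : Ω) (f : PowerSeries A) : Ω :=
  ∑' i, ψ (PowerSeries.coeff i f) * u ^ i

theorem evs_eq_evf {A : Type*} [CommRing A] (ψ : A →+* Ω) (hψ : ∀ a, ‖ψ a‖ ≤ 1) (u : Ω)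
    (hu : ‖u‖ < 1) (f : PowerSeries A) : evs ψ hψ u hu f = evf ψ u f := rfl

theorem norm_eval₂Hom_le {A σ : Type*} [CommRing A] (ψ : A →+* Ω) (hψ : ∀ a, ‖ψ a‖ ≤ 1)
    {z : σ → Ω} (hz : ∀ j, ‖z j‖ ≤ 1) (p : MvPolynomial σ A) : ‖eval₂Hom ψ z p‖ ≤ 1 := by
  rw [coe_eval₂Hom, eval₂_eq]
  refine IsUltrametricDist.norm_sum_le_of_forall_le_of_nonneg zero_le_one fun d _ => ?_
  rw [norm_mul, norm_prod]
  refine mul_le_one₀ (hψ _) (Finset.prod_nonneg fun i _ => norm_nonneg _) ?_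
  refine Finset.prod_le_one (fun i _ => norm_nonneg _) fun i _ => ?_
  rw [norm_pow]
  exact pow_le_one₀ (norm_nonneg _) (hz i)

/-- A homomorphism from `(ℚ, +)` to the multiplicative group of `Ω` that maps positive numbers
into the open unit disc: a compatible system of rational powers of a topologically nilpotent
element. -/
structure IsScale (τ : ℚ → Ω) : Prop where
  zero : τ 0 = 1
  add : ∀ x y, τ (x + y) = τ x * τ y
  pos : ∀ x, 0 < x → ‖τ x‖ < 1

namespace IsScale

variable {τ : ℚ → Ω}

theorem ne_zero (hτ : IsScale τ) (x : ℚ) : τ x ≠ 0 := by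
  intro h
  have := hτ.add x (-x)
  rw [h, zero_mul, add_neg_cancel, hτ.zero] at this
  exact one_ne_zero this

theorem sub (hτ : IsScale τ) (x y : ℚ) : τ (x - y) = τ x / τ y := by
  rw [eq_div_iff (hτ.ne_zero y), ← hτ.add, sub_add_cancel]

theorem strictAnti (hτ : IsScale τ) : StrictAnti fun x => ‖τ x‖ := by
  intro x y h
  have : τ y = τ (y - x) * τ x := by rw [← hτ.add, sub_add_cancel]
  simp only [this, norm_mul]
  exact mul_lt_of_lt_one_left (norm_pos_iff.2 (hτ.ne_zero x)) (hτ.pos _ (sub_pos.2 h))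

theorem sum (hτ : IsScale τ) {α : Type*} (s : Finset α) (f : α → ℚ) : τ (∑ i ∈ s, f i) = ∏ i ∈ s, τ (f i) := by
  classical
  induction s using Finset.induction_on with
  | empty => simp [hτ.zero]
  | insert i s hi ih => rw [Finset.sum_insert hi, Finset.prod_insert hi, hτ.add, ih]

theorem nsmul (hτ : IsScale τ) (k : ℕ) (x : ℚ) : τ (k * x) = τ x ^ k := by
  induction k with
  | zero => simp [hτ.zero]
  | succ k ih =>
    push_cast
    rw [add_mul, hτ.add, ih, pow_succ, one_mul]

end IsScale

variable {C₀ : Type*} [CommRing C₀] (φ₀ : C₀ →+* Ω)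
variable {W : Type*} [AddCommGroup W] [Module ℚ W] {ι : Type*} (a : ι → Module.Dual ℚ W)

/-- The parameters `c l * τ (a l w)`, which vary monomially with `w`. -/
def par (a : ι → Module.Dual ℚ W) (τ : ℚ → Ω) (c : ι → Ω) (w : W) : ι → Ω :=
  fun l => c l * τ (a l w)

/-- Evaluation of polynomials in `z` whose coefficients are polynomials in the parameters. -/
noncomputable def evR (n : ℕ) (t : ι → Ω) (z : Fin n → Ω) :
    MvPolynomial (Fin n) (MvPolynomial ι C₀) →+* Ω :=
  eval₂Hom (eval₂Hom φ₀ t) z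

theorem norm_evR_le (hφ₀ : ∀ x, ‖φ₀ x‖ ≤ 1) {n : ℕ} {t : ι → Ω} (ht : ∀ l, ‖t l‖ ≤ 1) {z : Fin n → Ω}
    (hz : ∀ j, ‖z j‖ ≤ 1) (p : MvPolynomial (Fin n) (MvPolynomial ι C₀)) :
    ‖evR φ₀ n t z p‖ ≤ 1 :=
  norm_eval₂Hom_le _ (norm_eval₂Hom_le _ hφ₀ ht) hz p

/-- The zeros `(w, z)` of the ideal `J`, with `w` in the domain `D` and `z` in the closed unit
polydisc. -/
def Sol {n : ℕ} (J : Ideal (PowerSeries (MvPolynomial (Fin n) (MvPolynomial ι C₀))))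
    (u : Ω) (τ : ℚ → Ω) (c : ι → Ω) (D : Set W) : Set (W × (Fin n → Ω)) :=
  {p | p.1 ∈ D ∧ (∀ j, ‖p.2 j‖ ≤ 1) ∧ ∀ f ∈ J, evf (evR φ₀ n (par a τ c p.1) p.2) u f = 0}

/-- A bound for the number of zeros of `J`, as long as this number is finite, which is uniform in the
data `u`, `τ`, `c`, `D`. Here `D` is convex, the parameters lie in the closed unit disc for
`w ∈ D`, and `P` is a further side condition on the data. -/
def HasBound {n : ℕ} (J : Ideal (PowerSeries (MvPolynomial (Fin n) (MvPolynomial ι C₀))))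
    (P : Ω → (ℚ → Ω) → (ι → Ω) → Set W → Prop) : Prop :=
  ∃ N : ℕ, ∀ (u : Ω) (τ : ℚ → Ω) (c : ι → Ω) (D : Set W), ‖u‖ < 1 → IsScale τ → Convex ℚ D →
    (∀ w ∈ D, ∀ l, ‖par a τ c w l‖ ≤ 1) → P u τ c D →
    (Sol φ₀ a J u τ c D).Finite → (Sol φ₀ a J u τ c D).ncard ≤ N

/-- The uniform bound for all ideals in `n` variables and all parameter spaces of dimension
less than `k`. -/
def UniformBound (k n : ℕ) : Prop :=
  ∀ (W : Type) [AddCommGroup W] [Module ℚ W] [Module.Finite ℚ W], Module.finrank ℚ W < k →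
  ∀ (ι : Type) [Finite ι] (a : ι → Module.Dual ℚ W)
    (J : Ideal (PowerSeries (MvPolynomial (Fin n) (MvPolynomial ι C₀)))),
    HasBound φ₀ a J fun _ _ _ _ => True

variable {φ₀ a}

/-- Weighted homogeneous polynomials in the parameters vary monomially. -/
theorem eval_par_of_isWeightedHomogeneous {τ : ℚ → Ω} (hτ : IsScale τ) (c : ι → Ω)
    {p : MvPolynomial ι C₀} {χ : Module.Dual ℚ W} (hp : IsWeightedHomogeneous a p χ) (w w' : W) :
    eval₂Hom φ₀ (par a τ c w) p = τ (χ (w - w')) * eval₂Hom φ₀ (par a τ c w') p := by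
  rw [coe_eval₂Hom, coe_eval₂Hom, eval₂_eq, eval₂_eq, Finset.mul_sum]
  refine Finset.sum_congr rfl fun d hd => ?_
  rw [mem_support_iff] at hd
  have hd' := hp hd
  rw [mul_left_comm]
  congr 1
  have : χ (w - w') = ∑ l ∈ d.support, d l * (a l w - a l w') := by
    rw [← hd', Finsupp.weight_apply, Finsupp.sum, LinearMap.sum_apply]
    refine Finset.sum_congr rfl fun l _ => ?_
    simp
  rw [this, hτ.sum, ← Finset.prod_mul_distrib]
  refine Finset.prod_congr rfl fun l _ => ?_
  rw [hτ.nsmul, ← mul_pow, par, par, hτ.sub]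
  congr 1
  field_simp [hτ.ne_zero]

theorem evf_par_of_isWeightedHomogeneous {τ : ℚ → Ω} (hτ : IsScale τ) (c : ι → Ω) (u : Ω)
    {P : PowerSeries (MvPolynomial ι C₀)} {χ : Module.Dual ℚ W}
    (hP : ∀ i, IsWeightedHomogeneous a (PowerSeries.coeff i P) χ) (w w' : W) :
    evf (eval₂Hom φ₀ (par a τ c w)) u P =
      τ (χ (w - w')) * evf (eval₂Hom φ₀ (par a τ c w')) u P := by
  rw [evf, evf, ← tsum_mul_left]
  refine tsum_congr fun i => ?_
  rw [eval_par_of_isWeightedHomogeneous hτ c (hP i) w w', mul_assoc]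

theorem convex_of_ordConnected (χ : Module.Dual ℚ W) {s : Set ℚ} (hs : s.OrdConnected) :
    Convex ℚ {w : W | χ w ∈ s} :=
  hs.convex.linear_preimage χ

/-- If the nonzero functional `δ` is constant on `D`, then `D` is a translate of a subset of the
hyperplane `ker δ`, and the bound for parameter spaces of smaller dimension applies. -/
theorem hasBound_of_const {k n : ℕ} (hk : UniformBound (C₀ := C₀) φ₀ k n)
    {W : Type} [AddCommGroup W] [Module ℚ W] [Module.Finite ℚ W] (hW : Module.finrank ℚ W < k + 1)
    {ι : Type} [Finite ι] (a : ι → Module.Dual ℚ W)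
    (J : Ideal (PowerSeries (MvPolynomial (Fin n) (MvPolynomial ι C₀))))
    (δ : Module.Dual ℚ W) (hδ : δ ≠ 0) :
    HasBound φ₀ a J fun _ _ _ D => ∀ w ∈ D, ∀ w' ∈ D, δ w = δ w' := by
  have hker : Module.finrank ℚ (LinearMap.ker δ) < k := by
    have h1 : LinearMap.ker δ < ⊤ := lt_top_iff_ne_top.2 fun h => hδ (LinearMap.ker_eq_top.1 h)
    have := Submodule.finrank_lt h1.ne
    omega
  obtain ⟨N, hN⟩ := hk (LinearMap.ker δ) hker ι (fun l => (a l).comp (LinearMap.ker δ).subtype) J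
  refine ⟨N, fun u τ c D hu hτ hD hpar hconst hfin => ?_⟩
  rcases D.eq_empty_or_nonempty with rfl | ⟨w₀, hw₀⟩
  · have : Sol φ₀ a J u τ c ∅ = ∅ := by
      ext p
      simp [Sol]
    simp [this]
  have hp : ∀ w : LinearMap.ker δ, par (fun l => (a l).comp (LinearMap.ker δ).subtype) τ
      (par a τ c w₀) w = par a τ c (w₀ + w) := by
    intro w
    funext l
    simp [par, hτ.add, mul_assoc]
  set D' : Set (LinearMap.ker δ) := {w | w₀ + (w : W) ∈ D} with hD'
  have himg : Sol φ₀ a J u τ c D = (fun p : LinearMap.ker δ × (Fin n → Ω) => (w₀ + (p.1 : W), p.2)) ''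
      Sol φ₀ (fun l => (a l).comp (LinearMap.ker δ).subtype) J u τ (par a τ c w₀) D' := by
    ext ⟨w, z⟩
    constructor
    · rintro ⟨hw, hz, hf⟩
      have hmem : w - w₀ ∈ LinearMap.ker δ := by
        rw [LinearMap.mem_ker, map_sub, hconst w hw w₀ hw₀, sub_self]
      refine ⟨(⟨w - w₀, hmem⟩, z), ⟨?_, hz, ?_⟩, ?_⟩
      · simpa [hD'] using hw
      · intro f hfJ
        rw [hp]
        simpa using hf f hfJ
      · simp
    · rintro ⟨⟨w', z'⟩, ⟨hw, hz, hf⟩, h⟩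
      simp only [Prod.mk.injEq] at h
      obtain ⟨rfl, rfl⟩ := h
      refine ⟨hw, hz, fun f hfJ => ?_⟩
      have := hf f hfJ
      rwa [hp] at this
  have hinj : Function.Injective
      (fun p : LinearMap.ker δ × (Fin n → Ω) => (w₀ + (p.1 : W), p.2)) := by
    rintro ⟨w, z⟩ ⟨w', z'⟩ h
    simp only [Prod.mk.injEq, add_right_inj] at h
    rw [Prod.mk.injEq]
    exact ⟨Subtype.ext h.1, h.2⟩
  rw [himg] at hfin ⊢
  rw [Set.ncard_image_of_injective _ hinj]
  refine hN u τ _ D' hu hτ ?_ ?_ trivial ((Set.finite_image_iff hinj.injOn).1 hfin)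
  · have := (hD.translate_preimage_right w₀).linear_preimage (LinearMap.ker δ).subtype
    exact this
  · intro w hw l
    rw [hp]
    exact hpar _ hw l

end Setup

/-! ### A substitution producing monic polynomials -/

section Substitution

/-- Some base `r` separates finitely many exponent vectors by their values `∑ βᵢ rⁱ`. -/
theorem exists_separating_base {n : ℕ} (B : Finset (Fin n →₀ ℕ)) :
    ∃ r : ℕ, 0 < r ∧ Set.InjOn (fun β : Fin n →₀ ℕ => ∑ i, β i * r ^ (i : ℕ)) B := by
  classical
  let q : (Fin n →₀ ℕ) → (Fin n →₀ ℕ) → Polynomial ℤ := fun β β' =>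
    ∑ i : Fin n, Polynomial.C ((β i : ℤ) - β' i) * Polynomial.X ^ (i : ℕ)
  have hq : ∀ β β', β ≠ β' → q β β' ≠ 0 := by
    intro β β' h h0
    apply h
    ext i
    have : (q β β').coeff (i : ℕ) = (β i : ℤ) - β' i := by
      simp only [q, Polynomial.finsetSum_coeff, Polynomial.coeff_C_mul_X_pow]
      rw [Finset.sum_eq_single i]
      · simp
      · intro j _ hj
        rw [if_neg]
        exact fun h => hj (Fin.ext h.symm)
      · simp
    rw [h0, Polynomial.coeff_zero] at this
    omega
  set P := ∏ p ∈ (B ×ˢ B).filter (fun p => p.1 ≠ p.2), q p.1 p.2 with hP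
  have hP0 : P ≠ 0 := Finset.prod_ne_zero_iff.2 fun p hp => hq _ _ (Finset.mem_filter.1 hp).2
  obtain ⟨r, hr⟩ : ∃ r : ℕ, ¬ P.IsRoot ((r + 1 : ℕ) : ℤ) := by
    by_contra! h
    refine hP0 (Polynomial.eq_zero_of_infinite_isRoot P ?_)
    refine Set.infinite_of_injective_forall_mem (f := fun r : ℕ => ((r + 1 : ℕ) : ℤ)) ?_ h
    intro x y hxy
    simpa using hxy
  refine ⟨r + 1, by omega, fun β hβ β' hβ' h => ?_⟩
  by_contra hne
  apply hr
  rw [Polynomial.IsRoot.def, hP, Polynomial.eval_prod]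
  refine Finset.prod_eq_zero (i := (β, β')) (by simp; exact ⟨⟨hβ, hβ'⟩, hne⟩) ?_
  simp only [q, Polynomial.eval_finsetSum, Polynomial.eval_mul, Polynomial.eval_C,
    Polynomial.eval_pow, Polynomial.eval_X, sub_mul, Finset.sum_sub_distrib]
  rw [sub_eq_zero]
  exact_mod_cast h

variable {S S' : Type*} [CommRing S] [CommRing S']

/-- The substitution `z₀ ↦ Y`, `zᵢ ↦ zᵢ + Y ^ (r ^ i)`, combined with the change of
coefficients `θ`. -/
noncomputable def twist (θ : S →+* S') (n r : ℕ) :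
    MvPolynomial (Fin (n + 1)) S →+* Polynomial (MvPolynomial (Fin n) S') :=
  eval₂Hom ((Polynomial.C.comp C).comp θ) (Fin.cons Polynomial.X fun i : Fin n =>
    Polynomial.X ^ r ^ ((i : ℕ) + 1) + Polynomial.C (X i))

theorem twist_monomial_monic [Nontrivial S'] (θ : S →+* S') (n r : ℕ) (hr : 0 < r)
    (β : Fin (n + 1) →₀ ℕ) :
    (twist θ n r (monomial β 1)).Monic ∧
      (twist θ n r (monomial β 1)).natDegree = ∑ i, β i * r ^ (i : ℕ) := by
  have hfac : twist θ n r (monomial β 1) = ∏ i, (Fin.cons Polynomial.X (fun i : Fin n =>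
    Polynomial.X ^ r ^ ((i : ℕ) + 1) + Polynomial.C (X i)) : Fin (n + 1) →
      Polynomial (MvPolynomial (Fin n) S')) i ^ β i := by
    rw [twist, coe_eval₂Hom, eval₂_monomial, map_one, one_mul, Finsupp.prod_fintype]
    simp
  have hm : ∀ i, ((Fin.cons Polynomial.X (fun i : Fin n =>
    Polynomial.X ^ r ^ ((i : ℕ) + 1) + Polynomial.C (X i)) : Fin (n + 1) →
      Polynomial (MvPolynomial (Fin n) S')) i).Monic ∧
      ((Fin.cons Polynomial.X (fun i : Fin n =>
    Polynomial.X ^ r ^ ((i : ℕ) + 1) + Polynomial.C (X i)) : Fin (n + 1) →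
      Polynomial (MvPolynomial (Fin n) S')) i).natDegree = r ^ (i : ℕ) := by
    intro i
    refine Fin.cases ?_ (fun i => ?_) i
    · simp [Polynomial.monic_X]
    · have h1 : r ^ ((i : ℕ) + 1) ≠ 0 := (pow_pos hr _).ne'
      simp only [Fin.cons_succ, Fin.val_succ]
      exact ⟨Polynomial.monic_X_pow_add_C _ h1, Polynomial.natDegree_X_pow_add_C⟩
  rw [hfac]
  refine ⟨Polynomial.monic_prod_of_monic _ _ fun i _ => (hm i).1.pow _, ?_⟩
  rw [Polynomial.natDegree_prod_of_monic _ _ fun i _ => (hm i).1.pow _]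
  refine Finset.sum_congr rfl fun i _ => ?_
  rw [(hm i).1.natDegree_pow, (hm i).2]

/-- A combination of monic polynomials of distinct degrees, in which the one of highest degree
has coefficient one, is monic. -/
theorem monic_sum_of_injOn {A : Type*} [CommRing A] [Nontrivial A] {α : Type*} [DecidableEq α]
    (E : Finset α) (γ₀ : α) (hγ₀ : γ₀ ∈ E) (p : α → Polynomial A) (e : α → A)
    (hp : ∀ γ ∈ E, (p γ).Monic) (hinj : Set.InjOn (fun γ => (p γ).natDegree) E)
    (hmax : ∀ γ ∈ E, (p γ).natDegree ≤ (p γ₀).natDegree) (he : e γ₀ = 1) :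
    (∑ γ ∈ E, Polynomial.C (e γ) * p γ).Monic := by
  rw [← Finset.add_sum_erase _ _ hγ₀, he, map_one, one_mul]
  refine (hp _ hγ₀).add_of_left ?_
  have h0 : (⊥ : WithBot ℕ) < (p γ₀).degree :=
    bot_lt_iff_ne_bot.2 fun h => (hp _ hγ₀).ne_zero (Polynomial.degree_eq_bot.1 h)
  refine (Polynomial.degree_sum_le _ _).trans_lt ((Finset.sup_lt_iff h0).2 fun γ hγ => ?_)
  obtain ⟨hne, hγE⟩ := Finset.mem_erase.1 hγ
  rw [← Polynomial.smul_eq_C_mul]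
  refine (Polynomial.degree_smul_le _ _).trans_lt (Polynomial.degree_lt_degree ?_)
  exact lt_of_le_of_ne (hmax _ hγE) fun h => hne (hinj hγE hγ₀ h)

end Substitution

section EvalTwist

variable {Ω : Type*} [NontriviallyNormedField Ω] [IsUltrametricDist Ω] [CompleteSpace Ω]
variable {C₀ : Type*} [CommRing C₀] (φ₀ : C₀ →+* Ω)

theorem eval_twist {ι ι' : Type*} (g : ι → ι') (n r : ℕ) (t : ι' → Ω) (y : Ω) (z : Fin n → Ω) :
    (Polynomial.eval₂RingHom (evR φ₀ n t z) y).comp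
      (twist (rename g : MvPolynomial ι C₀ →ₐ[C₀] MvPolynomial ι' C₀).toRingHom n r) =
    evR φ₀ (n + 1) (t ∘ g) (Fin.cons y fun i => y ^ r ^ ((i : ℕ) + 1) + z i) := by
  refine MvPolynomial.ringHom_ext (fun s => ?_) (fun i => ?_)
  · simp only [RingHom.comp_apply, twist, evR, coe_eval₂Hom, eval₂_C, Polynomial.coe_eval₂RingHom,
      Polynomial.eval₂_C]
    exact eval₂_rename _ _ _ _
  · refine Fin.cases ?_ (fun i => ?_) i
    · simp [twist, evR]
    · simp [twist, evR]

end EvalTwist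

/-! ### Dominant coefficients of equal weight -/

section Dominant

variable {Ω : Type*} [NontriviallyNormedField Ω] [IsUltrametricDist Ω] [CompleteSpace Ω]

theorem evf_map {A B : Type*} [CommRing A] [CommRing B] (ψ : A →+* Ω) (u : Ω) (θ : B →+* A)
    (f : PowerSeries B) : evf ψ u (PowerSeries.map θ f) = evf (ψ.comp θ) u f := by
  simp [evf]

theorem evf_rescale {A : Type*} [CommRing A] (ψ : A →+* Ω) (u : Ω) (x : A) (f : PowerSeries A) :
    evf ψ u (PowerSeries.rescale x f) = evf ψ (ψ x * u) f := by
  refine tsum_congr fun i => ?_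
  rw [PowerSeries.coeff_rescale, map_mul, map_pow, mul_pow]
  ring

theorem convex_norm_le {τ : ℚ → Ω} (hτ : IsScale τ) {W : Type*} [AddCommGroup W] [Module ℚ W]
    (δ : Module.Dual ℚ W) (ρ : Ω) (B : ℝ) : Convex ℚ {w : W | ‖ρ * τ (δ w)‖ ≤ B} := by
  refine convex_of_ordConnected (s := {x | ‖ρ * τ x‖ ≤ B}) δ ⟨fun x hx y hy v hv => ?_⟩
  simp only [Set.mem_ofPred_eq, norm_mul] at hx ⊢
  exact (mul_le_mul_of_nonneg_left (hτ.strictAnti.antitone hv.1) (norm_nonneg _)).trans hx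

theorem convex_norm_lt {τ : ℚ → Ω} (hτ : IsScale τ) {W : Type*} [AddCommGroup W] [Module ℚ W]
    (δ : Module.Dual ℚ W) (ρ : Ω) (B : ℝ) : Convex ℚ {w : W | ‖ρ * τ (δ w)‖ < B} := by
  refine convex_of_ordConnected (s := {x | ‖ρ * τ x‖ < B}) δ ⟨fun x hx y hy v hv => ?_⟩
  simp only [Set.mem_ofPred_eq, norm_mul] at hx ⊢
  exact (mul_le_mul_of_nonneg_left (hτ.strictAnti.antitone hv.1) (norm_nonneg _)).trans_lt hx

variable {C₀ : Type*} [CommRing C₀] {φ₀ : C₀ →+* Ω}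

/-- On `D`, the values of the coefficients `P γ`, `γ ∈ E`, are nonzero and of maximal norm, and the
values of the other coefficients have smaller norm. -/
def IsArgmax (φ₀ : C₀ →+* Ω) {W ι κ : Type*} [AddCommGroup W] [Module ℚ W]
    (a : ι → Module.Dual ℚ W) (Γ E : Finset κ) (P : κ → PowerSeries (MvPolynomial ι C₀))
    (u : Ω) (τ : ℚ → Ω) (c : ι → Ω) (D : Set W) : Prop :=
  ∀ w ∈ D, ∀ γ ∈ E, evf (eval₂Hom φ₀ (par a τ c w)) u (P γ) ≠ 0 ∧ ∀ γ' ∈ Γ,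
    ‖evf (eval₂Hom φ₀ (par a τ c w)) u (P γ')‖ ≤ ‖evf (eval₂Hom φ₀ (par a τ c w)) u (P γ)‖ ∧
    (γ' ∉ E → ‖evf (eval₂Hom φ₀ (par a τ c w)) u (P γ')‖ <
      ‖evf (eval₂Hom φ₀ (par a τ c w)) u (P γ)‖)

/-- Evaluation of a decomposed power series. -/
theorem evf_decomposition (hφ₀ : ∀ x, ‖φ₀ x‖ ≤ 1) {ι κ : Type*} {n : ℕ} (Γ : Finset κ)
    (P : κ → PowerSeries (MvPolynomial ι C₀))
    (R : κ → PowerSeries (MvPolynomial (Fin n) (MvPolynomial ι C₀)))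
    {t : ι → Ω} (ht : ∀ l, ‖t l‖ ≤ 1) {z : Fin n → Ω} (hz : ∀ j, ‖z j‖ ≤ 1) {u : Ω} (hu : ‖u‖ < 1) :
    evf (evR φ₀ n t z) u (∑ γ ∈ Γ, PowerSeries.map C (P γ) * R γ) =
      ∑ γ ∈ Γ, evf (eval₂Hom φ₀ t) u (P γ) * evf (evR φ₀ n t z) u (R γ) := by
  simp only [← evs_eq_evf (evR φ₀ n t z) (norm_evR_le φ₀ hφ₀ ht hz) u hu]
  rw [map_sum]
  refine Finset.sum_congr rfl fun γ _ => ?_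
  rw [map_mul, evs_eq_evf, evf_map]
  congr 2
  ext <;> simp [evR]

/-- Finitely many elements of the open unit disc are bounded in norm by an element of that disc. -/
theorem exists_norm_bound (s : Finset Ω) (hs : ∀ x ∈ s, ‖x‖ < 1) :
    ∃ v : Ω, ‖v‖ < 1 ∧ ∀ x ∈ s, ‖x‖ ≤ ‖v‖ := by
  rcases s.eq_empty_or_nonempty with rfl | h
  · exact ⟨0, by simp, by simp⟩
  · obtain ⟨v, hv, hmax⟩ := s.exists_max_image (fun x => ‖x‖) h
    exact ⟨v, hs v hv, hmax⟩

theorem mul_div_cancel_of_norm_le {x v : Ω} (h : ‖x‖ ≤ ‖v‖) : v * (x / v) = x := by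
  rcases eq_or_ne v 0 with rfl | hv
  · rw [norm_zero] at h
    have : x = 0 := norm_le_zero_iff.1 h
    simp [this]
  · field_simp

theorem norm_div_le_one_of_le {x v : Ω} (h : ‖x‖ ≤ ‖v‖) : ‖x / v‖ ≤ 1 := by
  rw [norm_div]
  exact div_le_one_of_le₀ h (norm_nonneg _)

/-- Counting along a map with fibres of bounded cardinality. -/
theorem ncard_le_mul_of_fibres {α β : Type*} (S : Set α) (hS : S.Finite) (f : α → β) (s N : ℕ)
    (hf : ∀ b, {x ∈ S | f x = b}.ncard ≤ s) (hN : (f '' S).ncard ≤ N) : S.ncard ≤ s * N := by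
  classical
  lift S to Finset α using hS
  rw [Set.ncard_coe_finset]
  have : (S.image f).card ≤ N := by
    rw [← Set.ncard_coe_finset, Finset.coe_image]
    exact hN
  refine (Finset.card_le_mul_card_image S s fun b _ => ?_).trans (Nat.mul_le_mul_left s this)
  have := hf b
  rw [← Set.ncard_coe_finset]
  convert this using 2
  ext x
  simp

theorem norm_cons_le (r : ℕ) {n : ℕ} {z : Fin n → Ω} (hz : ∀ j, ‖z j‖ ≤ 1) {y : Ω}
    (hy : ‖y‖ ≤ 1) (j : Fin (n + 1)) :
    ‖(Fin.cons y fun i => y ^ r ^ ((i : ℕ) + 1) + z i : Fin (n + 1) → Ω) j‖ ≤ 1 := by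
  refine Fin.cases ?_ (fun i => ?_) j
  · simpa using hy
  · rw [Fin.cons_succ]
    refine (IsUltrametricDist.norm_add_le_max _ _).trans (max_le ?_ (hz i))
    rw [norm_pow]
    exact pow_le_one₀ (norm_nonneg _) hy

/-- Elimination of a variable when all dominant coefficients `P γ`, `γ ∈ E`, have the same weight.

Dividing the given element of `J` by the value of some `P γ₀`, and substituting by `twist`, turns it
into a series `H` whose constant coefficient is monic in one variable; the quotients `P γ / P γ₀`,
which again vary monomially with `w`, serve as new parameters. Weierstrass projection along that
variable then reduces the count to `n` variables. -/
theorem hasBound_of_isArgmax [IsAlgClosed Ω] (hφ₀ : ∀ x, ‖φ₀ x‖ ≤ 1) {k n : ℕ}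
    (hk : UniformBound (C₀ := C₀) φ₀ (k + 1) n)
    {W : Type} [AddCommGroup W] [Module ℚ W] [Module.Finite ℚ W] (hW : Module.finrank ℚ W < k + 1)
    {ι : Type} [Finite ι] (a : ι → Module.Dual ℚ W)
    (J : Ideal (PowerSeries (MvPolynomial (Fin (n + 1)) (MvPolynomial ι C₀))))
    (Γ E : Finset ((Fin (n + 1) →₀ ℕ) × Module.Dual ℚ W))
    (P : (Fin (n + 1) →₀ ℕ) × Module.Dual ℚ W → PowerSeries (MvPolynomial ι C₀))
    (Q : (Fin (n + 1) →₀ ℕ) × Module.Dual ℚ W →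
      PowerSeries (MvPolynomial (Fin (n + 1)) (MvPolynomial ι C₀)))
    (hP : ∀ γ i, IsWeightedHomogeneous a (PowerSeries.coeff i (P γ)) γ.2)
    (hFJ : ∑ γ ∈ Γ, PowerSeries.map C (P γ) *
      (PowerSeries.C (monomial γ.1 1) + PowerSeries.X * Q γ) ∈ J)
    (hE : E ⊆ Γ) (hEne : E.Nonempty) (χ₀ : Module.Dual ℚ W) (hχ₀ : ∀ γ ∈ E, γ.2 = χ₀) :
    HasBound φ₀ a J (IsArgmax φ₀ a Γ E P) := by
  classical
  haveI : Nontrivial C₀ := φ₀.domain_nontrivial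
  obtain ⟨r, hr, hinj⟩ := exists_separating_base (E.image Prod.fst)
  obtain ⟨γ₀, hγ₀, hmax⟩ := E.exists_max_image
    (fun γ => ∑ i, γ.1 i * r ^ (i : ℕ)) hEne
  -- the new parameters: one for rescaling the power series variable, and the quotients `P γ / P γ₀`
  let ι' := Option (ι ⊕ Γ)
  let a' : ι' → Module.Dual ℚ W := fun l => l.elim 0 (Sum.elim a fun γ => γ.1.2 - χ₀)
  let g : ι → ι' := fun l => some (Sum.inl l)
  let A := MvPolynomial (Fin n) (MvPolynomial ι' C₀)
  let tr : PowerSeries (MvPolynomial (Fin (n + 1)) (MvPolynomial ι C₀)) →+*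
      PowerSeries (Polynomial A) :=
    (PowerSeries.rescale (Polynomial.C (C (X none)))).comp
      (PowerSeries.map (twist (rename g : MvPolynomial ι C₀ →ₐ[C₀] MvPolynomial ι' C₀).toRingHom n r))
  have htr : ∀ (t : ι' → Ω) (z : Fin n → Ω) (y v : Ω) f,
      evf (Polynomial.eval₂RingHom (evR φ₀ n t z) y) v (tr f) =
      evf (evR φ₀ (n + 1) (t ∘ g) (Fin.cons y fun i => y ^ r ^ ((i : ℕ) + 1) + z i))
        (t none * v) f := by
    intro t z y v f
    simp only [tr, RingHom.comp_apply]
    rw [evf_rescale, evf_map, eval_twist]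
    simp [evR]
  -- `e γ` stands for the quotient `P γ / P γ₀`; a non-dominant quotient carries a factor `X`, so that
  -- it does not contribute to the constant coefficient of `H`
  let x : Γ → A := fun γ => C (X (some (Sum.inr γ)))
  let e : Γ → PowerSeries (Polynomial A) := fun γ =>
    if γ.1 = γ₀ then 1 else if γ.1 ∈ E then PowerSeries.C (Polynomial.C (x γ)) else
      PowerSeries.X * PowerSeries.C (Polynomial.C (x γ))
  let H : PowerSeries (Polynomial A) := ∑ γ : Γ, e γ *
    tr (PowerSeries.C (monomial γ.1.1 1) + PowerSeries.X * Q γ)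
  have hH : (PowerSeries.constantCoeff H).Monic := by
    let q : (Fin (n + 1) →₀ ℕ) × Module.Dual ℚ W → Polynomial A := fun γ =>
      twist (rename g : MvPolynomial ι C₀ →ₐ[C₀] MvPolynomial ι' C₀).toRingHom n r (monomial γ.1 1)
    let e₀ : (Fin (n + 1) →₀ ℕ) × Module.Dual ℚ W → A := fun γ =>
      if γ = γ₀ then 1 else if h : γ ∈ Γ then x ⟨γ, h⟩ else 0
    have hsum : PowerSeries.constantCoeff H = ∑ γ ∈ E, Polynomial.C (e₀ γ) * q γ := by
      rw [← Finset.inter_eq_right.2 hE, ← Finset.sum_ite_mem, ← Finset.sum_coe_sort]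
      rw [map_sum]
      refine Finset.sum_congr rfl fun γ _ => ?_
      have h1 : PowerSeries.constantCoeff
          (tr (PowerSeries.C (monomial γ.1.1 1) + PowerSeries.X * Q γ)) = q γ := by
        simp only [tr, RingHom.comp_apply, q]
        rw [← PowerSeries.coeff_zero_eq_constantCoeff_apply, PowerSeries.coeff_rescale, pow_zero,
          one_mul, PowerSeries.coeff_map, PowerSeries.coeff_zero_eq_constantCoeff_apply]
        simp
      rw [map_mul, h1]
      by_cases h2 : γ.1 = γ₀
      · have : γ.1 ∈ E := h2 ▸ hγ₀
        rw [if_pos this]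
        simp [e, e₀, h2]
      · by_cases h3 : γ.1 ∈ E
        · simp [e, e₀, h2, h3]
        · simp [e, h2, h3]
    rw [hsum]
    have hq := fun γ : (Fin (n + 1) →₀ ℕ) × Module.Dual ℚ W =>
      twist_monomial_monic (rename g : MvPolynomial ι C₀ →ₐ[C₀] MvPolynomial ι' C₀).toRingHom n r hr γ.1
    refine monic_sum_of_injOn E γ₀ hγ₀ q e₀ (fun γ _ => (hq γ).1) ?_ ?_ (by simp [e₀])
    · intro γ hγ γ' hγ' h
      have h' : ∑ i, γ.1 i * r ^ (i : ℕ) = ∑ i, γ'.1 i * r ^ (i : ℕ) := by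
        rw [← (hq γ).2, ← (hq γ').2]
        exact h
      refine Prod.ext (hinj (by simpa using ⟨_, hγ⟩) (by simpa using ⟨_, hγ'⟩) h') ?_
      rw [hχ₀ γ hγ, hχ₀ γ' hγ']
    · intro γ hγ
      rw [(hq γ).2, (hq γ₀).2]
      exact hmax γ hγ
  let J' : Ideal (PowerSeries (Polynomial A)) := Ideal.span {H} ⊔ J.map tr
  have hHJ : H ∈ J' := Ideal.mem_sup_left (Ideal.subset_span rfl)
  obtain ⟨s, hs⟩ := weierstrass_projection (Ω := Ω) J' H hHJ hH
  obtain ⟨N, hN⟩ := hk W hW ι' a' (J'.comap (PowerSeries.map Polynomial.C))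
  refine ⟨s * N, fun u τ c D hu hτ hD hpar harg hfin => ?_⟩
  set S := Sol φ₀ a J u τ c D with hS
  rcases S.eq_empty_or_nonempty with hSe | ⟨⟨w₀, z₀⟩, hw₀⟩
  · simp [hSe]
  let p : (Fin (n + 1) →₀ ℕ) × Module.Dual ℚ W → W → Ω :=
    fun γ w => evf (eval₂Hom φ₀ (par a τ c w)) u (P γ)
  have hquot : ∀ γ w, p γ w / p γ₀ w = p γ w₀ / p γ₀ w₀ * τ (-((γ.2 - χ₀) w₀)) * τ ((γ.2 - χ₀) w) := by
    intro γ w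
    have h0 := (harg w₀ hw₀.1 γ₀ hγ₀).1
    have h1 : p γ w = τ (γ.2 (w - w₀)) * p γ w₀ :=
      evf_par_of_isWeightedHomogeneous hτ c u (hP γ) w w₀
    have h2 : p γ₀ w = τ (χ₀ (w - w₀)) * p γ₀ w₀ := by
      rw [← hχ₀ γ₀ hγ₀]
      exact evf_par_of_isWeightedHomogeneous hτ c u (hP γ₀) w w₀
    have h3 : -((γ.2 - χ₀) w₀) + (γ.2 - χ₀) w = γ.2 (w - w₀) - χ₀ (w - w₀) := by
      simp only [LinearMap.sub_apply, map_sub]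
      ring
    rw [mul_assoc, ← hτ.add, h3, hτ.sub, h1, h2]
    rw [mul_div_mul_comm, mul_comm]
  -- `v` replaces `u`: it dominates `u` and the non-dominant quotients at the finitely many zeros, so
  -- that these quotients are `v` times a parameter in the closed unit disc
  obtain ⟨v, hv, hvmax⟩ : ∃ v : Ω, ‖v‖ < 1 ∧ ‖u‖ ≤ ‖v‖ ∧ ∀ γ ∈ Γ, γ ∉ E →
      ∀ q ∈ S, ‖p γ q.1 / p γ₀ q.1‖ ≤ ‖v‖ := by
    obtain ⟨v, hv1, hv2⟩ := exists_norm_bound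
      (insert u ((hfin.toFinset ×ˢ (Γ \ E)).image fun q => p q.2 q.1.1 / p γ₀ q.1.1)) (by
        intro x hx
        rw [Finset.mem_insert, Finset.mem_image] at hx
        rcases hx with rfl | ⟨⟨q, γ⟩, hq, rfl⟩
        · exact hu
        · rw [Finset.mem_product, Set.Finite.mem_toFinset, Finset.mem_sdiff] at hq
          have h1 := harg q.1 hq.1.1 γ₀ hγ₀
          simp only [norm_div]
          exact (div_lt_one (norm_pos_iff.2 h1.1)).2 ((h1.2 γ hq.2.1).2 hq.2.2))
    refine ⟨v, hv1, hv2 u (Finset.mem_insert_self _ _), fun γ hγ hγE q hq => ?_⟩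
    refine hv2 _ (Finset.mem_insert_of_mem (Finset.mem_image.2 ⟨(q, γ), ?_, rfl⟩))
    simp [hγ, hγE, hq]
  let c' : ι' → Ω := fun l => l.elim (u / v) (Sum.elim c fun γ =>
    p γ w₀ / p γ₀ w₀ * τ (-((γ.1.2 - χ₀) w₀)) * if γ.1 ∈ E then 1 else v⁻¹)
  -- the bounds by `v` hold at the zeros and are convex conditions, hence persist on the convex hull
  let D₁ : Set W := convexHull ℚ (Prod.fst '' S)
  have hD₁ : D₁ ⊆ D := convexHull_min (by rintro _ ⟨q, hq, rfl⟩; exact hq.1) hD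
  have hpar0 : ∀ w, par a' τ c' w none = u / v := by
    intro w
    simp [par, a', c', hτ.zero]
  have hparl : ∀ w, par a' τ c' w ∘ g = par a τ c w := fun w => rfl
  have hparγ : ∀ w (γ : Γ), par a' τ c' w (some (Sum.inr γ)) =
      p γ w / p γ₀ w * if γ.1 ∈ E then 1 else v⁻¹ := by
    intro w γ
    rw [hquot]
    simp only [par, a', c', Option.elim, Sum.elim_inr]
    ring
  have hbd : ∀ w ∈ D₁, ∀ γ ∈ Γ, γ ∉ E → ‖p γ w / p γ₀ w‖ ≤ ‖v‖ := by
    intro w hw γ hγ hγE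
    rw [hquot]
    exact convexHull_min (t := {w | ‖p γ w₀ / p γ₀ w₀ * τ (-((γ.2 - χ₀) w₀)) * τ ((γ.2 - χ₀) w)‖ ≤ ‖v‖})
      (by
        rintro _ ⟨q, hq, rfl⟩
        rw [Set.mem_ofPred_eq, ← hquot]
        exact hvmax.2 γ hγ hγE q hq) (convex_norm_le hτ _ _ _) hw
  have hpar' : ∀ w ∈ D₁, ∀ l, ‖par a' τ c' w l‖ ≤ 1 := by
    intro w hw l
    rcases l with _ | l | γ
    · rw [hpar0]
      exact norm_div_le_one_of_le hvmax.1
    · exact hpar w (hD₁ hw) l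
    · rw [hparγ]
      split_ifs with h
      · rw [mul_one]
        exact norm_div_le_one_of_le ((harg w (hD₁ hw) γ₀ hγ₀).2 γ γ.2).1
      · rw [← div_eq_mul_inv]
        exact norm_div_le_one_of_le (hbd w hw γ γ.2 h)
  have hΨH : ∀ w ∈ D₁, ∀ (z : Fin n → Ω) (hz : ∀ j, ‖z j‖ ≤ 1) (y : Ω) (hy : ‖y‖ ≤ 1),
      evf (Polynomial.eval₂RingHom (evR φ₀ n (par a' τ c' w) z) y) v H =
      (p γ₀ w)⁻¹ * evf (evR φ₀ (n + 1) (par a τ c w) (Fin.cons y fun i => y ^ r ^ ((i : ℕ) + 1) + z i))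
        u (∑ γ ∈ Γ, PowerSeries.map C (P γ) *
      (PowerSeries.C (monomial γ.1 1) + PowerSeries.X * Q γ)) := by
    intro w hw z hz y hy
    have hcons : ∀ j, ‖(Fin.cons y fun i => y ^ r ^ ((i : ℕ) + 1) + z i : Fin (n + 1) → Ω) j‖ ≤ 1 :=
      norm_cons_le r hz hy
    rw [evf_decomposition hφ₀ Γ P _ (hpar w (hD₁ hw)) hcons hu, Finset.mul_sum,
      ← Finset.sum_coe_sort Γ]
    have hb := norm_eval₂_le _ (norm_evR_le φ₀ hφ₀ (hpar' w hw) hz) hy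
    rw [← evs_eq_evf _ hb v hv, map_sum]
    refine Finset.sum_congr rfl fun γ _ => ?_
    rw [map_mul, evs_eq_evf _ hb v hv (tr _), htr, hparl, hpar0, mul_comm (u / v),
      mul_div_cancel_of_norm_le hvmax.1, ← mul_assoc]
    congr 1
    have hx : evs _ hb v hv (PowerSeries.C (Polynomial.C (x γ))) =
        par a' τ c' w (some (Sum.inr γ)) := by
      simp [x, evR]
    change _ = (p γ₀ w)⁻¹ * p γ w
    by_cases h2 : γ.1 = γ₀
    · simp only [e, h2, if_true, map_one]
      rw [inv_mul_cancel₀ (harg w (hD₁ hw) γ₀ hγ₀).1]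
    · by_cases h3 : γ.1 ∈ E
      · simp only [e, h2, h3, if_true, if_false]
        rw [hx, hparγ, if_pos h3]
        ring
      · simp only [e, h2, h3, if_false]
        rw [map_mul, hx, hparγ, if_neg h3, evs_X, ← div_eq_mul_inv,
          mul_div_cancel_of_norm_le (hbd w hw γ γ.2 h3)]
        ring
  let φ : W × (Fin (n + 1) → Ω) → W × (Fin n → Ω) := fun q =>
    (q.1, fun i => q.2 i.succ - q.2 0 ^ r ^ ((i : ℕ) + 1))
  have hJ' : ∀ w ∈ D₁, ∀ (z : Fin n → Ω) (hz : ∀ j, ‖z j‖ ≤ 1) (y : Ω) (hy : ‖y‖ ≤ 1),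
      (∀ f ∈ J', evf (Polynomial.eval₂RingHom (evR φ₀ n (par a' τ c' w) z) y) v f = 0) ↔
      (w, (Fin.cons y fun i => y ^ r ^ ((i : ℕ) + 1) + z i : Fin (n + 1) → Ω)) ∈ S := by
    intro w hw z hz y hy
    have hcons : ∀ j, ‖(Fin.cons y fun i => y ^ r ^ ((i : ℕ) + 1) + z i : Fin (n + 1) → Ω) j‖ ≤ 1 :=
      norm_cons_le r hz hy
    have huv : u / v * v = u := by rw [mul_comm, mul_div_cancel_of_norm_le hvmax.1]
    constructor
    · intro h
      refine ⟨hD₁ hw, hcons, fun f hf => ?_⟩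
      have := h (tr f) (Ideal.mem_sup_right (Ideal.mem_map_of_mem _ hf))
      rwa [htr, hparl, hpar0, huv] at this
    · intro h
      have hb := norm_eval₂_le _ (norm_evR_le φ₀ hφ₀ (hpar' w hw) hz) hy
      have hle : J' ≤ RingHom.ker (evs _ hb v hv) := by
        refine sup_le ?_ ?_
        · rw [Ideal.span_le, Set.singleton_subset_iff, SetLike.mem_coe, RingHom.mem_ker,
            evs_eq_evf, hΨH w hw z hz y hy, h.2.2 _ hFJ, mul_zero]
        · rw [Ideal.map_le_iff_le_comap]
          intro f hf
          rw [Ideal.mem_comap, RingHom.mem_ker, evs_eq_evf, htr, hparl, hpar0, huv]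
          exact h.2.2 f hf
      exact fun f hf => hle hf
  have hφcons : ∀ z : Fin (n + 1) → Ω, (Fin.cons (z 0) fun i : Fin n =>
      z 0 ^ r ^ ((i : ℕ) + 1) + (z i.succ - z 0 ^ r ^ ((i : ℕ) + 1)) : Fin (n + 1) → Ω) = z := by
    intro z
    funext j
    refine Fin.cases ?_ (fun i => ?_) j <;> simp
  have hφz : ∀ q ∈ S, ∀ i : Fin n, ‖q.2 i.succ - q.2 0 ^ r ^ ((i : ℕ) + 1)‖ ≤ 1 := by
    intro q hq i
    refine (norm_sub_le_max' _ _).trans (max_le (hq.2.1 _) ?_)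
    rw [norm_pow]
    exact pow_le_one₀ (norm_nonneg _) (hq.2.1 0)
  -- by Weierstrass projection every zero of the contracted ideal lifts to a zero of `J'`
  have himg : φ '' S = Sol φ₀ a' (J'.comap (PowerSeries.map Polynomial.C)) v τ c' D₁ := by
    have hC : ∀ (t : ι' → Ω) (z : Fin n → Ω) (y : Ω) f,
        evf (Polynomial.eval₂RingHom (evR φ₀ n t z) y) v (PowerSeries.map Polynomial.C f) =
        evf (evR φ₀ n t z) v f := by
      intro t z y f
      rw [evf_map]
      congr 1
      refine RingHom.ext fun b => ?_
      simp
    ext ⟨w, z⟩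
    constructor
    · rintro ⟨⟨w', z'⟩, hq, h⟩
      have hw' : w' ∈ D₁ := subset_convexHull ℚ _ ⟨_, hq, rfl⟩
      simp only [φ, Prod.mk.injEq] at h
      obtain ⟨rfl, rfl⟩ := h
      have hz : ∀ i : Fin n, ‖z' i.succ - z' 0 ^ r ^ ((i : ℕ) + 1)‖ ≤ 1 := hφz _ hq
      refine ⟨hw', hz, fun f hf => ?_⟩
      have h2 := (hJ' w' hw' _ hz (z' 0) (hq.2.1 0)).2 (by rwa [hφcons z'])
      rw [← hC _ _ (z' 0)]
      exact h2 _ hf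
    · rintro ⟨hw, hz, hf⟩
      obtain ⟨y, hy, h⟩ := (hs (evR φ₀ n (par a' τ c' w) z) (norm_evR_le φ₀ hφ₀ (hpar' w hw) hz)
        v hv).2 hf
      refine ⟨_, (hJ' w hw z hz y hy).1 h, ?_⟩
      simp [φ]
  refine ncard_le_mul_of_fibres S hfin φ s N ?_ ?_
  · rintro ⟨w, z⟩
    rcases Set.eq_empty_or_nonempty {x ∈ S | φ x = (w, z)} with he | ⟨⟨w', z'⟩, hq, hφ⟩
    · simp [he]
    have hw : w ∈ D₁ := subset_convexHull ℚ _ ⟨_, hq, (congrArg Prod.fst hφ :)⟩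
    have hz : ∀ j, ‖z j‖ ≤ 1 := by
      have h2 := hφz _ hq
      have h3 : (fun i : Fin n => z' i.succ - z' 0 ^ r ^ ((i : ℕ) + 1)) = z :=
        (congrArg Prod.snd hφ :)
      intro j
      rw [← h3]
      exact h2 j
    have hfib := (hs (evR φ₀ n (par a' τ c' w) z) (norm_evR_le φ₀ hφ₀ (hpar' w hw) hz) v hv).1
    have hfin2 := Set.finite_of_encard_le_coe hfib
    rw [← hfin2.cast_ncard_eq] at hfib
    refine le_trans ?_ (ENat.natCast_le_natCast.1 hfib)
    refine Set.ncard_le_ncard_of_injOn (fun q => q.2 0) ?_ ?_ hfin2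
    · rintro ⟨w₁, z₁⟩ ⟨h1, h2⟩
      simp only [φ, Prod.mk.injEq] at h2
      obtain ⟨rfl, rfl⟩ := h2
      exact ⟨h1.2.1 0, (hJ' w₁ hw _ hz (z₁ 0) (h1.2.1 0)).2 (by rwa [hφcons z₁])⟩
    · rintro ⟨w₁, z₁⟩ ⟨h1, h2⟩ ⟨w₂, z₂⟩ ⟨h3, h4⟩ h5
      rw [← h4] at h2
      simp only [φ, Prod.mk.injEq] at h2
      rw [Prod.mk.injEq]
      refine ⟨h2.1, ?_⟩
      have h5' : z₁ 0 = z₂ 0 := h5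
      rw [← hφcons z₁, ← hφcons z₂]
      congr 1
      funext i
      have h6 := congrFun h2.2 i
      rw [h6, h5']
  · have := hfin.image φ
    rw [himg] at this ⊢
    exact hN v τ c' D₁ hv hτ (convex_convexHull _ _) hpar' trivial this

end Dominant

/-! ### The uniform bound -/

section Induction

variable {Ω : Type*} [NontriviallyNormedField Ω] [IsUltrametricDist Ω] [CompleteSpace Ω]
variable {C₀ : Type*} [CommRing C₀] {φ₀ : C₀ →+* Ω}

theorem HasBound.mono {W ι : Type*} [AddCommGroup W] [Module ℚ W] {a : ι → Module.Dual ℚ W} {n : ℕ}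
    {J : Ideal (PowerSeries (MvPolynomial (Fin n) (MvPolynomial ι C₀)))}
    {P Q : Ω → (ℚ → Ω) → (ι → Ω) → Set W → Prop} (h : HasBound φ₀ a J P)
    (hPQ : ∀ u τ c D, IsScale τ → Q u τ c D → P u τ c D) : HasBound φ₀ a J Q := by
  obtain ⟨N, hN⟩ := h
  exact ⟨N, fun u τ c D hu hτ hD hpar hQ => hN u τ c D hu hτ hD hpar (hPQ u τ c D hτ hQ)⟩

/-- Without variables `z`, a power series with a dominant coefficient has no zeros. -/
theorem hasBound_of_isArgmax_zero (hφ₀ : ∀ x, ‖φ₀ x‖ ≤ 1)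
    {W : Type} [AddCommGroup W] [Module ℚ W] {ι : Type} (a : ι → Module.Dual ℚ W)
    (J : Ideal (PowerSeries (MvPolynomial (Fin 0) (MvPolynomial ι C₀))))
    (Γ E : Finset ((Fin 0 →₀ ℕ) × Module.Dual ℚ W))
    (P : (Fin 0 →₀ ℕ) × Module.Dual ℚ W → PowerSeries (MvPolynomial ι C₀))
    (Q : (Fin 0 →₀ ℕ) × Module.Dual ℚ W →
      PowerSeries (MvPolynomial (Fin 0) (MvPolynomial ι C₀)))
    (hFJ : ∑ γ ∈ Γ, PowerSeries.map C (P γ) *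
      (PowerSeries.C (monomial γ.1 1) + PowerSeries.X * Q γ) ∈ J)
    (hE : E ⊆ Γ) (hEne : E.Nonempty) (χ₀ : Module.Dual ℚ W) (hχ₀ : ∀ γ ∈ E, γ.2 = χ₀) :
    HasBound φ₀ a J (IsArgmax φ₀ a Γ E P) := by
  classical
  refine ⟨0, fun u τ c D hu hτ hD hpar harg hfin => ?_⟩
  suffices Sol φ₀ a J u τ c D = ∅ by simp [this]
  rw [Set.eq_empty_iff_forall_notMem]
  rintro ⟨w, z⟩ ⟨hw, hz, hf⟩
  obtain ⟨γ₀, hγ₀⟩ := hEne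
  have h0 := hf _ hFJ
  simp only at hw hz h0
  rw [evf_decomposition hφ₀ Γ P _ (hpar w hw) hz hu, ← Finset.add_sum_erase _ _ (hE hγ₀)] at h0
  have hb := norm_evR_le φ₀ hφ₀ (hpar w hw) hz
  have hR : ∀ γ : (Fin 0 →₀ ℕ) × Module.Dual ℚ W, evf (evR φ₀ 0 (par a τ c w) z) u
      (PowerSeries.C (monomial γ.1 1) + PowerSeries.X * Q γ) =
      1 + u * evs _ hb u hu (Q γ) := by
    intro γ
    rw [← evs_eq_evf _ hb u hu, map_add, map_mul, evs_X, evs_C, Subsingleton.elim γ.1 0]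
    simp
  have hR1 : ∀ γ : (Fin 0 →₀ ℕ) × Module.Dual ℚ W, ‖1 + u * evs _ hb u hu (Q γ)‖ = 1 := by
    intro γ
    have h1 : ‖u * evs _ hb u hu (Q γ)‖ < ‖(1 : Ω)‖ := by
      rw [norm_mul, norm_one]
      exact mul_lt_one_of_nonneg_of_lt_one_left (norm_nonneg _) hu (norm_evs_le _ _ _ _ _)
    rw [IsUltrametricDist.norm_add_eq_max_of_norm_ne_norm h1.ne', max_eq_left h1.le, norm_one]
  have harg0 := harg w hw γ₀ hγ₀
  have hlt : ‖∑ γ ∈ Γ.erase γ₀, evf (eval₂Hom φ₀ (par a τ c w)) u (P γ) *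
      evf (evR φ₀ 0 (par a τ c w) z) u
      (PowerSeries.C (monomial γ.1 1) + PowerSeries.X * Q γ)‖ <
      ‖evf (eval₂Hom φ₀ (par a τ c w)) u (P γ₀)‖ := by
    rcases (Γ.erase γ₀).eq_empty_or_nonempty with he | hne
    · rw [he, Finset.sum_empty, norm_zero, norm_pos_iff]
      exact harg0.1
    · obtain ⟨γ, hγ, hle⟩ := IsUltrametricDist.exists_norm_finsetSum_le_of_nonempty hne
        (fun γ => evf (eval₂Hom φ₀ (par a τ c w)) u (P γ) *
          evf (evR φ₀ 0 (par a τ c w) z) u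
          (PowerSeries.C (monomial γ.1 1) + PowerSeries.X * Q γ))
      refine hle.trans_lt ?_
      rw [hR, norm_mul, hR1, mul_one]
      obtain ⟨h1, h2⟩ := Finset.mem_erase.1 hγ
      refine (harg0.2 γ h2).2 fun h3 => h1 ?_
      refine Prod.ext (Subsingleton.elim _ _) ?_
      rw [hχ₀ γ h3, hχ₀ γ₀ hγ₀]
  rw [add_eq_zero_iff_eq_neg] at h0
  rw [← norm_neg, ← h0, norm_mul, hR, hR1, mul_one] at hlt
  exact lt_irrefl _ hlt

/-- On a set where coefficients of different weights have the same norm, the difference of the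
weights is constant. -/
theorem const_of_isArgmax {W ι κ : Type*} [AddCommGroup W] [Module ℚ W]
    {a : ι → Module.Dual ℚ W} {Γ E : Finset κ} (hE : E ⊆ Γ)
    {P : κ → PowerSeries (MvPolynomial ι C₀)} {χ : κ → Module.Dual ℚ W}
    (hP : ∀ γ i, IsWeightedHomogeneous a (PowerSeries.coeff i (P γ)) (χ γ))
    {u : Ω} {τ : ℚ → Ω} {c : ι → Ω} {D : Set W} (hτ : IsScale τ) (h : IsArgmax φ₀ a Γ E P u τ c D)
    {γ γ' : κ} (hγ : γ ∈ E) (hγ' : γ' ∈ E) {w w' : W} (hw : w ∈ D) (hw' : w' ∈ D) :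
    (χ γ - χ γ') w = (χ γ - χ γ') w' := by
  have heq : ∀ v ∈ D, ‖evf (eval₂Hom φ₀ (par a τ c v)) u (P γ)‖ =
      ‖evf (eval₂Hom φ₀ (par a τ c v)) u (P γ')‖ := fun v hv =>
    le_antisymm ((h v hv γ' hγ').2 γ (hE hγ)).1 ((h v hv γ hγ).2 γ' (hE hγ')).1
  have h1 := heq w hw
  rw [evf_par_of_isWeightedHomogeneous hτ c u (hP γ) w w',
    evf_par_of_isWeightedHomogeneous hτ c u (hP γ') w w', norm_mul, norm_mul, heq w' hw'] at h1
  have h2 := mul_right_cancel₀ (norm_ne_zero_iff.2 (h w' hw' γ' hγ').1) h1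
  have h3 := hτ.strictAnti.injective h2
  simp only [map_sub, LinearMap.sub_apply] at h3 ⊢
  linarith

/-- The norm of a quotient of two coefficients is monotone in a linear functional of `w`, so that
bounding it is a convex condition. -/
theorem convex_isArgmax {W ι κ : Type*} [AddCommGroup W] [Module ℚ W]
    {a : ι → Module.Dual ℚ W} {Γ E : Finset κ}
    {P : κ → PowerSeries (MvPolynomial ι C₀)} {χ : κ → Module.Dual ℚ W}
    (hP : ∀ γ i, IsWeightedHomogeneous a (PowerSeries.coeff i (P γ)) (χ γ))
    {u : Ω} {τ : ℚ → Ω} {c : ι → Ω} (hτ : IsScale τ) :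
    Convex ℚ {w | IsArgmax φ₀ a Γ E P u τ c {w}} := by
  have key : ∀ γ γ' w₀ w, evf (eval₂Hom φ₀ (par a τ c w₀)) u (P γ) ≠ 0 →
      ‖evf (eval₂Hom φ₀ (par a τ c w)) u (P γ')‖ / ‖evf (eval₂Hom φ₀ (par a τ c w)) u (P γ)‖ =
      ‖(evf (eval₂Hom φ₀ (par a τ c w₀)) u (P γ') / evf (eval₂Hom φ₀ (par a τ c w₀)) u (P γ) /
        τ ((χ γ' - χ γ) w₀)) * τ ((χ γ' - χ γ) w)‖ := by
    intro γ γ' w₀ w h0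
    rw [evf_par_of_isWeightedHomogeneous hτ c u (hP γ) w w₀,
      evf_par_of_isWeightedHomogeneous hτ c u (hP γ') w w₀, ← norm_div]
    have : (χ γ' - χ γ) w = (χ γ' - χ γ) w₀ + χ γ' (w - w₀) - χ γ (w - w₀) := by
      simp only [map_sub, LinearMap.sub_apply]
      ring
    rw [this, hτ.sub, hτ.add]
    congr 1
    have h1 := hτ.ne_zero ((χ γ' - χ γ) w₀)
    have h2 := hτ.ne_zero (χ γ (w - w₀))
    field_simp
  intro x hx y hy s t hs ht hst w hw γ hγ
  rw [Set.mem_singleton_iff] at hw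
  have hx' := hx x rfl γ hγ
  have hy' := hy y rfl γ hγ
  have hne : ∀ w, evf (eval₂Hom φ₀ (par a τ c w)) u (P γ) ≠ 0 := by
    intro w
    rw [evf_par_of_isWeightedHomogeneous hτ c u (hP γ) w x]
    exact mul_ne_zero (hτ.ne_zero _) hx'.1
  refine ⟨hne w, fun γ' hγ' => ⟨?_, fun hγ'E => ?_⟩⟩
  · rw [← div_le_one (norm_pos_iff.2 (hne w)), key γ γ' x w (hne x), hw]
    refine convex_norm_le hτ (χ γ' - χ γ) _ 1 ?_ ?_ hs ht hst
    · rw [Set.mem_ofPred_eq, ← key γ γ' x x (hne x), div_le_one (norm_pos_iff.2 (hne x))]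
      exact (hx'.2 γ' hγ').1
    · rw [Set.mem_ofPred_eq, ← key γ γ' x y (hne x), div_le_one (norm_pos_iff.2 (hne y))]
      exact (hy'.2 γ' hγ').1
  · rw [← div_lt_one (norm_pos_iff.2 (hne w)), key γ γ' x w (hne x), hw]
    refine convex_norm_lt hτ (χ γ' - χ γ) _ 1 ?_ ?_ hs ht hst
    · rw [Set.mem_ofPred_eq, ← key γ γ' x x (hne x), div_lt_one (norm_pos_iff.2 (hne x))]
      exact (hx'.2 γ' hγ').2 hγ'E
    · rw [Set.mem_ofPred_eq, ← key γ γ' x y (hne x), div_lt_one (norm_pos_iff.2 (hne y))]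
      exact (hy'.2 γ' hγ').2 hγ'E

/-- The bound for zeros when some coefficient `P γ` of a decomposed element of `J` does not vanish
identically. The domain is partitioned according to the set `E` of dominant coefficients. If these
have the same weight, a variable is eliminated (without variables there are no zeros at all); if
not, `D` lies in a hyperplane. -/
theorem hasBound_of_ne_zero [IsAlgClosed Ω] (hφ₀ : ∀ x, ‖φ₀ x‖ ≤ 1) {k n : ℕ}
    (hk : UniformBound (C₀ := C₀) φ₀ k n)
    (hn : ∀ n', n = n' + 1 → UniformBound (C₀ := C₀) φ₀ (k + 1) n')
    {W : Type} [AddCommGroup W] [Module ℚ W] [Module.Finite ℚ W] (hW : Module.finrank ℚ W < k + 1)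
    {ι : Type} [Finite ι] (a : ι → Module.Dual ℚ W)
    (J : Ideal (PowerSeries (MvPolynomial (Fin n) (MvPolynomial ι C₀))))
    (Γ : Finset ((Fin n →₀ ℕ) × Module.Dual ℚ W))
    (P : (Fin n →₀ ℕ) × Module.Dual ℚ W → PowerSeries (MvPolynomial ι C₀))
    (Q : (Fin n →₀ ℕ) × Module.Dual ℚ W →
      PowerSeries (MvPolynomial (Fin n) (MvPolynomial ι C₀)))
    (hP : ∀ γ i, IsWeightedHomogeneous a (PowerSeries.coeff i (P γ)) γ.2)
    (hFJ : ∑ γ ∈ Γ, PowerSeries.map C (P γ) *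
      (PowerSeries.C (monomial γ.1 1) + PowerSeries.X * Q γ) ∈ J) :
    HasBound φ₀ a J fun u τ c D =>
      ∃ γ ∈ Γ, ∃ w ∈ D, evf (eval₂Hom φ₀ (par a τ c w)) u (P γ) ≠ 0 := by
  classical
  have hE : ∀ E : Finset ((Fin n →₀ ℕ) × Module.Dual ℚ W), ∃ N : ℕ, E ⊆ Γ → E.Nonempty →
      ∀ (u : Ω) (τ : ℚ → Ω) (c : ι → Ω) (D : Set W), ‖u‖ < 1 → IsScale τ → Convex ℚ D →
      (∀ w ∈ D, ∀ l, ‖par a τ c w l‖ ≤ 1) → IsArgmax φ₀ a Γ E P u τ c D →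
      (Sol φ₀ a J u τ c D).Finite → (Sol φ₀ a J u τ c D).ncard ≤ N := by
    intro E
    by_cases h : E ⊆ Γ ∧ E.Nonempty
    swap
    · exact ⟨0, fun h1 h2 => absurd ⟨h1, h2⟩ h⟩
    suffices HasBound φ₀ a J (IsArgmax φ₀ a Γ E P) by
      obtain ⟨N, hN⟩ := this
      exact ⟨N, fun _ _ => hN⟩
    by_cases hχ : ∃ χ₀, ∀ γ ∈ E, γ.2 = χ₀
    · obtain ⟨χ₀, hχ₀⟩ := hχ
      rcases n with _ | n
      · exact hasBound_of_isArgmax_zero hφ₀ a J Γ E P Q hFJ h.1 h.2 χ₀ hχ₀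
      · exact hasBound_of_isArgmax hφ₀ (hn n rfl) hW a J Γ E P Q hP hFJ h.1 h.2 χ₀ hχ₀
    · obtain ⟨γ, hγ⟩ := h.2
      push Not at hχ
      obtain ⟨γ', hγ', hne⟩ := hχ γ.2
      refine (hasBound_of_const hk hW a J (γ'.2 - γ.2) (sub_ne_zero.2 hne)).mono ?_
      intro u τ c D hτ harg w hw w' hw'
      exact const_of_isArgmax h.1 hP hτ harg hγ' hγ hw hw'
  choose N hN using hE
  refine ⟨∑ E ∈ Γ.powerset, N E, fun u τ c D hu hτ hD hpar ⟨γ, hγ, w₀, hw₀, hne⟩ hfin => ?_⟩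
  set p : (Fin n →₀ ℕ) × Module.Dual ℚ W → W → Ω :=
    fun γ w => evf (eval₂Hom φ₀ (par a τ c w)) u (P γ) with hp
  let DE : Finset ((Fin n →₀ ℕ) × Module.Dual ℚ W) → Set W := fun E =>
    {w ∈ D | E.Nonempty ∧ IsArgmax φ₀ a Γ E P u τ c {w}}
  have hsub : Sol φ₀ a J u τ c D ⊆ ⋃ E ∈ Γ.powerset, Sol φ₀ a J u τ c (DE E) := by
    rintro ⟨w, z⟩ ⟨hw, hz, hf⟩
    obtain ⟨γ₁, hγ₁, hmax⟩ := Γ.exists_max_image (fun γ => ‖p γ w‖) ⟨γ, hγ⟩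
    have hpos : p γ w ≠ 0 := by
      have := evf_par_of_isWeightedHomogeneous (φ₀ := φ₀) hτ c u (hP γ) w w₀
      simp only [hp, this]
      exact mul_ne_zero (hτ.ne_zero _) hne
    rw [Set.mem_iUnion₂]
    refine ⟨Γ.filter (fun γ' => ‖p γ' w‖ = ‖p γ₁ w‖), Finset.mem_powerset.2 (Finset.filter_subset _ _),
      ⟨hw, ⟨γ₁, by simp [hγ₁]⟩, ?_⟩, hz, hf⟩
    intro w' hw' γ₂ hγ₂
    rw [Set.mem_singleton_iff] at hw'
    subst hw'
    rw [Finset.mem_filter] at hγ₂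
    refine ⟨?_, fun γ' hγ' => ⟨?_, fun h => ?_⟩⟩
    · change p γ₂ w' ≠ 0
      rw [← norm_pos_iff, hγ₂.2]
      exact (norm_pos_iff.2 hpos).trans_le (hmax γ hγ)
    · exact (hmax γ' hγ').trans hγ₂.2.ge
    · refine lt_of_lt_of_eq ?_ hγ₂.2.symm
      refine lt_of_le_of_ne (hmax γ' hγ') fun h' => h ?_
      rw [Finset.mem_filter]
      exact ⟨hγ', h'⟩
  have hmono : ∀ E, Sol φ₀ a J u τ c (DE E) ⊆ Sol φ₀ a J u τ c D := by
    rintro E ⟨w, z⟩ ⟨hw, hz⟩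
    exact ⟨hw.1, hz⟩
  have hfinE : ∀ E, (Sol φ₀ a J u τ c (DE E)).Finite := fun E => hfin.subset (hmono E)
  calc (Sol φ₀ a J u τ c D).ncard
      ≤ (⋃ E ∈ Γ.powerset, Sol φ₀ a J u τ c (DE E)).ncard := by
        refine Set.ncard_le_ncard hsub ?_
        exact Set.Finite.biUnion (Finset.finite_toSet _) fun E _ => hfinE E
    _ ≤ ∑ E ∈ Γ.powerset, (Sol φ₀ a J u τ c (DE E)).ncard := Finset.set_ncard_biUnion_le _ _
    _ ≤ ∑ E ∈ Γ.powerset, N E := by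
        refine Finset.sum_le_sum fun E hE => ?_
        by_cases hne : E.Nonempty
        · refine hN E (Finset.mem_powerset.1 hE) hne u τ c (DE E) hu hτ ?_
            (fun w hw => hpar w hw.1) ?_ (hfinE E)
          · have heq : {w | E.Nonempty ∧ IsArgmax φ₀ a Γ E P u τ c {w}} =
                {w | IsArgmax φ₀ a Γ E P u τ c {w}} := by
              ext w
              simp [hne]
            have hc : Convex ℚ {w | E.Nonempty ∧ IsArgmax φ₀ a Γ E P u τ c {w}} := by
              rw [heq]
              exact convex_isArgmax hP hτ
            exact hD.inter hc
          · intro w hw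
            exact hw.2.2 w rfl
        · have : Sol φ₀ a J u τ c (DE E) = ∅ := by
            ext p
            simp [Sol, DE, hne]
          simp [this]

theorem infinite_closedBall : {x : Ω | ‖x‖ ≤ 1}.Infinite := by
  obtain ⟨x, hx0, hx1⟩ := NormedField.exists_norm_lt_one Ω
  refine Set.infinite_of_injective_forall_mem (f := fun k : ℕ => x ^ k) ?_ fun k => ?_
  · intro i j hij
    have : ‖x‖ ^ i = ‖x‖ ^ j := by
      rw [← norm_pow, ← norm_pow]
      exact congrArg _ hij
    exact (pow_right_strictAnti₀ hx0 hx1).injective this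
  · rw [Set.mem_ofPred_eq, norm_pow]
    exact pow_le_one₀ (norm_nonneg _) hx1.le

theorem subsingleton_of_convex_of_finite {W : Type*} [AddCommGroup W] [Module ℚ W] {D : Set W}
    (hD : Convex ℚ D) (hfin : D.Finite) : D.Subsingleton := by
  intro x hx y hy
  by_contra hne
  have h : Set.Icc (0 : ℚ) 1 ⊆ (AffineMap.lineMap x y : ℚ →ᵃ[ℚ] W) ⁻¹' D := fun t ht =>
    hD.lineMap_mem hx hy ht
  refine Set.Icc_infinite (zero_lt_one' ℚ) ((hfin.preimage ?_).subset h)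
  exact (AffineMap.lineMap_injective ℚ hne).injOn

/-- The induction step. Each generator of the ideal is decomposed. If some coefficient is not
identically zero on `D`, `hasBound_of_ne_zero` applies; otherwise every point of `D × O ^ n` is a
zero, and finiteness leaves at most one. -/
theorem uniformBound_succ [IsAlgClosed Ω] [IsNoetherianRing C₀] (hφ₀ : ∀ x, ‖φ₀ x‖ ≤ 1) {k n : ℕ}
    (hk : UniformBound (C₀ := C₀) φ₀ k n)
    (hn : ∀ n', n = n' + 1 → UniformBound (C₀ := C₀) φ₀ (k + 1) n') :
    UniformBound (C₀ := C₀) φ₀ (k + 1) n := by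
  classical
  intro W _ _ _ hW ι _ a J
  haveI : IsNoetherianRing (PowerSeries (MvPolynomial (Fin n) (MvPolynomial ι C₀))) := inferInstance
  obtain ⟨T, rfl⟩ := (isNoetherianRing_iff_ideal_fg _).1 this J
  choose Γ P Q hP hF using fun F : PowerSeries (MvPolynomial (Fin n) (MvPolynomial ι C₀)) =>
    exists_bihomogeneous_decomposition (n := n) a F
  have hb := fun F (hFT : F ∈ T) => hasBound_of_ne_zero hφ₀ hk hn hW a (Ideal.span T) (Γ F) (P F) (Q F)
    (hP F) (by rw [← hF F]; exact Ideal.subset_span hFT)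
  have hb' : ∀ F, ∃ N : ℕ, F ∈ T → ∀ (u : Ω) (τ : ℚ → Ω) (c : ι → Ω) (D : Set W), ‖u‖ < 1 →
      IsScale τ → Convex ℚ D → (∀ w ∈ D, ∀ l, ‖par a τ c w l‖ ≤ 1) →
      (∃ γ ∈ Γ F, ∃ w ∈ D, evf (eval₂Hom φ₀ (par a τ c w)) u (P F γ) ≠ 0) →
      (Sol φ₀ a (Ideal.span (T : Set (PowerSeries (MvPolynomial (Fin n) (MvPolynomial ι C₀))))) u τ c D).Finite → (Sol φ₀ a (Ideal.span (T : Set (PowerSeries (MvPolynomial (Fin n) (MvPolynomial ι C₀))))) u τ c D).ncard ≤ N := by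
    intro F
    by_cases hFT : F ∈ T
    · obtain ⟨N, hN⟩ := hb F hFT
      exact ⟨N, fun _ => hN⟩
    · exact ⟨0, fun h => absurd h hFT⟩
  choose N hN using hb'
  refine ⟨1 + ∑ F ∈ T, N F, fun u τ c D hu hτ hD hpar _ hfin => ?_⟩
  by_cases hcase : ∃ F ∈ T, ∃ γ ∈ Γ F, ∃ w ∈ D, evf (eval₂Hom φ₀ (par a τ c w)) u (P F γ) ≠ 0
  · obtain ⟨F, hFT, h⟩ := hcase
    have h1 := hN F hFT u τ c D hu hτ hD hpar h hfin
    have h2 := Finset.single_le_sum (f := N) (fun _ _ => Nat.zero_le _) hFT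
    omega
  · -- all coefficients vanish, so that every point of `D × O ^ n` is a zero
    push Not at hcase
    have hall : ∀ w ∈ D, ∀ z : Fin n → Ω, (∀ j, ‖z j‖ ≤ 1) →
        (w, z) ∈ Sol φ₀ a (Ideal.span (T : Set (PowerSeries (MvPolynomial (Fin n) (MvPolynomial ι C₀))))) u τ c D := by
      intro w hw z hz
      refine ⟨hw, hz, ?_⟩
      have hle : Ideal.span (T : Set _) ≤
          RingHom.ker (evs _ (norm_evR_le φ₀ hφ₀ (hpar w hw) hz) u hu) := by
        rw [Ideal.span_le]
        intro F hFT
        rw [SetLike.mem_coe, RingHom.mem_ker, evs_eq_evf, hF F,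
          evf_decomposition hφ₀ _ _ _ (hpar w hw) hz hu]
        refine Finset.sum_eq_zero fun γ hγ => ?_
        rw [hcase F hFT γ hγ w hw, zero_mul]
      exact fun f hf => hle hf
    suffices (Sol φ₀ a (Ideal.span (T : Set (PowerSeries (MvPolynomial (Fin n) (MvPolynomial ι C₀))))) u τ c D).Subsingleton by
      haveI hfin_type := hfin.to_subtype
      have := Set.ncard_le_one_iff_subsingleton.2 this
      omega
    have hDsub : D.Subsingleton := by
      refine subsingleton_of_convex_of_finite hD ((hfin.image Prod.fst).subset ?_)
      intro w hw
      exact ⟨(w, 0), hall w hw 0 (by simp), rfl⟩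
    rcases n with _ | n
    · rintro ⟨w, z⟩ h ⟨w', z'⟩ h'
      exact Prod.ext (hDsub h.1 h'.1) (Subsingleton.elim _ _)
    · have hDe : D = ∅ := by
        rw [Set.eq_empty_iff_forall_notMem]
        intro w hw
        refine infinite_closedBall (Ω := Ω) ((hfin.image fun q => q.2 0).subset ?_)
        intro x hx
        exact ⟨(w, fun _ => x), hall w hw _ fun _ => hx, rfl⟩
      rintro ⟨w, z⟩ h
      exact absurd h.1 (hDe ▸ Set.notMem_empty w)

/-- Double induction on the dimension of the parameter space and on the number of variables. -/
theorem uniformBound [IsAlgClosed Ω] [IsNoetherianRing C₀] (hφ₀ : ∀ x, ‖φ₀ x‖ ≤ 1) (k n : ℕ) :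
    UniformBound (C₀ := C₀) φ₀ k n := by
  induction k generalizing n with
  | zero => exact fun W _ _ _ h => absurd h (Nat.not_lt_zero _)
  | succ k ihk =>
    induction n with
    | zero => exact uniformBound_succ hφ₀ (ihk 0) fun n' h => absurd h (by omega)
    | succ n ihn =>
      refine uniformBound_succ hφ₀ (ihk _) fun n' h => ?_
      obtain rfl : n = n' := by omega
      exact ihn

end Induction

/-! ### Sparse systems in a coset -/

section SparseSystems

/-- The numbers `2 ^ i / i!` are `2`-adic integers. -/
theorem exists_two_pow_div_factorial (i : ℕ) : ∃ κ : ℤ_[2], κ * (i.factorial : ℤ_[2]) = 2 ^ i := by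
  have hne : ((i.factorial : ℕ) : ℤ_[2]) ≠ 0 := by exact_mod_cast i.factorial_ne_zero
  have h1 : padicValNat 2 i.factorial ≤ i := by
    have := sub_one_mul_padicValNat_factorial (p := 2) i
    omega
  have hq := PadicInt.unitCoeff_spec hne
  have hval : ((i.factorial : ℕ) : ℤ_[2]).valuation = padicValNat 2 i.factorial := by
    have := PadicInt.valuation_coe ((i.factorial : ℕ) : ℤ_[2])
    rw [PadicInt.coe_natCast, Padic.valuation_natCast] at this
    exact_mod_cast this.symm
  rw [hval] at hq
  refine ⟨((PadicInt.unitCoeff hne)⁻¹ : ℤ_[2]ˣ) * 2 ^ (i - padicValNat 2 i.factorial), ?_⟩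
  have h3 : (2 : ℤ_[2]) ^ i = 2 ^ (i - padicValNat 2 i.factorial) * 2 ^ padicValNat 2 i.factorial := by
    rw [← pow_add, Nat.sub_add_cancel h1]
  have h4 : (((PadicInt.unitCoeff hne)⁻¹ : ℤ_[2]ˣ) : ℤ_[2]) * (PadicInt.unitCoeff hne : ℤ_[2]) = 1 :=
    Units.inv_mul _
  rw [h3]
  linear_combination ((((PadicInt.unitCoeff hne)⁻¹ : ℤ_[2]ˣ) : ℤ_[2]) *
    2 ^ (i - padicValNat 2 i.factorial)) * hq +
    2 ^ (i - padicValNat 2 i.factorial) * 2 ^ padicValNat 2 i.factorial * h4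

variable {Ω : Type*} [NontriviallyNormedField Ω] [IsUltrametricDist Ω] [CompleteSpace Ω]

/-- The power series `(1 + u z) ^ a₀ * ∑ κ i * (b)_i * (z + z ^ 2) ^ i * u ^ i` in `u`, where `(b)_i`
is the falling factorial and `z` is the `j`-th variable. For `κ i = 2 ^ i / i!` its value at `u = 2`
is `(1 + 2 z) ^ a₀ * (1 + 4 (z + z ^ 2)) ^ b = (1 + 2 z) ^ (a₀ + 2 b)`. Its coefficients are
polynomial in `b`, so that the exponent becomes a parameter. -/
noncomputable def binomSeries {n : ℕ} {ι : Type*} (κ : ℕ → ℤ_[2]) (a₀ : ℕ) (b : ι) (j : Fin n) :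
    PowerSeries (MvPolynomial (Fin n) (MvPolynomial ι ℤ_[2])) :=
  (1 + PowerSeries.X * PowerSeries.C (X j)) ^ a₀ * PowerSeries.mk fun i =>
    C (C (κ i) * (descPochhammer (MvPolynomial ι ℤ_[2]) i).eval (X b)) * (X j + X j ^ 2) ^ i

theorem evs_binomSeries {n : ℕ} {ι : Type*} (κ : ℕ → ℤ_[2])
    (hκ : ∀ i, κ i * (i.factorial : ℤ_[2]) = 2 ^ i) (a₀ : ℕ) (b : ι) (j : Fin n)
    (φ₀ : ℤ_[2] →+* Ω) (t : ι → Ω) (z : Fin n → Ω)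
    (hb : ∀ p, ‖evR φ₀ n t z p‖ ≤ 1) (h2 : ‖(2 : Ω)‖ < 1) (β : ℕ) (hβ : t b = β) :
    evs _ hb 2 h2 (binomSeries κ a₀ b j) = (1 + 2 * z j) ^ (a₀ + 2 * β) := by
  have hd : ∀ i, evR φ₀ n t z (C (C (κ i) * (descPochhammer (MvPolynomial ι ℤ_[2]) i).eval (X b)) *
      (X j + X j ^ 2) ^ i) = φ₀ (κ i) * (β.descFactorial i : ℕ) * (z j + z j ^ 2) ^ i := by
    intro i
    have h1 : eval₂Hom φ₀ t ((descPochhammer (MvPolynomial ι ℤ_[2]) i).eval (X b)) =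
        (β.descFactorial i : ℕ) := by
      rw [← descPochhammer_eval_eq_descFactorial, ← hβ, Polynomial.eval, Polynomial.hom_eval₂,
        ← Polynomial.eval_map, RingHom.comp_id, descPochhammer_map]
      simp
    simp only [evR, map_mul, coe_eval₂Hom, eval₂_C, map_pow, map_add, eval₂_X] at h1 ⊢
    rw [h1]
  have hs : evs _ hb 2 h2 (PowerSeries.mk fun i =>
      C (C (κ i) * (descPochhammer (MvPolynomial ι ℤ_[2]) i).eval (X b)) * (X j + X j ^ 2) ^ i) =
      (1 + 2 * z j) ^ (2 * β) := by
    rw [evs_apply, tsum_eq_sum (s := Finset.range (β + 1))]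
    · have h3 : (1 + 2 * z j) ^ (2 * β) = (4 * (z j + z j ^ 2) + 1) ^ β := by
        rw [pow_mul]
        congr 1
        ring
      rw [h3, add_pow]
      refine Finset.sum_congr rfl fun i _ => ?_
      rw [PowerSeries.coeff_mk, hd, Nat.descFactorial_eq_factorial_mul_choose]
      have h4 : φ₀ (κ i) * (i.factorial : Ω) = 2 ^ i := by
        have := congrArg φ₀ (hκ i)
        rw [map_mul, map_natCast, map_pow, map_ofNat] at this
        exact this
      push_cast
      rw [← mul_assoc, h4, one_pow, mul_one, mul_pow, show (4 : Ω) = 2 * 2 by norm_num, mul_pow]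
      ring
    · intro i hi
      rw [Finset.mem_range, not_lt] at hi
      rw [PowerSeries.coeff_mk, hd, Nat.descFactorial_eq_zero_iff_lt.2 (by omega)]
      simp
  rw [binomSeries, map_mul, hs, pow_add]
  simp [evR]

/-- If `k` equations in monomials indexed by `L` have finitely many zeros, the number of zeros in the
coset `τ(ℚ ^ n) ε (1 + 2 O) ^ n` is bounded, uniformly in the exponents `α`, the coefficients `c`,
the scale `τ` and the coset representative `ε`. -/
theorem exists_coset_bound [IsAlgClosed Ω] (φ₀ : ℤ_[2] →+* Ω) (hφ₀ : ∀ x, ‖φ₀ x‖ ≤ 1)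
    (h2 : ‖(2 : Ω)‖ < 1) (h20 : (2 : Ω) ≠ 0) (n k : ℕ) (L : Type) [Fintype L] [Nonempty L] :
    ∃ N : ℕ, ∀ (α : L → Fin n → ℕ) (c : Fin k → L → Ω) (τ : ℚ → Ω) (ε : Fin n → Ω), IsScale τ →
      (∀ j, ε j ≠ 0) → {x : Fin n → Ω | ∀ i, ∑ l, c i l * ∏ j, x j ^ α l j = 0}.Finite →
      {x : Fin n → Ω | (∀ i, ∑ l, c i l * ∏ j, x j ^ α l j = 0) ∧ ∃ (w : Fin n → ℚ) (z : Fin n → Ω),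
        (∀ j, ‖z j‖ ≤ 1) ∧ ∀ j, x j = τ (w j) * ε j * (1 + 2 * z j)}.ncard ≤ N := by
  classical
  choose κ hκ using exists_two_pow_div_factorial
  -- parameters: half the exponents, and in each equation the quotients of the terms by one of them;
  -- `W` contains, besides `w`, the values `∑ j, α l j * w j`, so that the weights of the parameters do
  -- not depend on the exponents
  let ι := (L × Fin n) ⊕ (Fin k × L)
  let W := (Fin n → ℚ) × (L → ℚ)
  let a : (Fin k → L) → ι → Module.Dual ℚ W := fun μ => Sum.elim 0 fun p =>
    (LinearMap.proj (R := ℚ) (φ := fun _ : L => ℚ) p.2 - LinearMap.proj (μ p.1)).comp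
      (LinearMap.snd ℚ (Fin n → ℚ) (L → ℚ))
  let row : (L → Fin n → Fin 2) → Fin k →
      PowerSeries (MvPolynomial (Fin n) (MvPolynomial ι ℤ_[2])) := fun a₀ i =>
    ∑ l, PowerSeries.C (C (X (Sum.inr (i, l)))) *
      ∏ j, binomSeries κ (a₀ l j : ℕ) (Sum.inl (l, j)) j
  have hB := fun (a₀ : L → Fin n → Fin 2) (μ : Fin k → L) =>
    uniformBound (Ω := Ω) hφ₀ (Module.finrank ℚ W + 1) n W (Nat.lt_succ_self _) ι (a μ)
      (Ideal.span (Set.range (row a₀)))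
  choose N hN using hB
  refine ⟨∑ a₀, ∑ μ, N a₀ μ, fun α c τ ε hτ hε hfin => ?_⟩
  set Z := {x : Fin n → Ω | ∀ i, ∑ l, c i l * ∏ j, x j ^ α l j = 0} with hZ
  -- the parities of the exponents
  let a₀ : L → Fin n → Fin 2 := fun l j => ⟨α l j % 2, Nat.mod_lt _ (by norm_num)⟩
  let e : L → Ω := fun l => ∏ j, ε j ^ α l j
  have he : ∀ l, e l ≠ 0 := fun l => Finset.prod_ne_zero_iff.2 fun j _ => pow_ne_zero _ (hε j)
  let c' : (Fin k → L) → ι → Ω := fun μ => Sum.elim (fun p => ((α p.1 p.2 / 2 : ℕ) : Ω))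
    fun p => c p.1 p.2 * e p.2 / (c p.1 (μ p.1) * e (μ p.1))
  -- the points at which the term `μ i` dominates the `i`-th equation
  let D : (Fin k → L) → Set W := fun μ =>
    {p | (∀ l, p.2 l = ∑ j, α l j * p.1 j) ∧ ∀ i l, ‖par (a μ) τ (c' μ) p (Sum.inr (i, l))‖ ≤ 1}
  let pt : W × (Fin n → Ω) → Fin n → Ω := fun q j => τ (q.1.1 j) * ε j * (1 + 2 * q.2 j)
  -- excludes choices for which the division by `c i (μ i)` yields a junk value
  let good : (Fin k → L) → Prop := fun μ => ∀ i, c i (μ i) = 0 → ∀ l, c i l = 0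
  have hparl : ∀ μ w l j, par (a μ) τ (c' μ) w (Sum.inl (l, j)) = ((α l j / 2 : ℕ) : Ω) := by
    intro μ w l j
    simp [par, a, c', hτ.zero]
  have hparr : ∀ μ w i l, par (a μ) τ (c' μ) w (Sum.inr (i, l)) =
      c i l * e l / (c i (μ i) * e (μ i)) * τ (w.2 l - w.2 (μ i)) := by
    intro μ w i l
    rfl
  have hD : ∀ μ, Convex ℚ (D μ) := by
    intro μ x hx y hy s t hs ht hst
    refine ⟨fun l => ?_, fun i l => ?_⟩
    · change s * x.2 l + t * y.2 l = ∑ j, (α l j : ℚ) * (s * x.1 j + t * y.1 j)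
      rw [hx.1 l, hy.1 l, Finset.mul_sum, Finset.mul_sum, ← Finset.sum_add_distrib]
      refine Finset.sum_congr rfl fun j _ => ?_
      ring
    · exact convex_norm_le hτ (a μ (Sum.inr (i, l))) (c' μ (Sum.inr (i, l))) 1
        (hx.2 i l) (hy.2 i l) hs ht hst
  have hpar : ∀ μ, ∀ w ∈ D μ, ∀ l, ‖par (a μ) τ (c' μ) w l‖ ≤ 1 := by
    rintro μ w hw (⟨l, j⟩ | ⟨i, l⟩)
    · rw [hparl]
      exact IsUltrametricDist.norm_natCast_le_one Ω _
    · exact hw.2 i l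
  have hone : ∀ x : Ω, ‖x‖ ≤ 1 → ‖1 + 2 * x‖ = 1 := by
    intro x hx
    have h1 : ‖2 * x‖ < ‖(1 : Ω)‖ := by
      rw [norm_mul, norm_one]
      exact mul_lt_one_of_nonneg_of_lt_one_left (norm_nonneg _) h2 hx
    rw [IsUltrametricDist.norm_add_eq_max_of_norm_ne_norm h1.ne', max_eq_left h1.le, norm_one]
  have hrow : ∀ μ, good μ → ∀ q : W × (Fin n → Ω), q.1 ∈ D μ → (∀ j, ‖q.2 j‖ ≤ 1) →
      (q ∈ Sol φ₀ (a μ) (Ideal.span (Set.range (row a₀))) 2 τ (c' μ) (D μ) ↔ pt q ∈ Z) := by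
    intro μ hμ q hqD hqz
    have hb := norm_evR_le φ₀ hφ₀ (hpar μ q.1 hqD) hqz
    have hev : ∀ i, evs _ hb 2 h2 (row a₀ i) = ∑ l, c i l * e l / (c i (μ i) * e (μ i)) *
        τ (q.1.2 l - q.1.2 (μ i)) * ∏ j, (1 + 2 * q.2 j) ^ α l j := by
      intro i
      simp only [row, map_sum, map_mul, map_prod]
      refine Finset.sum_congr rfl fun l _ => ?_
      congr 1
      · rw [evs_C, ← hparr]
        simp [evR]
      · refine Finset.prod_congr rfl fun j _ => ?_
        rw [evs_binomSeries κ hκ _ _ j φ₀ _ q.2 hb h2 (α l j / 2) (hparl μ q.1 l j)]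
        congr 1
        exact Nat.mod_add_div _ _
    have hpt : ∀ i, ∑ l, c i l * ∏ j, pt q j ^ α l j =
        c i (μ i) * e (μ i) * τ (q.1.2 (μ i)) * evs _ hb 2 h2 (row a₀ i) := by
      intro i
      rw [hev, Finset.mul_sum]
      refine Finset.sum_congr rfl fun l _ => ?_
      have h3 : ∏ j, pt q j ^ α l j = τ (q.1.2 l) * e l * ∏ j, (1 + 2 * q.2 j) ^ α l j := by
        rw [hqD.1 l, hτ.sum, ← Finset.prod_mul_distrib, ← Finset.prod_mul_distrib]
        refine Finset.prod_congr rfl fun j _ => ?_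
        rw [hτ.nsmul, ← mul_pow, ← mul_pow]
      rw [h3, hτ.sub]
      by_cases h0 : c i (μ i) = 0
      · simp [hμ i h0 l]
      · have h4 := he (μ i)
        have h5 := hτ.ne_zero (q.1.2 (μ i))
        field_simp
    constructor
    · intro hq i
      rw [hpt]
      have := hq.2.2 _ (Ideal.subset_span ⟨i, rfl⟩)
      rw [evs_eq_evf, this, mul_zero]
    · intro hq
      refine ⟨hqD, hqz, ?_⟩
      have hle : Ideal.span (Set.range (row a₀)) ≤ RingHom.ker (evs _ hb 2 h2) := by
        rw [Ideal.span_le]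
        rintro _ ⟨i, rfl⟩
        rw [SetLike.mem_coe, RingHom.mem_ker]
        by_cases h0 : c i (μ i) = 0
        · rw [hev]
          refine Finset.sum_eq_zero fun l _ => ?_
          simp [hμ i h0 l]
        · have h5 := hq i
          rw [hpt] at h5
          exact (mul_eq_zero.1 h5).resolve_left
            (mul_ne_zero (mul_ne_zero h0 (he _)) (hτ.ne_zero _))
      exact fun f hf => hle hf
  have hinj : ∀ μ, Set.InjOn pt (Sol φ₀ (a μ) (Ideal.span (Set.range (row a₀))) 2 τ (c' μ) (D μ)) := by
    rintro μ ⟨⟨w, v⟩, z⟩ hq ⟨⟨w', v'⟩, z'⟩ hq' h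
    have hw : w = w' := by
      funext j
      have h3 := congrArg norm (congrFun h j)
      simp only [pt, norm_mul, hone _ (hq.2.1 j), hone _ (hq'.2.1 j), mul_one] at h3
      exact hτ.strictAnti.injective (mul_right_cancel₀ (norm_ne_zero_iff.2 (hε j)) h3)
    subst hw
    have hv : v = v' := by
      funext l
      have h4 := hq.1.1 l
      have h5 := hq'.1.1 l
      simp only at h4 h5
      rw [h4, h5]
    subst hv
    have hz : z = z' := by
      funext j
      have h3 := congrFun h j
      simp only [pt] at h3
      have h4 := mul_left_cancel₀ (mul_ne_zero (hτ.ne_zero _) (hε j)) h3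
      exact mul_left_cancel₀ h20 (add_left_cancel h4)
    rw [hz]
  have hcover : {x : Fin n → Ω | (∀ i, ∑ l, c i l * ∏ j, x j ^ α l j = 0) ∧
      ∃ (w : Fin n → ℚ) (z : Fin n → Ω),
        (∀ j, ‖z j‖ ≤ 1) ∧ ∀ j, x j = τ (w j) * ε j * (1 + 2 * z j)} ⊆
      ⋃ μ ∈ Finset.univ.filter good,
        pt '' Sol φ₀ (a μ) (Ideal.span (Set.range (row a₀))) 2 τ (c' μ) (D μ) := by
    rintro x ⟨hx, w, z, hz, hxw⟩
    let v : L → ℚ := fun l => ∑ j, α l j * w j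
    have hmax : ∀ i, ∃ l₀, ∀ l, ‖c i l * e l * τ (v l)‖ ≤ ‖c i l₀ * e l₀ * τ (v l₀)‖ := by
      intro i
      exact Finite.exists_max fun l => ‖c i l * e l * τ (v l)‖
    choose μ hμ using hmax
    have hgood : good μ := by
      intro i h0 l
      have := hμ i l
      rw [h0, zero_mul, zero_mul, norm_zero, norm_le_zero_iff] at this
      exact (mul_eq_zero.1 ((mul_eq_zero.1 this).resolve_right (hτ.ne_zero _))).resolve_right (he l)
    have hwD : ((w, v) : W) ∈ D μ := by
      refine ⟨fun l => rfl, fun i l => ?_⟩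
      rw [hparr]
      refine le_of_eq_of_le (congrArg norm ?_) (norm_div_le_one_of_le (hμ i l))
      simp only [hτ.sub]
      rw [div_mul_div_comm]
    have hpt : pt ((w, v), z) = x := by
      funext j
      exact (hxw j).symm
    rw [Set.mem_iUnion₂]
    refine ⟨μ, by simpa using hgood, ((w, v), z), ?_, hpt⟩
    rw [hrow μ hgood _ hwD hz, hpt]
    exact hx
  have hfinμ : ∀ μ, good μ →
      (Sol φ₀ (a μ) (Ideal.span (Set.range (row a₀))) 2 τ (c' μ) (D μ)).Finite := by
    intro μ hμ
    refine Set.Finite.of_finite_image (hfin.subset ?_) (hinj μ)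
    rintro _ ⟨q, hq, rfl⟩
    exact (hrow μ hμ q hq.1 hq.2.1).1 hq
  refine (Set.ncard_le_ncard hcover ?_).trans ?_
  · exact Set.Finite.biUnion (Finset.finite_toSet _) fun μ hμ =>
      (hfinμ μ (Finset.mem_filter.1 hμ).2).image _
  refine (Finset.set_ncard_biUnion_le _ _).trans ?_
  refine le_trans ?_ (Finset.single_le_sum (f := fun a₀ => ∑ μ, N a₀ μ) (fun _ _ => Nat.zero_le _)
    (Finset.mem_univ a₀))
  refine (Finset.sum_le_sum fun μ hμ => ?_).trans
    (Finset.sum_le_sum_of_subset (Finset.filter_subset good Finset.univ))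
  have hf := hfinμ μ (Finset.mem_filter.1 hμ).2
  exact (Set.ncard_image_le hf).trans
    (hN a₀ μ 2 τ (c' μ) (D μ) h2 hτ (hD μ) (hpar μ) trivial hf)

end SparseSystems

/-! ### Points of a variety near a given point -/

section PointsNear

open Asymptotics in
/-- If the monic polynomials `p_y` depend polynomially on `y`, roots `r y` of `p_y` stay bounded
near `y₀`, and `p_{y₀} (r y)` tends to zero. -/
theorem isBigO_one_and_tendsto_of_root {F : Type*} [NontriviallyNormedField F] {σ : Type*} [Finite σ]
    (p : Polynomial (MvPolynomial σ F)) (hp : p.Monic) (y₀ : σ → F) (r : (σ → F) → F)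
    (hr : ∀ y, (p.map (eval y)).eval (r y) = 0) :
    r =O[𝓝 y₀] (fun _ => (1 : ℝ)) ∧
      Tendsto (fun y => (p.map (eval y₀)).eval (r y)) (𝓝 y₀) (𝓝 0) := by
  have hb : ∀ y, ‖r y‖ ≤ 1 + ∑ i ∈ Finset.range p.natDegree, ‖eval y (p.coeff i)‖ := by
    intro y
    by_contra! h
    have h0 : 0 ≤ ∑ i ∈ Finset.range p.natDegree, ‖eval y (p.coeff i)‖ :=
      Finset.sum_nonneg fun _ _ => norm_nonneg _
    have h1 : 1 < ‖r y‖ := by linarith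
    have h2 := hr y
    rw [Polynomial.eval_map, Polynomial.eval₂_eq_sum_range, Finset.sum_range_succ,
      hp.coeff_natDegree, map_one, one_mul, add_comm, ← sub_neg_eq_add, sub_eq_zero] at h2
    have hd : p.natDegree ≠ 0 := by
      intro h0
      rw [h0] at h2
      simp at h2
    have h3 : ‖r y‖ ^ p.natDegree ≤
        (∑ i ∈ Finset.range p.natDegree, ‖eval y (p.coeff i)‖) * ‖r y‖ ^ (p.natDegree - 1) := by
      rw [← norm_pow, h2, norm_neg, Finset.sum_mul]
      refine (norm_sum_le _ _).trans (Finset.sum_le_sum fun i hi => ?_)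
      rw [norm_mul, norm_pow]
      refine mul_le_mul_of_nonneg_left (pow_le_pow_right₀ h1.le ?_) (norm_nonneg _)
      have := Finset.mem_range.1 hi
      omega
    obtain ⟨d, hd'⟩ := Nat.exists_eq_succ_of_ne_zero hd
    rw [hd'] at h3 h
    simp only [Nat.succ_eq_add_one, pow_succ, Nat.add_sub_cancel] at h3 h
    have h4 : 0 < ‖r y‖ ^ d := by positivity
    nlinarith
  have hc : ∀ i, Continuous fun y : σ → F => eval y (p.coeff i) := fun i =>
    MvPolynomial.continuous_eval _
  have hO : r =O[𝓝 y₀] (fun _ => (1 : ℝ)) := by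
    have h1 : (fun y => 1 + ∑ i ∈ Finset.range p.natDegree, ‖eval y (p.coeff i)‖) =O[𝓝 y₀]
        (fun _ => (1 : ℝ)) := by
      refine Tendsto.isBigO_one ℝ (c := 1 + ∑ i ∈ Finset.range p.natDegree, ‖eval y₀ (p.coeff i)‖) ?_
      refine Continuous.tendsto ?_ _
      exact continuous_const.add (continuous_finsetSum _ fun i _ => (hc i).norm)
    refine IsBigO.trans (IsBigO.of_bound 1 (Eventually.of_forall fun y => ?_)) h1
    rw [one_mul]
    exact (hb y).trans (le_abs_self _)
  refine ⟨hO, ?_⟩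
  have h1 : (fun y => (p.map (eval y₀)).eval (r y)) = fun y =>
      ∑ i ∈ Finset.range (p.natDegree + 1),
        (eval y₀ (p.coeff i) - eval y (p.coeff i)) * r y ^ i := by
    funext y
    have h2 := hr y
    rw [Polynomial.eval_map, Polynomial.eval₂_eq_sum_range] at h2 ⊢
    simp only [sub_mul, Finset.sum_sub_distrib, h2, sub_zero]
  rw [h1]
  refine (isLittleO_one_iff ℝ).1 ?_
  refine IsLittleO.fun_sum fun i _ => ?_
  have h2 : (fun y => eval y₀ (p.coeff i) - eval y (p.coeff i)) =o[𝓝 y₀] (fun _ => (1 : ℝ)) := by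
    refine (isLittleO_one_iff ℝ).2 ?_
    have := (continuous_const.sub (hc i)).tendsto (f := fun y => eval y₀ (p.coeff i) - eval y (p.coeff i)) y₀
    simpa using this
  simpa using h2.mul_isBigO (hO.pow i)

/-- Over an algebraically closed field, some root of a monic polynomial is at distance at most
`|p(x)|^(1/deg p)` from a given point `x`. -/
theorem exists_root_norm_sub_pow_le {F : Type*} [NormedField F] [IsAlgClosed F] (p : Polynomial F)
    (hp : p.Monic) (hd : p.natDegree ≠ 0) (x : F) :
    ∃ r, p.eval r = 0 ∧ ‖r - x‖ ^ p.natDegree ≤ ‖p.eval x‖ := by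
  classical
  have hs := IsAlgClosed.splits p
  have hcard : p.roots.card = p.natDegree := hs.natDegree_eq_card_roots.symm
  have hne : p.roots.toFinset.Nonempty := by
    rw [Multiset.toFinset_nonempty]
    intro h
    rw [h] at hcard
    exact hd hcard.symm
  obtain ⟨r, hr, hmin⟩ := Finset.exists_min_image p.roots.toFinset (fun r => ‖r - x‖) hne
  refine ⟨r, Polynomial.isRoot_of_mem_roots (Multiset.mem_toFinset.1 hr), ?_⟩
  have h1 : p.eval x = (p.roots.map fun a => x - a).prod := by
    conv_lhs => rw [hs.eq_prod_roots_of_monic hp, Polynomial.eval_multiset_prod, Multiset.map_map]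
    simp
  have h2 : ‖p.eval x‖ = (p.roots.map fun a => ‖a - x‖).prod := by
    rw [h1]
    rw [← normHom_apply, map_multiset_prod, Multiset.map_map]
    congr 1
    refine Multiset.map_congr rfl fun a _ => ?_
    exact norm_sub_rev x a
  rw [h2, ← hcard, ← Multiset.prod_replicate, ← Multiset.map_const']
  exact Multiset.prod_map_le_prod_map₀ _ _ (fun _ _ => norm_nonneg _)
    fun a ha => hmin a (Multiset.mem_toFinset.2 ha)

/-- For an integral extension `A ⊆ B` of domains with `A` integrally closed, a point `y` of `A` and
a root `r` of the specialised minimal polynomial of `b ∈ B` come from a point of `B`. -/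
theorem exists_lift_of_minpoly_root {A B F : Type*} [CommRing A] [IsDomain A] [IsIntegrallyClosed A]
    [CommRing B] [IsDomain B] [Algebra A B] [Algebra.IsIntegral A B] [Module.IsTorsionFree A B]
    [Field F] [IsAlgClosed F] (b : B) (y : A →+* F) (r : F)
    (hr : ((minpoly A b).map y).eval r = 0) :
    ∃ Φ : B →+* F, Φ.comp (algebraMap A B) = y ∧ Φ b = r := by
  have hb : IsIntegral A b := Algebra.IsIntegral.isIntegral b
  obtain ⟨Φ, hΦ⟩ := exists_lift_of_isIntegral (Polynomial.aeval (R := A) b).toRingHom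
    (fun x => by
      obtain ⟨q, hq, hq0⟩ := Algebra.IsIntegral.isIntegral (R := A) x
      refine ⟨q.map Polynomial.C, hq.map _, ?_⟩
      rw [Polynomial.eval₂_map]
      convert hq0 using 2
      ext a
      simp) (Polynomial.eval₂RingHom y r) (by
      rw [minpoly.ker_eval hb, Ideal.span_singleton_le_iff_mem, RingHom.mem_ker]
      rwa [Polynomial.eval_map] at hr)
  refine ⟨Φ, ?_, ?_⟩
  · ext a
    have := congrArg (fun f => f (Polynomial.C a)) hΦ
    simpa using this
  · have := congrArg (fun f => f Polynomial.X) hΦ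
    simpa using this

theorem tendsto_zero_of_norm_pow {α F : Type*} [NormedField F] {l : Filter α} {f : α → F} {d : ℕ}
    (h : Tendsto (fun y => ‖f y‖ ^ d) l (𝓝 0)) : Tendsto f l (𝓝 0) := by
  rw [NormedAddGroup.tendsto_nhds_zero]
  intro ε hε
  filter_upwards [h.eventually_lt_const (pow_pos hε d)] with y hy
  exact lt_of_pow_lt_pow_left₀ d hε.le hy

open Asymptotics in
theorem isBigO_one_prod {α F κ : Type*} [NormedField F] {l : Filter α} (t : Finset κ)
    (f : κ → α → F) (h : ∀ i, f i =O[l] (fun _ => (1 : ℝ))) :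
    (fun y => ∏ i ∈ t, f i y) =O[l] (fun _ => (1 : ℝ)) := by
  classical
  induction t using Finset.induction_on with
  | empty => simpa using isBigO_refl (fun _ : α => (1 : ℝ)) l |>.norm_left
  | insert i t hi ih =>
    simp only [Finset.prod_insert hi]
    simpa using (h i).mul ih

open Asymptotics in
/-- If `B` is a domain integral over `F[y₁, …, y_s]` to which `F[x]` maps, then near the image `ζ`
of a point of `B` there are images of points of `B` at which a given nonzero `h` does not vanish. -/
theorem frequently_of_isIntegral {F : Type*} [NontriviallyNormedField F] [IsAlgClosed F]
    {σ : Type*} [Fintype σ] {s : ℕ} {B : Type*} [CommRing B] [IsDomain B]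
    (g : MvPolynomial (Fin s) F →+* B) (ginj : Function.Injective g) (gint : g.IsIntegral)
    (mk : MvPolynomial σ F →+* B) (hgC' : ∀ c, g (C c) = mk (C c)) (ζB : B →+* F) (ζ : σ → F)
    (hζ : ∀ f, ζB (mk f) = eval ζ f) (h : MvPolynomial σ F) (hh : mk h ≠ 0) :
    ∃ᶠ x in 𝓝 ζ, (∀ f, mk f = 0 → eval x f = 0) ∧ eval x h ≠ 0 := by
  classical
  letI : Algebra (MvPolynomial (Fin s) F) B := g.toAlgebra
  haveI : Algebra.IsIntegral (MvPolynomial (Fin s) F) B := ⟨gint⟩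
  haveI : Module.IsTorsionFree (MvPolynomial (Fin s) F) B :=
    Module.isTorsionFree_iff_algebraMap_injective.2 ginj
  have hgC : ∀ c, algebraMap (MvPolynomial (Fin s) F) B (C c) = mk (C c) := hgC'
  let y₀ : Fin s → F := fun i => ζB (algebraMap (MvPolynomial (Fin s) F) B (X i))
  have hy₀ : ζB.comp (algebraMap (MvPolynomial (Fin s) F) B) = eval y₀ := by
    refine MvPolynomial.ringHom_ext (fun c => ?_) fun i => ?_
    · rw [RingHom.comp_apply, hgC, hζ]
      simp
    · simp [y₀]
  have hpt : ∀ (y : Fin s → F) (Φ : B →+* F),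
      Φ.comp (algebraMap (MvPolynomial (Fin s) F) B) = eval y →
      Φ.comp mk = eval fun j => Φ (mk (X j)) := by
    intro y Φ hΦ
    refine MvPolynomial.ringHom_ext (fun c => ?_) fun i => ?_
    · have := congrArg (fun f => f (C c)) hΦ
      simp only [RingHom.comp_apply] at this
      rw [hgC, eval_C] at this
      simpa using this
    · simp
  let p : B → Polynomial (MvPolynomial (Fin s) F) := fun b => minpoly _ b
  have hpm : ∀ b, (p b).Monic := fun b => minpoly.monic (Algebra.IsIntegral.isIntegral b)
  have hroot : ∀ b (y : Fin s → F) (Φ : B →+* F),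
      Φ.comp (algebraMap (MvPolynomial (Fin s) F) B) = eval y →
      ((p b).map (eval y)).eval (Φ b) = 0 := by
    intro b y Φ hΦ
    rw [← hΦ, ← Polynomial.map_map, Polynomial.eval_map, Polynomial.eval₂_hom,
      Polynomial.eval_map, ← Polynomial.aeval_def, minpoly.aeval, map_zero]
  -- the part of the specialised minimal polynomial of each coordinate prime to its value at `ζ`
  have hq : ∀ j, ∃ q : Polynomial F, q.eval (ζ j) ≠ 0 ∧ ∃ a : ℕ,
      (p (mk (X j))).map (eval y₀) = (Polynomial.X - Polynomial.C (ζ j)) ^ a * q := by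
    intro j
    have h0 : (p (mk (X j))).map (eval y₀) ≠ 0 := ((hpm _).map _).ne_zero
    obtain ⟨q, hq, hdvd⟩ := Polynomial.exists_eq_pow_rootMultiplicity_mul_and_not_dvd _ h0 (ζ j)
    exact ⟨q, fun h => hdvd (Polynomial.dvd_iff_isRoot.2 h), _, hq⟩
  choose q hqζ a hpq using hq
  let e : MvPolynomial σ F := ∏ j, Polynomial.aeval (X j) (q j)
  have heval : ∀ x : σ → F, eval x e = ∏ j, (q j).eval (x j) := by
    intro x
    simp only [e, map_prod]
    refine Finset.prod_congr rfl fun j _ => ?_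
    rw [Polynomial.aeval_def, Polynomial.hom_eval₂, eval_X, MvPolynomial.algebraMap_eq,
      show (eval x).comp C = RingHom.id F from RingHom.ext fun c => eval_C c]
    rfl
  have hΦ : ∀ y : Fin s → F, ∃ Φ : B →+* F,
      Φ.comp (algebraMap (MvPolynomial (Fin s) F) B) = eval y ∧
      ‖Φ (mk e) - eval ζ e‖ ^ (p (mk e)).natDegree ≤ ‖((p (mk e)).map (eval y)).eval (eval ζ e)‖ := by
    intro y
    have hd : ((p (mk e)).map (eval y)).natDegree = (p (mk e)).natDegree := (hpm _).natDegree_map _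
    obtain ⟨r, hr, hr'⟩ := exists_root_norm_sub_pow_le ((p (mk e)).map (eval y)) ((hpm _).map _)
      (by
        rw [hd]
        exact (minpoly.natDegree_pos (Algebra.IsIntegral.isIntegral _)).ne') (eval ζ e)
    obtain ⟨Φ, hΦ, hΦr⟩ := exists_lift_of_minpoly_root (mk e) (eval y) r hr
    rw [hd] at hr'
    exact ⟨Φ, hΦ, by rwa [hΦr]⟩
  choose Φ hΦy hΦe using hΦ
  let x : (Fin s → F) → σ → F := fun y j => Φ y (mk (X j))
  have hΦx : ∀ y f, Φ y (mk f) = eval (x y) f := fun y f =>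
    congrArg (fun φ => φ f) (hpt y (Φ y) (hΦy y))
  have he : Tendsto (fun y => eval (x y) e) (𝓝 y₀) (𝓝 (eval ζ e)) := by
    have h1 : Tendsto (fun y => ‖((p (mk e)).map (eval y)).eval (eval ζ e)‖) (𝓝 y₀) (𝓝 0) := by
      have h2 : Continuous fun y => ((p (mk e)).map (eval y)).eval (eval ζ e) := by
        simp only [Polynomial.eval_map, Polynomial.eval₂_eq_sum_range]
        exact continuous_finsetSum _ fun i _ => (MvPolynomial.continuous_eval _).mul continuous_const
      have h3 := (h2.norm).tendsto y₀
      have h4 := hroot (mk e) y₀ ζB hy₀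
      rw [hζ] at h4
      rwa [h4, norm_zero] at h3
    have h5 : Tendsto (fun y => ‖eval (x y) e - eval ζ e‖ ^ (p (mk e)).natDegree) (𝓝 y₀) (𝓝 0) := by
      refine squeeze_zero (fun _ => by positivity) (fun y => ?_) h1
      rw [← hΦx]
      exact hΦe y
    exact tendsto_sub_nhds_zero_iff.1 (tendsto_zero_of_norm_pow h5)
  have hx : Tendsto x (𝓝 y₀) (𝓝 ζ) := by
    rw [tendsto_pi_nhds]
    intro j
    have hb := fun i => isBigO_one_and_tendsto_of_root (p (mk (X i))) (hpm _) y₀ (fun y => x y i)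
      fun y => hroot _ y (Φ y) (hΦy y)
    have hqO : ∀ i, (fun y => (q i).eval (x y i)) =O[𝓝 y₀] (fun _ => (1 : ℝ)) := by
      intro i
      simp only [Polynomial.eval_eq_sum_range]
      refine IsBigO.fun_sum fun l _ => ?_
      simpa using ((hb i).1.pow l).const_mul_left ((q i).coeff l)
    have hprod : (fun y => ∏ i ∈ Finset.univ.erase j, (q i).eval (x y i)) =O[𝓝 y₀]
        (fun _ => (1 : ℝ)) := isBigO_one_prod _ (fun i y => (q i).eval (x y i)) hqO
    have h1 : Tendsto (fun y => (x y j - ζ j) ^ a j * eval (x y) e) (𝓝 y₀) (𝓝 0) := by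
      have h2 : (fun y => (x y j - ζ j) ^ a j * eval (x y) e) = fun y =>
          ((p (mk (X j))).map (eval y₀)).eval (x y j) *
            ∏ i ∈ Finset.univ.erase j, (q i).eval (x y i) := by
        funext y
        rw [hpq, heval, ← Finset.mul_prod_erase _ _ (Finset.mem_univ j)]
        simp [mul_assoc]
      rw [h2]
      refine (isLittleO_one_iff ℝ).1 ?_
      simpa using ((isLittleO_one_iff ℝ).2 (hb j).2).mul_isBigO hprod
    have heζ : eval ζ e ≠ 0 := by
      rw [heval]
      exact Finset.prod_ne_zero_iff.2 fun i _ => hqζ i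
    have h3 : Tendsto (fun y => (x y j - ζ j) ^ a j) (𝓝 y₀) (𝓝 0) := by
      have h4 := h1.div he heζ
      rw [zero_div] at h4
      refine h4.congr' ?_
      filter_upwards [he.eventually_ne heζ] with y hy
      simp [hy]
    refine tendsto_sub_nhds_zero_iff.1 (tendsto_zero_of_norm_pow (d := a j) ?_)
    simpa using h3.norm
  -- a nonzero polynomial on the base that is a multiple of `h`
  obtain ⟨u, hu0, b, hub⟩ : ∃ u : MvPolynomial (Fin s) F, u ≠ 0 ∧ ∃ b : B,
      algebraMap (MvPolynomial (Fin s) F) B u = mk h * b := by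
    obtain ⟨u, hu, b, hb⟩ := (Algebra.IsIntegral.isIntegral (R := MvPolynomial (Fin s) F)
      (mk h)).isAlgebraic.exists_nonzero_dvd (mem_nonZeroDivisors_of_ne_zero hh)
    exact ⟨u, hu, b, hb⟩
  have hfreq : ∃ᶠ y in 𝓝 y₀, eval y u ≠ 0 := by
    intro hev
    refine hu0 ?_
    simp only [ne_eq, not_not] at hev
    obtain ⟨ε, hε, hball⟩ := Metric.eventually_nhds_iff_ball.1 hev
    refine MvPolynomial.funext_set (fun i => Metric.ball (y₀ i) ε) (fun i => ?_) fun y hy => ?_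
    · exact infinite_of_mem_nhds (y₀ i) (Metric.ball_mem_nhds _ hε)
    · rw [map_zero]
      exact hball y (by
        rw [ball_pi _ hε]
        exact hy)
  refine hx.frequently (hfreq.mono fun y hy => ⟨fun f hf => ?_, fun h0 => hy ?_⟩)
  · rw [← hΦx, hf, map_zero]
  · have := congrArg (fun φ => φ u) (hΦy y)
    simp only [RingHom.comp_apply] at this
    rw [← this, hub, map_mul, hΦx, h0, zero_mul]

/-- Near a point of an irreducible affine variety there are points off a given proper closed
subvariety. -/
theorem frequently_mem_of_isPrime {F : Type*} [NontriviallyNormedField F] [IsAlgClosed F]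
    {σ : Type*} [Finite σ] (P : Ideal (MvPolynomial σ F)) [P.IsPrime] (ζ : σ → F)
    (hζ : ∀ f ∈ P, eval ζ f = 0) (h : MvPolynomial σ F) (hh : h ∉ P) :
    ∃ᶠ x in 𝓝 ζ, (∀ f ∈ P, eval x f = 0) ∧ eval x h ≠ 0 := by
  cases nonempty_fintype σ
  obtain ⟨s, g, ginj, gint⟩ := exists_integral_inj_algHom_of_fg F (MvPolynomial σ F ⧸ P)
  have := frequently_of_isIntegral g.toRingHom ginj gint (Ideal.Quotient.mk P) (fun c => g.commutes c)
    (Ideal.Quotient.lift P (eval ζ) hζ) ζ (fun f => rfl) h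
    (fun h0 => hh (Ideal.Quotient.eq_zero_iff_mem.1 h0))
  exact this.mono fun x hx => ⟨fun f hf => hx.1 f (Ideal.Quotient.eq_zero_iff_mem.2 hf), hx.2⟩

end PointsNear

/-! ### Algebraic isolatedness and square systems -/

section AlgebraicIsolation

/-- Algebraic form of isolatedness of a zero `ζ` of the ideal `I`: in the local ring at `ζ` every
`x_j - ζ_j` is nilpotent modulo `I`. -/
def AlgIsolated {F σ : Type*} [Field F] (I : Ideal (MvPolynomial σ F)) (ζ : σ → F) : Prop :=
  ∀ j, ∃ (g : MvPolynomial σ F) (k : ℕ), eval ζ g ≠ 0 ∧ g * (X j - C (ζ j)) ^ k ∈ I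

/-- If the condition fails for `j`, some prime ideal containing `G` and vanishing at `ζ` does not
contain `x_j - ζ_j`; by `frequently_mem_of_isPrime` there are zeros of `G` other than `ζ`
arbitrarily close to `ζ`. -/
theorem algIsolated_of_isIsolatedRoot {F : Type*} [NontriviallyNormedField F] [IsAlgClosed F]
    {k n : ℕ} (G : Fin k → MvPolynomial (Fin n) F) (ζ : Fin n → F) (h : IsIsolatedRoot G ζ) :
    AlgIsolated (Ideal.span (Set.range G)) ζ := by
  intro j
  by_contra! hcon
  let M : Submonoid (MvPolynomial (Fin n) F) :=
    { carrier := {f | ∃ g k, eval ζ g ≠ 0 ∧ f = g * (X j - C (ζ j)) ^ k}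
      one_mem' := ⟨1, 0, by simp, by simp⟩
      mul_mem' := by
        rintro _ _ ⟨g, k, hg, rfl⟩ ⟨g', k', hg', rfl⟩
        refine ⟨g * g', k + k', by simp [hg, hg'], by ring⟩ }
  obtain ⟨P, hP, hIP, hPM⟩ := Ideal.exists_le_prime_disjoint (Ideal.span (Set.range G)) M (by
    rw [Set.disjoint_left]
    rintro _ hf ⟨g, k, hg, rfl⟩
    exact hcon g k hg hf)
  rw [Set.disjoint_left] at hPM
  have hfreq := frequently_mem_of_isPrime P ζ
    (fun f hf => by
      by_contra h0
      exact hPM hf ⟨f, 0, h0, by simp⟩)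
    (X j - C (ζ j)) (fun h0 => hPM h0 ⟨1, 1, by simp, by simp⟩)
  refine hfreq ?_
  have h1 := h.2
  rw [← Filter.empty_mem_iff_bot, mem_nhdsWithin_iff_eventually] at h1
  filter_upwards [h1] with x hx hx'
  refine hx ⟨fun i => hx'.1 _ (hIP (Ideal.subset_span ⟨i, rfl⟩)), ?_⟩
  rintro rfl
  exact hx'.2 (by simp)

theorem AlgIsolated.map {K L σ : Type*} [Field K] [Field L] (φ : K →+* L)
    {I : Ideal (MvPolynomial σ K)} {ζ : σ → K} (h : AlgIsolated I ζ) :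
    AlgIsolated (I.map (MvPolynomial.map φ)) (fun j => φ (ζ j)) := by
  intro j
  obtain ⟨g, k, hg, hgk⟩ := h j
  refine ⟨MvPolynomial.map φ g, k, ?_, ?_⟩
  · have h1 : eval (fun j => φ (ζ j)) (MvPolynomial.map φ g) = φ (eval ζ g) := by
      rw [eval_map, eval, coe_eval₂Hom, eval₂_comp_left]
      rfl
    rw [h1]
    exact fun h0 => hg ((map_eq_zero φ).1 h0)
  · have := Ideal.mem_map_of_mem (MvPolynomial.map φ) hgk
    simpa using this

/-- Descent along a field extension, by applying a linear functional to all coefficients. -/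
theorem AlgIsolated.descend {K L σ κ : Type*} [Field K] [Field L] [Fintype κ] (φ : K →+* L)
    {G : κ → MvPolynomial σ K} {ζ : σ → K}
    (h : AlgIsolated (Ideal.span (Set.range fun i => MvPolynomial.map φ (G i))) fun j => φ (ζ j)) :
    AlgIsolated (Ideal.span (Set.range G)) ζ := by
  classical
  intro j
  obtain ⟨g, k, hg, hgk⟩ := h j
  letI := φ.toAlgebra
  obtain ⟨l, hl⟩ : ∃ l : Module.Dual K L, l (eval (fun j => φ (ζ j)) g) ≠ 0 := by
    by_contra! hcon
    exact hg ((Module.forall_dual_apply_eq_zero_iff K _).1 hcon)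
  have hlmul : ∀ c x, l (φ c * x) = c * l x := fun c x => by
    rw [show φ c * x = c • x from (Algebra.smul_def c x).symm, map_smul, smul_eq_mul]
  obtain ⟨Λ, hΛ⟩ : ∃ Λ : MvPolynomial σ L →+ MvPolynomial σ K,
      ∀ p a, coeff a (Λ p) = l (coeff a p) := by
    refine ⟨((basisMonomials σ K).repr.symm.toLinearMap.toAddMonoidHom).comp
      ((Finsupp.mapRange.addMonoidHom l.toAddMonoidHom).comp
        (basisMonomials σ L).repr.toLinearMap.toAddMonoidHom), ?_⟩
    intro p a
    rfl
  have hmul : ∀ p q, Λ (MvPolynomial.map φ p * q) = p * Λ q := by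
    intro p q
    ext a
    simp only [hΛ, coeff_mul, coeff_map, map_sum, hlmul]
  have heval : ∀ p, eval ζ (Λ p) = l (eval (fun j => φ (ζ j)) p) := by
    intro p
    induction p using MvPolynomial.induction_on' with
    | monomial a c =>
      have h1 : Λ (monomial a c) = monomial a (l c) := by
        classical
        ext b
        rw [hΛ, coeff_monomial, coeff_monomial]
        split_ifs <;> simp
      rw [h1, eval_monomial, eval_monomial, mul_comm c, mul_comm (l c), ← hlmul]
      simp [Finsupp.prod]
    | add p q hp hq => simp [hp, hq]
  refine ⟨Λ g, k, ?_, ?_⟩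
  · rwa [heval]
  · have h1 : Λ g * (X j - C (ζ j)) ^ k = Λ (g * (X j - C (φ (ζ j))) ^ k) := by
      rw [mul_comm, ← hmul, mul_comm g]
      simp
    rw [h1]
    obtain ⟨c, hc⟩ := Ideal.mem_span_range_iff_exists_fun.1 hgk
    rw [← hc, map_sum]
    refine Ideal.sum_mem _ fun i _ => ?_
    rw [mul_comm, hmul, mul_comm]
    exact Ideal.mul_mem_left _ _ (Ideal.subset_span ⟨i, rfl⟩)

theorem AlgIsolated.mem_of_isPrime {F σ : Type*} [Field F] {I : Ideal (MvPolynomial σ F)} {ζ : σ → F}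
    (h : AlgIsolated I ζ) {P : Ideal (MvPolynomial σ F)} [P.IsPrime] (hIP : I ≤ P)
    (hP : ∀ f ∈ P, eval ζ f = 0) (j : σ) : X j - C (ζ j) ∈ P := by
  obtain ⟨g, k, hg, hgk⟩ := h j
  exact Ideal.IsPrime.mem_of_pow_mem inferInstance k
    ((Ideal.IsPrime.mem_or_mem inferInstance (hIP hgk)).resolve_left fun h0 => hg (hP g h0))

theorem sub_C_eval_mem {F σ : Type*} [Field F] {P : Ideal (MvPolynomial σ F)} {ζ : σ → F}
    (h : ∀ j, X j - C (ζ j) ∈ P) (f : MvPolynomial σ F) : f - C (eval ζ f) ∈ P := by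
  rw [← Ideal.Quotient.eq]
  have : Ideal.Quotient.mk P = ((Ideal.Quotient.mk P).comp C).comp (eval ζ) := by
    refine MvPolynomial.ringHom_ext (fun c => ?_) fun j => ?_
    · simp
    · simp only [RingHom.comp_apply, eval_X]
      exact Ideal.Quotient.eq.2 (h j)
  exact congrArg (fun φ => φ f) this

theorem ker_eval_le {F σ : Type*} [Field F] {P : Ideal (MvPolynomial σ F)} {ζ : σ → F}
    (h : ∀ j, X j - C (ζ j) ∈ P) : RingHom.ker (eval ζ) ≤ P := by
  intro f hf
  have := sub_C_eval_mem h f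
  rwa [RingHom.mem_ker.1 hf, C_0, sub_zero] at this

theorem height_ker_eval_le {F : Type*} [Field F] {σ : Type*} [Fintype σ] (ζ : σ → F) :
    (RingHom.ker (eval ζ)).height ≤ Fintype.card σ := by
  classical
  haveI : (RingHom.ker (eval ζ)).IsPrime := RingHom.ker_isPrime _
  have h1 : RingHom.ker (eval ζ) ∈
      (Ideal.span (Finset.univ.image fun j => X j - C (ζ j) : Finset (MvPolynomial σ F)) :
        Ideal (MvPolynomial σ F)).minimalPrimes := by
    refine ⟨⟨inferInstance, ?_⟩, ?_⟩
    · rw [Ideal.span_le]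
      intro f hf
      simp only [Finset.coe_image, Finset.coe_univ, Set.image_univ, Set.mem_range] at hf
      obtain ⟨j, rfl⟩ := hf
      simp [RingHom.mem_ker]
    · rintro Q ⟨hQ, hQ'⟩ -
      exact ker_eval_le fun j => hQ' (Ideal.subset_span (by simp))
  refine (Ideal.height_le_card_of_mem_minimalPrimes_span_finset h1).trans ?_
  exact_mod_cast Finset.card_image_le

theorem le_height_ker_eval {F : Type*} [Field F] {σ : Type*} [Fintype σ] (ζ : σ → F) :
    (Fintype.card σ : ℕ∞) ≤ (RingHom.ker (eval ζ)).height := by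
  classical
  -- the primes of the coordinate subspaces through `ζ` form a chain
  let ev : Finset σ → MvPolynomial σ F →+* MvPolynomial σ F := fun t =>
    eval₂Hom C fun j => if j ∈ t then C (ζ j) else X j
  have hev : ∀ t : Finset σ, (t.card : ℕ∞) ≤ (RingHom.ker (ev t)).height := by
    intro t
    induction t using Finset.induction_on with
    | empty => simp
    | insert i t hi ih =>
      haveI : (RingHom.ker (ev t)).IsPrime := RingHom.ker_isPrime _
      haveI : (RingHom.ker (ev (insert i t))).IsPrime := RingHom.ker_isPrime _
      rw [Finset.card_insert_of_notMem hi]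
      push_cast
      refine (add_le_add_left ih 1).trans (Ideal.height_add_one_le_of_lt_of_isPrime ?_)
      have hcomp : (ev (insert i t)).comp (ev t) = ev (insert i t) := by
        refine MvPolynomial.ringHom_ext (fun c => ?_) fun j => ?_
        · simp [ev]
        · by_cases hj : j ∈ t <;> simp [ev, hj]
      refine lt_of_le_of_ne (fun f hf => ?_) fun heq => ?_
      · rw [RingHom.mem_ker] at hf ⊢
        rw [← hcomp, RingHom.comp_apply, hf, map_zero]
      · have h1 : X i - C (ζ i) ∈ RingHom.ker (ev (insert i t)) := by
          simp [RingHom.mem_ker, ev]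
        rw [← heq, RingHom.mem_ker] at h1
        simp only [ev, map_sub, coe_eval₂Hom, eval₂_X, eval₂_C, hi, if_false] at h1
        have h2 := congrArg (eval fun _ => ζ i + 1) h1
        simp at h2
  refine (hev Finset.univ).trans (Ideal.height_mono ?_)
  intro f hf
  rw [RingHom.mem_ker] at hf ⊢
  have h1 : (eval ζ).comp (ev Finset.univ) = eval ζ := by
    refine MvPolynomial.ringHom_ext (fun c => ?_) fun j => ?_ <;> simp [ev]
  rw [← h1, RingHom.comp_apply, hf, map_zero]

/-- Over an infinite field one finds `i` linear combinations of the `G b` which cut out a set of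
codimension at least `i` away from the zero set of `G`. -/
theorem exists_combinations {F κ σ : Type*} [Field F] [Infinite F] [Finite σ]
    (G : κ → MvPolynomial σ F) (i : ℕ) :
    ∃ f : Fin i → MvPolynomial σ F, (∀ a, f a ∈ Submodule.span F (Set.range G)) ∧
      ∀ P : Ideal (MvPolynomial σ F), P.IsPrime → (∀ a, f a ∈ P) → ¬ (∀ b, G b ∈ P) →
        (i : ℕ∞) ≤ P.height := by
  classical
  induction i with
  | zero => exact ⟨Fin.elim0, fun a => a.elim0, fun P _ _ _ => by simp⟩
  | succ i ih =>
    obtain ⟨f, hf, hP⟩ := ih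
    let V := Submodule.span F (Set.range G)
    have hfin : (Ideal.span (Set.range f)).minimalPrimes.Finite :=
      Ideal.finite_minimalPrimes_of_isNoetherianRing _ _
    let T : Finset (Submodule F V) := (hfin.toFinset.filter fun P => ¬ ∀ b, G b ∈ P).image
      fun P => (P.restrictScalars F).comap V.subtype
    have hT : ⊤ ∉ T := by
      intro h
      obtain ⟨P, hP, hPT⟩ := Finset.mem_image.1 h
      refine (Finset.mem_filter.1 hP).2 fun b => ?_
      have : (⟨G b, Submodule.subset_span ⟨b, rfl⟩⟩ : V) ∈ (P.restrictScalars F).comap V.subtype := by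
        rw [hPT]
        trivial
      exact this
    obtain ⟨v, hv⟩ := (Set.ne_univ_iff_exists_notMem _).1 (Subspace.biUnion_ne_univ_of_top_notMem hT)
    refine ⟨Fin.cons v f, fun a => ?_, fun Q hQ hfQ hGQ => ?_⟩
    · refine Fin.cases ?_ (fun a => ?_) a
      · exact v.2
      · exact hf a
    · have hle : Ideal.span (Set.range f) ≤ Q := by
        rw [Ideal.span_le]
        rintro _ ⟨a, rfl⟩
        exact hfQ a.succ
      obtain ⟨P, hPmin, hPQ⟩ := Ideal.exists_minimalPrimes_le hle
      haveI := hPmin.1.1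
      have hGP : ¬ ∀ b, G b ∈ P := fun h => hGQ fun b => hPQ (h b)
      have h1 := hP P inferInstance (fun a => hPmin.1.2 (Ideal.subset_span ⟨a, rfl⟩)) hGP
      have hvP : (v : MvPolynomial σ F) ∉ P := by
        intro h
        refine hv (Set.mem_iUnion₂.2 ⟨_, Finset.mem_image.2 ⟨P, Finset.mem_filter.2
          ⟨hfin.mem_toFinset.2 hPmin, hGP⟩, rfl⟩, h⟩)
      push_cast
      refine (add_le_add_left h1 1).trans (Ideal.height_add_one_le_of_lt_of_isPrime ?_)
      exact lt_of_le_of_ne hPQ fun h => hvP (h ▸ hfQ 0)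

/-- A system may be replaced by `n` linear combinations of its equations, which retain its isolated
zeros: each of these is an irreducible component of the zero set of the combinations. -/
theorem exists_square_system {F κ : Type*} [Field F] [Infinite F] {n : ℕ}
    (G : κ → MvPolynomial (Fin n) F) :
    ∃ f : Fin n → MvPolynomial (Fin n) F, (∀ a, f a ∈ Submodule.span F (Set.range G)) ∧
      ∀ ζ : Fin n → F, (∀ b, eval ζ (G b) = 0) → AlgIsolated (Ideal.span (Set.range G)) ζ →
        ∀ P : Ideal (MvPolynomial (Fin n) F), P.IsPrime → (∀ a, f a ∈ P) →
          (∀ g ∈ P, eval ζ g = 0) → ∀ j, X j - C (ζ j) ∈ P := by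
  obtain ⟨f, hf, hP⟩ := exists_combinations G n
  refine ⟨f, hf, fun ζ hζ hiso P hPp hfP hPζ => ?_⟩
  by_cases hG : ∀ b, G b ∈ P
  · refine hiso.mem_of_isPrime ?_ hPζ
    rw [Ideal.span_le]
    rintro _ ⟨b, rfl⟩
    exact hG b
  · exfalso
    have h1 := hP P hPp hfP hG
    haveI : (RingHom.ker (eval ζ)).IsPrime := RingHom.ker_isPrime _
    have hlt : P < RingHom.ker (eval ζ) := by
      refine lt_of_le_of_ne (fun g hg => RingHom.mem_ker.2 (hPζ g hg)) fun h => hG fun b => ?_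
      rw [h]
      exact hζ b
    have h2 := Ideal.height_add_one_le_of_lt_of_isPrime hlt
    have h3 := ((add_le_add_left h1 1).trans h2).trans (height_ker_eval_le ζ)
    rw [Fintype.card_fin] at h3
    have h4 : n + 1 ≤ n := by exact_mod_cast h3
    omega

end AlgebraicIsolation

/-! ### Perturbation of square systems -/

section Perturbation

/-- The system `f_i + s x_i^N = 0` with `s ≠ 0` and `deg f_i < N` has finitely many solutions:
polynomial functions on its zero set are spanned by monomials of bounded degree. -/
theorem finite_zeros_perturbed {F : Type*} [Field F] {n : ℕ} (f : Fin n → MvPolynomial (Fin n) F)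
    (s : F) (hs : s ≠ 0) (N : ℕ) (hN : ∀ i, (f i).totalDegree < N) :
    {x : Fin n → F | ∀ i, eval x (f i + C s * X i ^ N) = 0}.Finite := by
  classical
  set Z := {x : Fin n → F | ∀ i, eval x (f i + C s * X i ^ N) = 0} with hZ
  let ev : MvPolynomial (Fin n) F →ₐ[F] (Z → F) := aeval fun j x => x.1 j
  have hev : ∀ p x, ev p x = eval x.1 p := by
    intro p x
    have : ((Pi.evalAlgHom F (fun _ : Z => F) x).comp ev) = aeval x.1 := by
      ext j
      simp [ev]
    have := congrArg (fun φ => φ p) this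
    simpa [MvPolynomial.aeval_eq_eval] using this
  let A : Set (Fin n →₀ ℕ) := {a | a.degree ≤ n * N}
  have hA : A.Finite := Finsupp.finite_of_degree_le (n * N)
  let W : Submodule F (Z → F) := Submodule.span F ((fun a => ev (monomial a 1)) '' A)
  have hW : ∀ a : Fin n →₀ ℕ, ev (monomial a 1) ∈ W := by
    intro a
    induction hD : a.degree using Nat.strong_induction_on generalizing a with
    | _ D ih =>
      by_cases ha : a.degree ≤ n * N
      · exact Submodule.subset_span ⟨a, ha, rfl⟩
      obtain ⟨i, hi⟩ : ∃ i, N ≤ a i := by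
        by_contra! hcon
        refine ha ?_
        rw [Finsupp.degree_eq_sum]
        refine (Finset.sum_le_sum fun i _ => (hcon i).le).trans ?_
        simp
      obtain ⟨b, rfl⟩ : ∃ b, a = b + Finsupp.single i N :=
        ⟨a - Finsupp.single i N, (tsub_add_cancel_of_le (Finsupp.single_le_iff.2 hi)).symm⟩
      have h1 : ev (monomial (b + Finsupp.single i N) 1) =
          ∑ e ∈ (f i).support, (-s⁻¹ * coeff e (f i)) • ev (monomial (b + e) 1) := by
        funext x
        have h2 := x.2 i
        rw [Finset.sum_apply]
        simp only [Pi.smul_apply, hev, smul_eq_mul]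
        have h3 : x.1 i ^ N = -s⁻¹ * eval x.1 (f i) := by
          simp only [map_add, map_mul, eval_C, map_pow, eval_X] at h2
          field_simp
          linear_combination h2
        have h4 : ∀ e : Fin n →₀ ℕ, eval x.1 (monomial (b + e) 1) =
            eval x.1 (monomial b 1) * eval x.1 (monomial e 1) := by
          intro e
          rw [← map_mul, monomial_mul, one_mul]
        rw [h4, show eval x.1 (monomial (Finsupp.single i N) (1 : F)) = x.1 i ^ N by
          simp [eval_monomial], h3]
        conv_lhs => rw [(f i).as_sum]
        rw [map_sum, Finset.mul_sum, Finset.mul_sum]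
        refine Finset.sum_congr rfl fun e _ => ?_
        rw [h4]
        have h5 : eval x.1 (monomial e (coeff e (f i))) =
            coeff e (f i) * eval x.1 (monomial e 1) := by
          simp [eval_monomial]
        rw [h5]
        ring
      rw [h1]
      refine Submodule.sum_mem _ fun e he => Submodule.smul_mem _ _ ?_
      refine ih _ ?_ (b + e) rfl
      have h6 := (MvPolynomial.le_totalDegree he).trans_lt (hN i)
      rw [← hD, map_add, map_add, Finsupp.degree_single]
      have h7 : e.degree = e.sum fun _ m => m := rfl
      omega
  have hrange : Subalgebra.toSubmodule ev.range ≤ W := by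
    rintro _ ⟨p, rfl⟩
    change ev p ∈ W
    rw [p.as_sum, map_sum]
    refine Submodule.sum_mem _ fun a _ => ?_
    have : monomial a (coeff a p) = coeff a p • monomial a (1 : F) := by
      rw [smul_monomial, smul_eq_mul, mul_one]
    rw [this, map_smul]
    exact Submodule.smul_mem _ _ (hW a)
  haveI : FiniteDimensional F W := FiniteDimensional.span_of_finite F (hA.image _)
  haveI : FiniteDimensional F ev.range := by
    exact Submodule.finiteDimensional_of_le hrange
  have hp : ∀ j, ∃ p : Polynomial F, p ≠ 0 ∧ ∀ x ∈ Z, p.eval (x j) = 0 := by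
    intro j
    have hinteg : IsIntegral F (⟨ev (X j), X j, rfl⟩ : ev.range) := IsIntegral.of_finite F _
    obtain ⟨p, hpm, hp0⟩ := hinteg.map ev.range.val
    refine ⟨p, hpm.ne_zero, fun x hx => ?_⟩
    have h1 := congrFun hp0 ⟨x, hx⟩
    rw [← Polynomial.aeval_def] at h1
    have h2 : Polynomial.aeval (ev (X j)) p ⟨x, hx⟩ =
        Polynomial.aeval (ev (X j) ⟨x, hx⟩) p :=
      (Polynomial.aeval_algHom_apply (Pi.evalAlgHom F (fun _ : Z => F) ⟨x, hx⟩) (ev (X j)) p).symm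
    have h3 := h2.symm.trans h1
    rw [hev] at h3
    simpa [Polynomial.aeval_def, Polynomial.eval₂_eq_eval_map] using h3
  choose p hp0 hp using hp
  refine (Set.Finite.pi' fun j => (p j).roots.toFinset.finite_toSet).subset fun x hx j => ?_
  simpa using ⟨hp0 j, hp j x hx⟩

/-- Isolated zeros of a square system deform to zeros of the perturbed systems `f_i + s x_i^N`, for
a common parameter `s ≠ 0`. -/
theorem exists_perturbation {F : Type*} [NontriviallyNormedField F] [IsAlgClosed F] {n : ℕ}
    {T : Type*} [Fintype T] (f : Fin n → MvPolynomial (Fin n) F) (ζ : T → Fin n → F)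
    (hf : ∀ t i, eval (ζ t) (f i) = 0)
    (hmin : ∀ t, ∀ P : Ideal (MvPolynomial (Fin n) F), P.IsPrime → (∀ a, f a ∈ P) →
          (∀ g ∈ P, eval (ζ t) g = 0) → ∀ j, X j - C (ζ t j) ∈ P)
    (N : ℕ) (Q : (T → Fin n → F) → Prop) (hQ : ∀ᶠ q in 𝓝 ζ, Q q) :
    ∃ s : F, s ≠ 0 ∧ ∃ q : T → Fin n → F, Q q ∧ ∀ t i, eval (q t) (f i + C s * X i ^ N) = 0 := by
  classical
  -- all points of `T` are deformed simultaneously, together with the parameter `s`: the variables are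
  -- `s` and the coordinates of the points, one more than the equations, so that the component through
  -- `ζ` has positive dimension and is not contained in `s = 0`
  let σ := Option (T × Fin n)
  let p₀ : σ → F := fun o => o.elim 0 fun a => ζ a.1 a.2
  let ρ : T → MvPolynomial (Fin n) F →+* MvPolynomial σ F := fun t =>
    (rename fun i => (some (t, i) : σ)).toRingHom
  have hρ : ∀ (x : σ → F) t g, eval x (ρ t g) = eval (fun i => x (some (t, i))) g := fun x t g =>
    eval_rename _ _ _
  let Φ : T × Fin n → MvPolynomial σ F := fun a =>
    ρ a.1 (f a.2) + X none * X (some (a.1, a.2)) ^ N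
  have hΦ : ∀ x a, eval x (Φ a) =
      eval (fun i => x (some (a.1, i))) (f a.2 + C (x none) * X a.2 ^ N) := by
    intro x a
    simp [Φ, hρ]
  let J : Ideal (MvPolynomial σ F) := Ideal.span (Finset.univ.image Φ : Finset (MvPolynomial σ F))
  haveI hker : (RingHom.ker (eval p₀)).IsPrime := RingHom.ker_isPrime _
  have hJ : J ≤ RingHom.ker (eval p₀) := by
    rw [Ideal.span_le]
    intro g hg
    simp only [Finset.coe_image, Finset.coe_univ, Set.image_univ, Set.mem_range] at hg
    obtain ⟨a, rfl⟩ := hg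
    rw [SetLike.mem_coe, RingHom.mem_ker, hΦ]
    simpa [p₀] using hf a.1 a.2
  obtain ⟨P, hPmin, hPle⟩ := Ideal.exists_minimalPrimes_le hJ
  haveI := hPmin.1.1
  have hΦP : ∀ a, Φ a ∈ P := fun a => hPmin.1.2 (Ideal.subset_span (by simp))
  have hPp₀ : ∀ g ∈ P, eval p₀ g = 0 := fun g hg => hPle hg
  have hs : (X none : MvPolynomial σ F) ∉ P := by
    intro hs
    have h1 : ∀ o, X o - C (p₀ o) ∈ P := by
      rintro (_ | ⟨t, j⟩)
      · simpa [p₀] using hs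
      · haveI : (P.comap (ρ t)).IsPrime := Ideal.IsPrime.comap _
        have := hmin t (P.comap (ρ t)) inferInstance (fun i => ?_) (fun g hg => ?_) j
        · rw [Ideal.mem_comap] at this
          simpa [ρ, p₀] using this
        · rw [Ideal.mem_comap]
          have := P.sub_mem (hΦP (t, i)) (P.mul_mem_right (X (some (t, i)) ^ N) hs)
          simpa [Φ] using this
        · have := hPp₀ _ (Ideal.mem_comap.1 hg)
          rw [hρ] at this
          exact this
    have h2 := (le_height_ker_eval p₀).trans (Ideal.height_mono (ker_eval_le h1))
    have h3 := h2.trans (Ideal.height_le_card_of_mem_minimalPrimes_span_finset hPmin)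
    have h4 : Fintype.card σ ≤ (Finset.univ.image Φ).card := by exact_mod_cast h3
    have h5 := h4.trans Finset.card_image_le
    simp only [σ, Fintype.card_option, Finset.card_univ] at h5
    omega
  have hfreq := frequently_mem_of_isPrime P p₀ hPp₀ _ hs
  have hcont : Tendsto (fun (x : σ → F) t i => x (some (t, i))) (𝓝 p₀) (𝓝 ζ) := by
    have h1 : Continuous fun (x : σ → F) (t : T) (i : Fin n) => x (some (t, i)) := by fun_prop
    exact h1.tendsto p₀
  obtain ⟨x, ⟨hx, hx0⟩, hxQ⟩ := (hfreq.and_eventually (hcont.eventually hQ)).exists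
  refine ⟨x none, by simpa using hx0, _, hxQ, fun t i => ?_⟩
  rw [← hΦ x (t, i)]
  exact hx _ (hΦP _)

end Perturbation

/-! ### Isolated zeros in a coset -/

section IsolatedInCoset

theorem eval_sum_monomial {F : Type*} [Field F] {n : ℕ} {L : Type*} [Fintype L]
    (α : L → Fin n →₀ ℕ) (c : L → F) (x : Fin n → F) :
    eval x (∑ l, monomial (α l) (c l)) = ∑ l, c l * ∏ j, x j ^ α l j := by
  rw [map_sum]
  refine Finset.sum_congr rfl fun l _ => ?_
  rw [eval_monomial, Finsupp.prod_fintype _ _ (by simp)]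

/-- The isolated zeros of a system with exponent vectors `α l`, `l : L`, in one coset
`τ(w) ε (1 + 2 O)` are bounded in number, however many equations the system has. They persist in a
generic square subsystem after a perturbation by pure powers, which has finitely many zeros. -/
theorem exists_coset_bound_isolated {Ω : Type*} [NontriviallyNormedField Ω] [IsUltrametricDist Ω]
    [CompleteSpace Ω] [IsAlgClosed Ω] (φ₀ : ℤ_[2] →+* Ω) (hφ₀ : ∀ x, ‖φ₀ x‖ ≤ 1)
    (h2 : ‖(2 : Ω)‖ < 1) (h20 : (2 : Ω) ≠ 0) (n : ℕ) (L : Type) [Fintype L] [Nonempty L] :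
    ∃ N : ℕ, ∀ (κ : Type) (α : L → Fin n →₀ ℕ) (c : κ → L → Ω) (τ : ℚ → Ω) (ε : Fin n → Ω),
      IsScale τ → (∀ j, ε j ≠ 0) → ∀ S : Finset (Fin n → Ω),
      (∀ x ∈ S, (∀ b, eval x (∑ l, monomial (α l) (c b l)) = 0) ∧
        AlgIsolated (Ideal.span (Set.range fun b => ∑ l, monomial (α l) (c b l))) x ∧
        ∃ (w : Fin n → ℚ) (z : Fin n → Ω), (∀ j, ‖z j‖ ≤ 1) ∧
          ∀ j, x j = τ (w j) * ε j * (1 + 2 * z j)) → S.card ≤ N := by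
  classical
  obtain ⟨N, hN⟩ := exists_coset_bound φ₀ hφ₀ h2 h20 n n (L ⊕ Fin n)
  refine ⟨N, fun κ α c τ ε hτ hε S hS => ?_⟩
  obtain ⟨f, hf, hfP⟩ := exists_square_system (F := Ω) fun b => ∑ l, monomial (α l) (c b l)
  let Λ : (L → Ω) →ₗ[Ω] MvPolynomial (Fin n) Ω := ∑ l, (monomial (α l)).comp (LinearMap.proj l)
  have hΛ : ∀ v, Λ v = ∑ l, monomial (α l) (v l) := fun v => by simp [Λ]
  have hf' : ∀ a, ∃ v : L → Ω, f a = ∑ l, monomial (α l) (v l) := by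
    intro a
    have h1 : Submodule.span Ω (Set.range fun b => ∑ l, monomial (α l) (c b l)) ≤
        LinearMap.range Λ := by
      rw [Submodule.span_le]
      rintro _ ⟨b, rfl⟩
      exact ⟨c b, hΛ _⟩
    obtain ⟨v, hv⟩ := h1 (hf a)
    exact ⟨v, by rw [← hv, hΛ]⟩
  choose v hv using hf'
  have hfz : ∀ x, (∀ b, eval x (∑ l, monomial (α l) (c b l)) = 0) → ∀ a, eval x (f a) = 0 := by
    intro x hx a
    refine Submodule.span_induction (p := fun g _ => eval x g = 0) ?_ (by simp) ?_ ?_ (hf a)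
    · rintro _ ⟨b, rfl⟩
      exact hx b
    · intro g h _ _ hg hh
      simp [hg, hh]
    · intro r g _ hg
      simp [smul_eval, hg]
  choose w z hz hx using fun x hx => (hS x hx).2.2
  let M := (Finset.univ.sup fun i => (f i).totalDegree) + 1
  have hM : ∀ i, (f i).totalDegree < M := fun i =>
    Nat.lt_succ_of_le (Finset.le_sup (f := fun i => (f i).totalDegree) (Finset.mem_univ i))
  -- a perturbation smaller than `r` stays within the coset
  let r : S → Fin n → Ω := fun t j => 2 * (τ (w t t.2 j) * ε j)
  have hr : ∀ t j, r t j ≠ 0 := fun t j =>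
    mul_ne_zero h20 (mul_ne_zero (hτ.ne_zero _) (hε j))
  have hQ : ∀ᶠ q in 𝓝 (fun t : S => t.1), (∀ t t', t ≠ t' → q t ≠ q t') ∧
      ∀ t j, ‖q t j - t.1 j‖ < ‖r t j‖ := by
    refine Filter.Eventually.and ?_ ?_
    · simp only [eventually_all]
      intro t t' htt
      have h1 : (fun t : S => t.1) t ≠ (fun t : S => t.1) t' := fun h => htt (Subtype.ext h)
      exact (isOpen_ne_fun (continuous_apply t) (continuous_apply t')).mem_nhds h1
    · simp only [eventually_all]
      intro t j
      have h1 : Continuous fun q : S → Fin n → Ω => ‖q t j - t.1 j‖ := by fun_prop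
      refine (h1.tendsto _).eventually (gt_mem_nhds ?_)
      simpa using hr t j
  obtain ⟨s, hs, q, ⟨hqne, hqr⟩, hq0⟩ := exists_perturbation f (fun t : S => t.1)
    (fun t => hfz _ (hS _ t.2).1) (fun t => hfP _ (hS _ t.2).1 (hS _ t.2).2.1) M _ hQ
  let α' : L ⊕ Fin n → Fin n →₀ ℕ := Sum.elim α fun i => Finsupp.single i M
  let c' : Fin n → L ⊕ Fin n → Ω := fun a => Sum.elim (v a) fun i => if i = a then s else 0
  have hsys : ∀ a x, ∑ l, c' a l * ∏ j, x j ^ α' l j = eval x (f a + C s * X a ^ M) := by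
    intro a x
    rw [← eval_sum_monomial]
    congr 1
    rw [Fintype.sum_sum_type]
    simp only [c', α', Sum.elim_inl, Sum.elim_inr, ← hv]
    congr 1
    rw [Finset.sum_eq_single a (by intro b _ hb; simp [hb]) (by simp), if_pos rfl,
      C_mul_X_pow_eq_monomial]
  have hfin := finite_zeros_perturbed f s hs M hM
  have h1 := hN (fun l => α' l) c' τ ε hτ hε (by simpa only [hsys] using hfin)
  refine le_trans ?_ h1
  have hinj : Function.Injective q := fun t t' h => by
    by_contra hne
    exact hqne t t' hne h
  rw [← Fintype.card_coe S, ← Nat.card_eq_fintype_card, ← Set.ncard_univ,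
    ← Set.ncard_image_of_injective _ hinj]
  refine Set.ncard_le_ncard ?_ (hfin.subset ?_)
  · rintro _ ⟨t, -, rfl⟩
    refine ⟨fun i => by rw [hsys]; exact hq0 t i, w t t.2,
      fun j => z t t.2 j + (q t j - t.1 j) / r t j, fun j => ?_, fun j => ?_⟩
    · refine (IsUltrametricDist.norm_add_le_max _ _).trans (max_le (hz _ _ j) ?_)
      rw [norm_div]
      exact div_le_one_of_le₀ (hqr t j).le (norm_nonneg _)
    · change q t j = τ (w t t.2 j) * ε j * (1 + 2 * (z t t.2 j + (q t j - t.1 j) / r t j))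
      have h3 := hx t t.2 j
      have h4 : r t j * ((q t j - t.1 j) / r t j) = q t j - t.1 j := mul_div_cancel₀ _ (hr t j)
      have h5 : r t j = 2 * (τ (w t t.2 j) * ε j) := rfl
      generalize (q t j - t.1 j) / r t j = y at h4 ⊢
      rw [h5] at h4
      linear_combination -h4 + h3
  · rintro x ⟨hx, -⟩
    simp only [hsys] at hx
    exact hx

end IsolatedInCoset

/-! ### Zero coordinates -/

section ZeroCoordinates

/-- Isolated zeros with all coordinates in `{0} ∪ ⋃ e ∈ E, τ(ℚ) e (1 + 2 O)`. The coordinates that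
vanish are set to zero in the equations and then moved to `1` by adding equations `x_i = 1`. -/
theorem exists_bound_isolated {Ω : Type*} [NontriviallyNormedField Ω] [IsUltrametricDist Ω]
    [CompleteSpace Ω] [IsAlgClosed Ω] (φ₀ : ℤ_[2] →+* Ω) (hφ₀ : ∀ x, ‖φ₀ x‖ ≤ 1)
    (h2 : ‖(2 : Ω)‖ < 1) (h20 : (2 : Ω) ≠ 0) (n : ℕ) (L : Type) [Fintype L] :
    ∃ N : ℕ, ∀ (κ : Type) (α : L → Fin n →₀ ℕ) (c : κ → L → Ω) (τ : ℚ → Ω) (E : Finset Ω),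
      IsScale τ → (∀ e ∈ E, e ≠ 0) → ∀ S : Finset (Fin n → Ω),
      (∀ x ∈ S, (∀ b, eval x (∑ l, monomial (α l) (c b l)) = 0) ∧
        AlgIsolated (Ideal.span (Set.range fun b => ∑ l, monomial (α l) (c b l))) x ∧
        ∀ j, x j = 0 ∨ ∃ e ∈ E, ∃ (w : ℚ) (z : Ω), ‖z‖ ≤ 1 ∧ x j = τ w * e * (1 + 2 * z)) →
      S.card ≤ (E.card + 1) ^ n * N := by
  classical
  obtain ⟨N, hN⟩ := exists_coset_bound_isolated φ₀ hφ₀ h2 h20 n (L ⊕ Option (Fin n))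
  refine ⟨N, fun κ α c τ E hτ hE S hS => ?_⟩
  -- the type of a point: which coordinates vanish, and the cosets of the others
  let R : Option E → Ω → Prop := fun o y =>
    o.elim (y = 0) fun e => ∃ (w : ℚ) (z : Ω), ‖z‖ ≤ 1 ∧ y = τ w * e * (1 + 2 * z)
  have htype : ∀ x ∈ S, ∃ p : Fin n → Option E, ∀ j, R (p j) (x j) := by
    intro x hx
    have : ∀ j, ∃ o, R o (x j) := fun j => by
      rcases (hS x hx).2.2 j with h | ⟨e, he, h⟩
      · exact ⟨none, h⟩
      · exact ⟨some ⟨e, he⟩, h⟩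
    choose p hp using this
    exact ⟨p, hp⟩
  choose! p hp using htype
  have hcard : (Finset.univ : Finset (Fin n → Option E)).card = (E.card + 1) ^ n := by
    simp
  rw [← hcard, mul_comm]
  refine Finset.card_le_mul_card_image_of_maps_to (f := p) (fun x _ => Finset.mem_univ _) N ?_
  intro q _
  let I : Finset (Fin n) := Finset.univ.filter fun j => q j = none
  let shift : (Fin n → Ω) → Fin n → Ω := fun x j => if j ∈ I then 1 else x j
  let ε : Fin n → Ω := fun j => (q j).elim 1 fun e => e.1
  let α' : L ⊕ Option (Fin n) → Fin n →₀ ℕ :=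
    Sum.elim α fun o => o.elim 0 fun i => Finsupp.single i 1
  let c' : κ ⊕ Fin n → L ⊕ Option (Fin n) → Ω := Sum.elim
    (fun b => Sum.elim (fun l => if ∀ i ∈ I, α l i = 0 then c b l else 0) fun _ => 0)
    (fun i => Sum.elim (fun _ => 0) fun o => if i ∈ I then
      o.elim (-1) fun j => if j = i then 1 else 0 else 0)
  let θ : MvPolynomial (Fin n) Ω →ₐ[Ω] MvPolynomial (Fin n) Ω :=
    aeval fun j => if j ∈ I then 0 else X j
  have hc1 : ∀ b, ∑ l, monomial (α' l) (c' (Sum.inl b) l) =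
      θ (∑ l, monomial (α l) (c b l)) := by
    intro b
    rw [Fintype.sum_sum_type, map_sum]
    simp only [α', c', Sum.elim_inl, Sum.elim_inr, map_zero, Finset.sum_const_zero, add_zero]
    refine Finset.sum_congr rfl fun l _ => ?_
    rw [aeval_monomial, Finsupp.prod_fintype _ _ (by simp), MvPolynomial.algebraMap_eq]
    split_ifs with h
    · rw [monomial_eq, Finsupp.prod_fintype _ _ (by simp)]
      congr 1
      refine Finset.prod_congr rfl fun j _ => ?_
      split_ifs with hj
      · rw [h j hj, pow_zero, pow_zero]
      · rfl
    · push Not at h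
      obtain ⟨i, hi, hi0⟩ := h
      rw [Finset.prod_eq_zero (Finset.mem_univ i), mul_zero, map_zero]
      rw [if_pos hi, zero_pow hi0]
  have hc2 : ∀ i, ∑ l, monomial (α' l) (c' (Sum.inr i) l) =
      if i ∈ I then X i - 1 else 0 := by
    intro i
    rw [Fintype.sum_sum_type, Fintype.sum_option]
    split_ifs with h
    · simp only [α', c', Sum.elim_inl, Sum.elim_inr, map_zero, Finset.sum_const_zero, zero_add,
        if_pos h, Option.elim]
      rw [Finset.sum_eq_single i (by intro j _ hj; simp [hj]) (by simp), if_pos rfl, map_neg]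
      change -1 + X i = _
      ring
    · simp [c', h]
  have heval : ∀ x : Fin n → Ω, (∀ j ∈ I, x j = 0) → ∀ g, eval (shift x) (θ g) = eval x g := by
    intro x hx g
    have : ((aeval (shift x) : _ →ₐ[Ω] Ω).comp θ) = aeval x := by
      ext j
      by_cases hj : j ∈ I
      · simp [θ, hj, hx j hj]
      · simp [θ, hj, shift]
    have := congrArg (fun φ => φ g) this
    simpa [MvPolynomial.aeval_eq_eval] using this
  have hfib : ∀ x ∈ S.filter fun x => p x = q, x ∈ S ∧ ∀ j, R (q j) (x j) := by
    intro x hx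
    obtain ⟨h1, rfl⟩ := Finset.mem_filter.1 hx
    exact ⟨h1, hp x h1⟩
  have hzero : ∀ x ∈ S.filter fun x => p x = q, ∀ j ∈ I, x j = 0 := by
    intro x hx j hj
    have h1 := (hfib x hx).2 j
    rw [(Finset.mem_filter.1 hj).2] at h1
    exact h1
  have hinj : Set.InjOn shift (S.filter fun x => p x = q) := by
    intro x hx y hy hxy
    funext j
    by_cases hj : j ∈ I
    · rw [hzero x hx j hj, hzero y hy j hj]
    · simpa [shift, hj] using congrFun hxy j
  rw [← Finset.card_image_of_injOn hinj]
  refine hN (κ ⊕ Fin n) α' c' τ ε hτ (fun j => ?_) _ fun y hy => ?_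
  · rcases h : q j with _ | e
    · simp [ε, h]
    · simpa [ε, h] using hE e e.2
  obtain ⟨x, hx, rfl⟩ := Finset.mem_image.1 hy
  obtain ⟨hxS, hxR⟩ := hfib x hx
  obtain ⟨hx0, hxiso, -⟩ := hS x hxS
  refine ⟨?_, fun j => ?_, ?_⟩
  · rintro (b | i)
    · rw [hc1, heval x (hzero x hx), hx0]
    · rw [hc2]
      split_ifs with h
      · simp [shift, h]
      · simp
  · by_cases hj : j ∈ I
    · refine ⟨1, 1, by simp, Ideal.subset_span ⟨Sum.inr j, ?_⟩⟩
      simp only [hc2]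
      simp [hj, shift]
    · obtain ⟨g, k, hg, hgk⟩ := hxiso j
      refine ⟨θ g, k, by rwa [heval x (hzero x hx)], ?_⟩
      have h1 := Ideal.mem_map_of_mem θ.toRingHom hgk
      have h2 : θ.toRingHom (g * (X j - C (x j)) ^ k) =
          θ g * (X j - C (shift x j)) ^ k := by
        change θ (g * (X j - C (x j)) ^ k) = _
        rw [map_mul, map_pow, map_sub, ← MvPolynomial.algebraMap_eq, AlgHom.commutes]
        simp [θ, hj, shift]
      rw [← h2]
      refine (?_ : Ideal.map θ.toRingHom _ ≤ _) h1
      rw [Ideal.map_span, Ideal.span_le]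
      rintro _ ⟨_, ⟨b, rfl⟩, rfl⟩
      exact Ideal.subset_span ⟨Sum.inl b, hc1 b⟩
  · have : ∀ j, ∃ (w : ℚ) (z : Ω), ‖z‖ ≤ 1 ∧ shift x j = τ w * ε j * (1 + 2 * z) := by
      intro j
      rcases h : q j with _ | e
      · refine ⟨0, 0, by simp, ?_⟩
        simp [shift, I, h, ε, hτ.zero]
      · have h1 := hxR j
        rw [h] at h1
        simpa [shift, I, h, ε, R] using h1
    choose w z hz hw using this
    exact ⟨w, z, hz, hw⟩

end ZeroCoordinates

/-! ### Residues modulo two and rational powers -/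

section NumberField

/-- For a subring `O` of a number field of degree `d`, lifts of `𝔽₂`-independent elements of `O/2O`
are `ℚ`-independent, by descent on the `2`-adic valuation of the coefficients; hence
`|O/2O| ≤ 2^d`. -/
theorem card_quotient_two_le {K : Type*} [Field K] [Algebra ℚ K] [FiniteDimensional ℚ K]
    (O : Subring K) : Finite (O ⧸ Ideal.span {(2 : O)}) ∧
      Nat.card (O ⧸ Ideal.span {(2 : O)}) ≤ 2 ^ Module.finrank ℚ K := by
  classical
  haveI : CharZero K := algebraRat.charZero K
  set V := O ⧸ Ideal.span {(2 : O)} with hV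
  let π : O →+* V := Ideal.Quotient.mk _
  have h2V : ∀ x : V, 2 • x = 0 := by
    intro x
    obtain ⟨y, rfl⟩ := Ideal.Quotient.mk_surjective x
    rw [← map_nsmul, Ideal.Quotient.eq_zero_iff_mem, nsmul_eq_mul, mul_comm]
    exact Ideal.mul_mem_left _ _ (Ideal.subset_span (by simp))
  letI : Module (ZMod 2) V := AddCommGroup.zmodModule h2V
  have hrank : Module.rank (ZMod 2) V ≤ Module.finrank ℚ K := by
    refine rank_le fun s hs => ?_
    choose v hv using fun x : V => Ideal.Quotient.mk_surjective x
    -- an integral relation between the lifts has even coefficients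
    have heven : ∀ a : s → ℤ, ∑ i, a i • ((v i : O) : K) = 0 → ∀ i, (2 : ℤ) ∣ a i := by
      intro a ha
      have h1 : ∑ i, a i • v i = 0 := by
        apply Subtype.ext
        push_cast
        exact ha
      have h2 : ∑ i, (a i : ZMod 2) • (i : V) = 0 := by
        have h3 := congrArg π h1
        rw [map_sum, map_zero] at h3
        rw [← h3]
        refine Finset.sum_congr rfl fun i _ => ?_
        rw [map_zsmul, hv, Int.cast_smul_eq_zsmul]
      intro i
      exact (ZMod.intCast_zmod_eq_zero_iff_dvd _ 2).1 (Fintype.linearIndependent_iff.1 hs _ h2 i)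
    have hdesc : ∀ (k : ℕ) (a : s → ℤ), ∑ i, a i • ((v i : O) : K) = 0 →
        ∀ i, (2 : ℤ) ^ k ∣ a i := by
      intro k
      induction k with
      | zero => intro a _ i; simp
      | succ k ih =>
        intro a ha i
        choose b hb using heven a ha
        have h1 : ∑ i, b i • ((v i : O) : K) = 0 := by
          have h2 : (2 : ℤ) • ∑ i, b i • ((v i : O) : K) = 0 := by
            rw [Finset.smul_sum, ← ha]
            refine Finset.sum_congr rfl fun i _ => ?_
            rw [hb i, mul_smul]
          exact (smul_eq_zero.1 h2).resolve_left (by norm_num)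
        rw [hb i, pow_succ']
        exact mul_dvd_mul_left _ (ih b h1 i)
    have hZ : LinearIndependent ℤ fun i : s => ((v i : O) : K) := by
      rw [Fintype.linearIndependent_iff]
      intro a ha i
      by_contra hne
      have h1 := Int.natAbs_dvd_natAbs.2 (hdesc ((a i).natAbs) a ha i)
      have h2 := Nat.le_of_dvd (Int.natAbs_pos.2 hne) h1
      rw [Int.natAbs_pow] at h2
      exact absurd (Nat.lt_two_pow_self (n := (a i).natAbs)) (not_lt.2 h2)
    have hQ := (LinearIndependent.iff_fractionRing ℤ ℚ).1 hZ
    simpa using hQ.fintype_card_le_finrank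
  haveI : Module.Finite (ZMod 2) V :=
    Module.rank_lt_aleph0_iff.1 (hrank.trans_lt (Cardinal.natCast_lt_aleph0))
  refine ⟨Module.finite_of_finite (ZMod 2), ?_⟩
  rw [Module.natCard_eq_pow_finrank (K := ZMod 2), Nat.card_zmod]
  exact Nat.pow_le_pow_right (by norm_num) (Module.finrank_le_of_rank_le hrank)

/-- A compatible system of rational powers of `ϖ`, by divisibility of `Ωˣ`. -/
theorem exists_isScale {Ω : Type*} [NontriviallyNormedField Ω] [IsUltrametricDist Ω]
    [CompleteSpace Ω] [IsAlgClosed Ω] (ϖ : Ω) (h0 : ϖ ≠ 0) (h1 : ‖ϖ‖ < 1) :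
    ∃ τ : ℚ → Ω, IsScale τ ∧ ∀ w : ℤ, τ w = ϖ ^ w := by
  letI : RootableBy Ωˣ ℕ := rootableByOfPowLeftSurj _ _ fun {m} hm x => by
    obtain ⟨y, hy⟩ := IsAlgClosed.exists_pow_nat_eq (x : Ω) (Nat.pos_of_ne_zero hm)
    have hy0 : y ≠ 0 := by
      rintro rfl
      rw [zero_pow hm] at hy
      exact x.ne_zero hy.symm
    exact ⟨Units.mk0 y hy0, Units.ext (by simpa using hy)⟩
  letI : RootableBy Ωˣ ℤ := Group.rootableByIntOfRootableByNat Ωˣ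
  letI : DivisibleBy (Additive Ωˣ) ℤ :=
    { div := fun a k => Additive.ofMul (RootableBy.root a.toMul k)
      div_zero := fun a => congrArg Additive.ofMul (RootableBy.root_zero a.toMul)
      div_cancel := fun a hk => congrArg Additive.ofMul (RootableBy.root_cancel a.toMul hk) }
  obtain ⟨h, hh⟩ := (Module.Baer.of_divisible (Additive Ωˣ)).extension_property_addMonoidHom
    (Int.castAddHom ℚ) Int.cast_injective
    (zmultiplesHom (Additive Ωˣ) (Additive.ofMul (Units.mk0 ϖ h0)))
  have hinteg : ∀ w : ℤ, (((h w).toMul : Ωˣ) : Ω) = ϖ ^ w := by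
    intro w
    have h2 := congrArg (fun φ => φ w) hh
    have h3 : h w = w • Additive.ofMul (Units.mk0 ϖ h0) := by simpa using h2
    rw [h3, toMul_zsmul]
    simp
  refine ⟨fun w => (((h w).toMul : Ωˣ) : Ω), ⟨by simp, fun x y => by simp, fun x hx => ?_⟩, hinteg⟩
  have h2 : (((h x).toMul : Ωˣ) : Ω) ^ x.den = ϖ ^ x.num := by
    rw [← hinteg, ← Rat.den_mul_eq_num, ← nsmul_eq_mul, map_nsmul, toMul_nsmul]
    simp
  have h3 : ‖(((h x).toMul : Ωˣ) : Ω)‖ ^ x.den < 1 := by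
    rw [← norm_pow, h2, norm_zpow]
    exact zpow_lt_one₀ (norm_pos_iff.2 h0) h1 (Rat.num_pos.2 hx)
  exact (pow_lt_one_iff_of_nonneg (norm_nonneg _) x.den_nz).1 h3

end NumberField

/-! ### Cosets covering a number field -/

section Cosets

/-- The multiplicative group of a number field `K` of degree `d` inside `Ω` is covered by `2^d - 1`
cosets of `τ(ℚ) (1 + 2 O)`: the value group is generated by `‖ϖ‖ = ‖τ 1‖`, and units modulo
`1 + 2 O_K` are nonzero classes of `O_K / 2 O_K`. -/
theorem exists_cosets {Ω : Type*} [NontriviallyNormedField Ω] [IsUltrametricDist Ω]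
    [CompleteSpace Ω] [IsAlgClosed Ω] (h2 : ‖(2 : Ω)‖ < 1) (h20 : (2 : Ω) ≠ 0)
    {K : Type*} [Field K] [Algebra ℚ K] [FiniteDimensional ℚ K] (σ : K →+* Ω) :
    ∃ τ : ℚ → Ω, IsScale τ ∧ ∃ E : Finset Ω, (∀ e ∈ E, e ≠ 0) ∧
      E.card + 1 ≤ 2 ^ Module.finrank ℚ K ∧
      ∀ x : K, x ≠ 0 → ∃ e ∈ E, ∃ (w : ℚ) (z : Ω), ‖z‖ ≤ 1 ∧ σ x = τ w * e * (1 + 2 * z) := by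
  classical
  let O : Subring K :=
    { carrier := {x | ‖σ x‖ ≤ 1}
      mul_mem' := fun {x y} hx hy => by
        change ‖σ (x * y)‖ ≤ 1
        rw [map_mul, norm_mul]
        exact mul_le_one₀ hx (norm_nonneg _) hy
      one_mem' := by simp
      add_mem' := fun {x y} hx hy => by
        change ‖σ (x + y)‖ ≤ 1
        rw [map_add]
        exact (IsUltrametricDist.norm_add_le_max _ _).trans (max_le hx hy)
      zero_mem' := by simp
      neg_mem' := fun {x} hx => by
        change ‖σ (-x)‖ ≤ 1
        rw [map_neg, norm_neg]
        exact hx }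
  obtain ⟨hfin, hcard⟩ := card_quotient_two_le O
  set V := O ⧸ Ideal.span {(2 : O)} with hV
  let π : O →+* V := Ideal.Quotient.mk _
  have hcong : ∀ x y : O, π x = π y → ∃ z : O, σ x = σ y + 2 * σ z := by
    intro x y h
    obtain ⟨z, hz⟩ := Ideal.mem_span_singleton'.1 (Ideal.Quotient.eq.1 h)
    refine ⟨z, ?_⟩
    have h1 : (z : K) * 2 = x - y := congrArg Subtype.val hz
    have h2 : (x : K) = y + 2 * z := by linear_combination -h1
    rw [h2, map_add, map_mul, map_ofNat]
  have hsmall : ∀ z : O, ‖2 * σ z‖ ≤ ‖(2 : Ω)‖ := fun z => by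
    rw [norm_mul]
    exact mul_le_of_le_one_right (norm_nonneg _) z.2
  have hnorm : ∀ x y : O, π x = π y → ‖(2 : Ω)‖ < ‖σ y‖ → ‖σ x‖ = ‖σ y‖ := by
    intro x y h hy
    obtain ⟨z, hz⟩ := hcong x y h
    have h1 := (hsmall z).trans_lt hy
    rw [hz, IsUltrametricDist.norm_add_eq_max_of_norm_ne_norm h1.ne', max_eq_left h1.le]
  obtain ⟨v, hv⟩ : ∃ v : V → O, ∀ x, π (v x) = x :=
    ⟨_, fun x => (Ideal.Quotient.mk_surjective x).choose_spec⟩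
  -- an element of largest norm below `1`
  obtain ⟨ϖ, hϖ0, hϖ1, hϖ⟩ : ∃ ϖ : K, σ ϖ ≠ 0 ∧ ‖σ ϖ‖ < 1 ∧ ∀ x, ‖σ x‖ < 1 → ‖σ x‖ ≤ ‖σ ϖ‖ := by
    let B : Set ℝ := {r | ‖(2 : Ω)‖ ≤ r ∧ r < 1 ∧ ∃ x, ‖σ x‖ = r}
    have hB : B.Finite := by
      refine ((Set.finite_range fun y : V => ‖σ (v y)‖).insert ‖(2 : Ω)‖).subset ?_
      rintro _ ⟨hr2, hr1, x, rfl⟩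
      rcases hr2.eq_or_lt with h | h
      · exact Or.inl h.symm
      · exact Or.inr ⟨π ⟨x, hr1.le⟩, hnorm (v (π ⟨x, hr1.le⟩)) ⟨x, hr1.le⟩ (hv _) h⟩
    obtain ⟨r, ⟨hr2, hr1, ϖ, rfl⟩, hmax⟩ := Set.exists_max_image B id hB
      ⟨‖(2 : Ω)‖, le_rfl, h2, 2, by rw [map_ofNat]⟩
    refine ⟨ϖ, norm_pos_iff.1 ((norm_pos_iff.2 h20).trans_le hr2), hr1, fun x hx => ?_⟩
    rcases le_total ‖(2 : Ω)‖ ‖σ x‖ with h | h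
    · exact hmax _ ⟨h, hx, x, rfl⟩
    · exact h.trans hr2
  obtain ⟨τ, hτ, hτw⟩ := exists_isScale (σ ϖ) hϖ0 hϖ1
  haveI : Fintype V := Fintype.ofFinite V
  let U : V → Prop := fun y => ∃ u : O, π u = y ∧ ‖σ u‖ = 1
  let E : Finset Ω := (Finset.univ.filter U).image fun y => σ (v y)
  have hUnit : ∀ u : O, ‖σ u‖ = 1 → ‖σ (v (π u))‖ = 1 := by
    intro u hu
    rw [hnorm _ u (hv _) (by rwa [hu]), hu]
  refine ⟨τ, hτ, E, ?_, ?_, fun x hx => ?_⟩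
  · intro e he
    obtain ⟨y, hy, rfl⟩ := Finset.mem_image.1 he
    obtain ⟨u, rfl, hu⟩ := (Finset.mem_filter.1 hy).2
    rw [← norm_pos_iff, hUnit u hu]
    exact one_pos
  · refine le_trans ?_ hcard
    rw [Nat.card_eq_fintype_card, ← Finset.card_univ]
    refine (Nat.add_le_add_right Finset.card_image_le 1).trans ?_
    refine Finset.card_lt_card ⟨Finset.filter_subset _ _, fun h => ?_⟩
    -- the zero class contains no unit
    obtain ⟨u, hu0, hu⟩ := (Finset.mem_filter.1 (h (Finset.mem_univ 0))).2
    obtain ⟨z, hz⟩ := hcong u 0 (by rw [hu0, map_zero])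
    have h1 := hsmall z
    simp only [ZeroMemClass.coe_zero, map_zero, zero_add] at hz
    rw [← hz, hu] at h1
    exact absurd h2 (not_lt.2 h1)
  · have hσx : σ x ≠ 0 := (map_ne_zero σ).2 hx
    have hϖpos : 0 < ‖σ ϖ‖ := norm_pos_iff.2 hϖ0
    obtain ⟨m, hm1, hm2⟩ := exists_mem_Ioc_zpow (norm_pos_iff.2 hσx)
      ((one_lt_inv₀ hϖpos).2 hϖ1)
    let u : K := x * ϖ ^ (m + 1)
    have hϖK : ϖ ≠ 0 := (map_ne_zero σ).1 hϖ0
    have hu : ‖σ u‖ = 1 := by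
      have h3 : ‖σ u‖ = ‖σ x‖ * ‖σ ϖ‖ ^ (m + 1) := by
        simp [u]
      have hpos := zpow_pos hϖpos (m + 1)
      rw [inv_zpow] at hm1 hm2
      have h4 : ‖σ u‖ ≤ 1 := by
        rw [h3]
        calc _ ≤ (‖σ ϖ‖ ^ (m + 1))⁻¹ * ‖σ ϖ‖ ^ (m + 1) :=
              mul_le_mul_of_nonneg_right hm2 hpos.le
          _ = 1 := inv_mul_cancel₀ hpos.ne'
      refine h4.antisymm (not_lt.1 fun hlt => ?_)
      have h5 := hϖ u hlt
      rw [h3] at h5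
      refine absurd h5 (not_le.2 ?_)
      calc ‖σ ϖ‖ = (‖σ ϖ‖ ^ m)⁻¹ * ‖σ ϖ‖ ^ (m + 1) := by
            rw [zpow_add_one₀ hϖpos.ne', inv_mul_cancel_left₀ (zpow_pos hϖpos m).ne']
        _ < _ := mul_lt_mul_of_pos_right hm1 hpos
    let uO : O := ⟨u, hu.le⟩
    obtain ⟨z, hz⟩ := hcong uO (v (π uO)) (hv _).symm
    have hvu : ‖σ (v (π uO))‖ = 1 := hUnit uO hu
    have hv0 : σ (v (π uO)) ≠ 0 := norm_pos_iff.1 (by rw [hvu]; exact one_pos)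
    refine ⟨σ (v (π uO)), Finset.mem_image.2 ⟨π uO, Finset.mem_filter.2
      ⟨Finset.mem_univ _, uO, rfl, hu⟩, rfl⟩, ((-(m + 1) : ℤ) : ℚ), σ z / σ (v (π uO)), ?_, ?_⟩
    · rw [norm_div, hvu, div_one]
      exact z.2
    · rw [hτw]
      have h6 : σ x = σ ϖ ^ (-(m + 1)) * σ u := by
        simp only [u, map_mul, map_zpow₀, zpow_neg]
        field_simp
      rw [h6, show σ u = _ from hz]
      field_simp

end Cosets

/-! ### The bound over a number field -/

section Main

/-- The bound `exists_bound_isolated` over the `2`-adic complex numbers. -/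
theorem exists_bound_padicComplex (n m : ℕ) :
    ∃ N : ℕ, ∀ (κ : Type) (α : Fin m → Fin n →₀ ℕ) (c : κ → Fin m → ℂ_[2]) (τ : ℚ → ℂ_[2])
      (E : Finset ℂ_[2]), IsScale τ → (∀ e ∈ E, e ≠ 0) → ∀ S : Finset (Fin n → ℂ_[2]),
      (∀ x ∈ S, (∀ b, eval x (∑ l, monomial (α l) (c b l)) = 0) ∧
        AlgIsolated (Ideal.span (Set.range fun b => ∑ l, monomial (α l) (c b l))) x ∧
        ∀ j, x j = 0 ∨ ∃ e ∈ E, ∃ (w : ℚ) (z : ℂ_[2]), ‖z‖ ≤ 1 ∧ x j = τ w * e * (1 + 2 * z)) →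
      S.card ≤ (E.card + 1) ^ n * N := by
  refine exists_bound_isolated ((algebraMap ℚ_[2] ℂ_[2]).comp PadicInt.Coe.ringHom) ?_ ?_ ?_ n _
  · intro x
    change ‖algebraMap ℚ_[2] ℂ_[2] (x : ℚ_[2])‖ ≤ 1
    rw [norm_algebraMap']
    exact x.2
  · rw [← map_ofNat (algebraMap ℚ_[2] ℂ_[2]) 2, norm_algebraMap']
    have := Padic.norm_p_lt_one (p := 2)
    simpa using this
  · exact two_ne_zero

/-- Transfer to a number field `K ⊆ ℂ`: isolatedness over `ℂ` is made algebraic, descends to `K` and is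
carried over to `ℂ_[2]` by an embedding of `K`, under which the nonzero elements of `K` lie in few
cosets. -/
theorem card_isolated_le {n m N : ℕ}
    (hN : ∀ (κ : Type) (α : Fin m → Fin n →₀ ℕ) (c : κ → Fin m → ℂ_[2]) (τ : ℚ → ℂ_[2])
      (E : Finset ℂ_[2]), IsScale τ → (∀ e ∈ E, e ≠ 0) → ∀ S : Finset (Fin n → ℂ_[2]),
      (∀ x ∈ S, (∀ b, eval x (∑ l, monomial (α l) (c b l)) = 0) ∧
        AlgIsolated (Ideal.span (Set.range fun b => ∑ l, monomial (α l) (c b l))) x ∧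
        ∀ j, x j = 0 ∨ ∃ e ∈ E, ∃ (w : ℚ) (z : ℂ_[2]), ‖z‖ ≤ 1 ∧ x j = τ w * e * (1 + 2 * z)) →
      S.card ≤ (E.card + 1) ^ n * N)
    {K : Type} [Field K] [Algebra ℚ K] [FiniteDimensional ℚ K] (ι : K →+* ℂ) {k : ℕ}
    (G : Fin k → MvPolynomial (Fin n) K) (hG : IsSparseSystem G m) (S : Finset (Fin n → K))
    (hS : ∀ ζ ∈ S, IsIsolatedRoot (fun i => (G i).map ι) (fun j => ι (ζ j))) :
    S.card ≤ (2 ^ Module.finrank ℚ K) ^ n * N := by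
  classical
  let σ : K →+* ℂ_[2] := (IsAlgClosed.lift : K →ₐ[ℚ] ℂ_[2]).toRingHom
  have h2 : ‖(2 : ℂ_[2])‖ < 1 := by
    rw [← map_ofNat (algebraMap ℚ_[2] ℂ_[2]) 2, norm_algebraMap']
    have := Padic.norm_p_lt_one (p := 2)
    simpa using this
  obtain ⟨τ, hτ, E, hE0, hEcard, hE⟩ := exists_cosets h2 two_ne_zero σ
  refine le_trans ?_ (Nat.mul_le_mul_right N (Nat.pow_le_pow_left hEcard n))
  let A : Finset (Fin n →₀ ℕ) := Finset.univ.biUnion fun i => (G i).support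
  let e : Fin m ≃ A := (finCongr hG.2.symm).trans A.equivFin.symm
  have hrep : ∀ i, ∑ l, monomial (e l : Fin n →₀ ℕ) (σ (coeff (e l) (G i))) = (G i).map σ := by
    intro i
    rw [Equiv.sum_comp e fun a : A => monomial (a : Fin n →₀ ℕ) (σ (coeff a (G i))),
      Finset.sum_coe_sort A fun a => monomial a (σ (coeff a (G i)))]
    conv_rhs => rw [(G i).as_sum, map_sum]
    simp only [map_monomial]
    refine (Finset.sum_subset (Finset.subset_biUnion_of_mem (fun i => (G i).support)
      (Finset.mem_univ i)) fun a _ ha => ?_).symm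
    rw [notMem_support_iff.1 ha, map_zero, map_zero]
  have heval : ∀ {F : Type} [Field F] (φ : K →+* F) (ζ : Fin n → K) (g : MvPolynomial (Fin n) K),
      eval (fun j => φ (ζ j)) (MvPolynomial.map φ g) = φ (eval ζ g) := by
    intro F _ φ ζ g
    rw [eval_map, eval, coe_eval₂Hom, eval₂_comp_left]
    rfl
  have hinj : Function.Injective fun (ζ : Fin n → K) j => σ (ζ j) := fun x y h =>
    funext fun j => σ.injective (congrFun h j)
  rw [← Finset.card_image_of_injective S hinj]
  refine hN (Fin k) (fun l => e l) (fun i l => σ (coeff (e l) (G i))) τ E hτ hE0 _ fun x hx => ?_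
  obtain ⟨ζ, hζ, rfl⟩ := Finset.mem_image.1 hx
  have hiso := hS ζ hζ
  refine ⟨fun i => ?_, ?_, fun j => ?_⟩
  · have h3 : ι (eval ζ (G i)) = 0 := by
      rw [← heval]
      exact hiso.1 i
    rw [hrep, heval, (map_eq_zero ι).1 h3, map_zero]
  · simp only [hrep]
    have h3 := ((algIsolated_of_isIsolatedRoot _ _ hiso).descend ι).map σ
    rwa [Ideal.map_span, ← Set.range_comp] at h3
  · by_cases h0 : ζ j = 0
    · exact Or.inl (by simp [h0])
    · exact Or.inr (hE _ h0)

end Main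

/-- **Corollary 2 (global fewnomial bound).** There is an absolute constant `γ(n,m)` such that
any `k × n` `m`-sparse polynomial system over a degree-`d` algebraic extension `K` of `ℚ` has
at most `2^{dn}·(1 - 1/2^d)^n·γ(n,m)` isolated roots in `Kⁿ`.  Isolatedness of a root in `Kⁿ`
is expressed via (any) embedding `ι : K → ℂ` of `K` into the algebraically closed field `ℂ`:
the image of the root is an isolated point of the zero set of the system over `ℂ`. -/
theorem finiteness_arithmetic_fewnomials_global :
    ∃ γ : ℕ × ℕ → ℕ,
      ∀ (d : ℕ) (_ : 0 < d)
        (K : Type) (_ : Field K) (_ : Algebra ℚ K) (_ : FiniteDimensional ℚ K)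
        (_ : Module.finrank ℚ K = d)
        (ι : K →+* ℂ)
        (k n m : ℕ) (G : Fin k → MvPolynomial (Fin n) K), IsSparseSystem G m →
          {ζ : Fin n → K | IsIsolatedRoot (fun i => (G i).map ι)
              (fun j => ι (ζ j))}.Finite ∧
          ({ζ : Fin n → K | IsIsolatedRoot (fun i => (G i).map ι)
              (fun j => ι (ζ j))}.ncard : ℝ) ≤
            (2 : ℝ) ^ (d * n) * (1 - 1 / (2 : ℝ) ^ d) ^ n * γ (n, m) := by
  choose N hN using exists_bound_padicComplex
  -- the factor `2 ^ n` converts `(2 ^ d) ^ n`, which counts zero coordinates, into `(2 ^ d - 1) ^ n`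
  refine ⟨fun p => 2 ^ p.1 * N p.1 p.2, fun d hd K _ _ _ hdK ι k n m G hG => ?_⟩
  have hcard := card_isolated_le (hN n m) ι G hG
  set Z := {ζ : Fin n → K | IsIsolatedRoot (fun i => (G i).map ι) (fun j => ι (ζ j))} with hZ
  rw [hdK] at hcard
  have hfin : Z.Finite := by
    by_contra hinf
    obtain ⟨S, hSZ, hSc⟩ := Set.Infinite.exists_subset_card_eq hinf ((2 ^ d) ^ n * N n m + 1)
    have := hcard S fun ζ hζ => hSZ hζ
    omega
  refine ⟨hfin, ?_⟩
  have h1 : Z.ncard ≤ (2 ^ d) ^ n * N n m := by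
    rw [Set.ncard_eq_toFinset_card Z hfin]
    exact hcard _ fun ζ hζ => hfin.mem_toFinset.1 hζ
  have h2 : (Z.ncard : ℝ) ≤ (2 ^ d) ^ n * N n m := by exact_mod_cast h1
  refine h2.trans ?_
  have h3 : (1 : ℝ) ≤ (1 - 1 / (2 : ℝ) ^ d) * 2 := by
    have h4 : (2 : ℝ) ≤ 2 ^ d := by
      simpa using pow_le_pow_right₀ (one_le_two : (1 : ℝ) ≤ 2) hd
    have h5 : 1 / (2 : ℝ) ^ d ≤ 1 / 2 := one_div_le_one_div_of_le two_pos h4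
    linarith
  push_cast
  calc ((2 : ℝ) ^ d) ^ n * N n m = ((2 : ℝ) ^ d) ^ n * N n m * 1 := by ring
    _ ≤ ((2 : ℝ) ^ d) ^ n * N n m * ((1 - 1 / (2 : ℝ) ^ d) * 2) ^ n := by
        gcongr
        exact one_le_pow₀ h3
    _ = (2 : ℝ) ^ (d * n) * (1 - 1 / (2 : ℝ) ^ d) ^ n * (2 ^ n * N n m) := by
        rw [pow_mul, mul_pow]
        ring
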